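/- Let X be a non-empty subshift of edge-to-edge rhombus tilings (on a finite shapeset 𝒯) that is shape uniformly recurrent. Then the decision problem Domino(X) — given a finite 𝒯-tileset 𝐓, decide whether there exists a valid 𝐓-tiling x with π(x) ∈ X — is Π⁰₁-hard: every co-computably enumerable decision problem many-one reduces to Domino(X). In particular, Domino(X) is undecidable. -/

import Mathlib

open Set Metric

noncomputable section

/-- Points of the euclidean plane. -/
abbrev Pt : Type := EuclideanSpace ℝ (Fin 2)

/-- A rhombus tile in the plane, given by a position (a distinguished vertex)
and its two edge vectors. -/
structure Rhombus where
  pos : Pt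
  u : Pt
  v : Pt

namespace Rhombus

/-- A genuine rhombus: linearly independent edge vectors of equal euclidean length. -/
def IsValid (r : Rhombus) : Prop :=
  LinearIndependent ℝ ![r.u, r.v] ∧ ‖r.u‖ = ‖r.v‖

/-- The support of a rhombus: the closed parallelogram it spans. -/
def support (r : Rhombus) : Set Pt :=
  {x | ∃ s t : ℝ, s ∈ Icc (0 : ℝ) 1 ∧ t ∈ Icc (0 : ℝ) 1 ∧ x = r.pos + s • r.u + t • r.v}

/-- The four vertices of a rhombus. -/
def vertices (r : Rhombus) : Set Pt :=
  {r.pos, r.pos + r.u, r.pos + r.v, r.pos + r.u + r.v}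

/-- The four (closed) edges of a rhombus, indexed as in the paper:
edge `0` from `pos` to `pos + u`, edge `1` from `pos + u` to `pos + u + v`,
edge `2` from `pos + u + v` to `pos + v`, edge `3` from `pos + v` to `pos`. -/
def edge (r : Rhombus) : Fin 4 → Set Pt :=
  ![segment ℝ r.pos (r.pos + r.u),
    segment ℝ (r.pos + r.u) (r.pos + r.u + r.v),
    segment ℝ (r.pos + r.u + r.v) (r.pos + r.v),
    segment ℝ (r.pos + r.v) r.pos]

/-- The set of edges of a rhombus. -/
def edges (r : Rhombus) : Set (Set Pt) := Set.range r.edge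

/-- Translation of a rhombus by a vector. -/
def translate (r : Rhombus) (w : Pt) : Rhombus := ⟨r.pos + w, r.u, r.v⟩

/-- The center of a rhombus. -/
def center (r : Rhombus) : Pt := r.pos + (2⁻¹ : ℝ) • r.u + (2⁻¹ : ℝ) • r.v

/-- Two rhombi are translates of each other (same shape up to translation). -/
def SameShape (r s : Rhombus) : Prop := r.u = s.u ∧ r.v = s.v

/-- `w` is one of the two edge directions of `r` (up to sign). -/
def HasEdgeDir (r : Rhombus) (w : Pt) : Prop :=
  r.u = w ∨ r.u = -w ∨ r.v = w ∨ r.v = -w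

end Rhombus

/-- Two rhombi are in edge-to-edge position: they are disjoint, share exactly one
common vertex, or share exactly one full common edge. -/
def EdgeToEdgePair (r s : Rhombus) : Prop :=
  r.support ∩ s.support = ∅ ∨
  (∃ p, p ∈ r.vertices ∧ p ∈ s.vertices ∧ r.support ∩ s.support = {p}) ∨
  (∃ e, e ∈ r.edges ∧ e ∈ s.edges ∧ r.support ∩ s.support = e)

/-- An edge-to-edge rhombus tiling of the plane: a covering of the plane
without overlap where any two tiles are disjoint, share exactly one vertex or
share a full common edge. -/
def IsTiling (x : Set Rhombus) : Prop :=
  (∀ r ∈ x, r.IsValid) ∧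
  (⋃ r ∈ x, r.support) = univ ∧
  ∀ r ∈ x, ∀ s ∈ x, r ≠ s → EdgeToEdgePair r s

/-- Every tile of `x` is a translate of a shape of the shapeset `T`. -/
def UsesShapes (T : Set Rhombus) (x : Set Rhombus) : Prop :=
  ∀ r ∈ x, ∃ s ∈ T, r.SameShape s

/-- An edge-to-edge tiling whose tiles are translates of shapes of `T`. -/
def IsTilingOn (T : Set Rhombus) (x : Set Rhombus) : Prop :=
  IsTiling x ∧ UsesShapes T x

/-- Support of a patch. -/
def PatchSupport (P : Set Rhombus) : Set Pt := ⋃ r ∈ P, r.support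

/-- A patch: a finite nonempty edge-to-edge set of rhombi whose support is
simply connected (no holes). -/
def IsPatch (P : Set Rhombus) : Prop :=
  P.Finite ∧ P.Nonempty ∧ (∀ r ∈ P, r.IsValid) ∧
  (∀ r ∈ P, ∀ s ∈ P, r ≠ s → EdgeToEdgePair r s) ∧
  SimplyConnectedSpace (PatchSupport P)

/-- Translation of a set of rhombi. -/
def translatePatch (P : Set Rhombus) (w : Pt) : Set Rhombus :=
  (fun r => r.translate w) '' P

/-- The pattern `f` appears in `x`: some translate of `f` is a sub-collection of `x`. -/
def Appears (f : Set Rhombus) (x : Set Rhombus) : Prop :=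
  ∃ w : Pt, translatePatch f w ⊆ x

/-- Vertices of a patch. -/
def PatchVertices (P : Set Rhombus) : Set Pt := ⋃ r ∈ P, r.vertices

/-- The support of `P` contains a disk of radius `ρ` centered at a vertex of `P`. -/
def HasRadius (P : Set Rhombus) (ρ : ℝ) : Prop :=
  ∃ c ∈ PatchVertices P, closedBall c ρ ⊆ PatchSupport P

/-- `P` has minimal radius `ρ`: its support contains a disk of radius `ρ` centered
at one of its vertices, and removing any tile breaks this property. -/
def MinimalRadius (P : Set Rhombus) (ρ : ℝ) : Prop :=
  HasRadius P ρ ∧ ∀ r ∈ P, ¬ HasRadius (P \ {r}) ρ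

/-- A rhombus Wang tile: a rhombus with a colour (a natural number) on each edge. -/
structure ColoredRhombus where
  shape : Rhombus
  color : Fin 4 → ℕ

namespace ColoredRhombus

def translate (t : ColoredRhombus) (w : Pt) : ColoredRhombus :=
  ⟨t.shape.translate w, t.color⟩

/-- Two coloured tiles are equal up to translation. -/
def SameTile (t s : ColoredRhombus) : Prop :=
  t.shape.SameShape s.shape ∧ t.color = s.color

end ColoredRhombus

/-- The colour-erasing operator `π`. -/
def eraseColors (x : Set ColoredRhombus) : Set Rhombus := ColoredRhombus.shape '' x

def translateColoredPatch (P : Set ColoredRhombus) (w : Pt) : Set ColoredRhombus :=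
  (fun t => t.translate w) '' P

/-- Any two tiles sharing an edge carry the same colour on the shared edge. -/
def ColorMatching (x : Set ColoredRhombus) : Prop :=
  ∀ t ∈ x, ∀ s ∈ x, t.shape ≠ s.shape →
    ∀ i j : Fin 4, t.shape.edge i = s.shape.edge j → t.color i = s.color j

/-- No two distinct coloured tiles occupy the same rhombus. -/
def ShapeInjective (x : Set ColoredRhombus) : Prop :=
  ∀ t ∈ x, ∀ s ∈ x, t.shape = s.shape → t = s

/-- A valid tiling by rhombus Wang tiles. -/
def IsColoredTiling (x : Set ColoredRhombus) : Prop :=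
  IsTiling (eraseColors x) ∧ ShapeInjective x ∧ ColorMatching x

/-- A valid patch of rhombus Wang tiles. -/
def IsColoredPatch (x : Set ColoredRhombus) : Prop :=
  IsPatch (eraseColors x) ∧ ShapeInjective x ∧ ColorMatching x

/-- All tiles of `x` are translates of tiles of the tileset `T`. -/
def TilesFrom (T : Set ColoredRhombus) (x : Set ColoredRhombus) : Prop :=
  ∀ t ∈ x, ∃ s ∈ T, t.SameTile s

/-- A subshift on the shapeset `T`: a set of `T`-tilings that is invariant under
translation and closed for the tiling topology (a tiling all of whose finite
patterns appear in tilings of `X` belongs to `X`). -/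
def IsSubshift (T : Set Rhombus) (X : Set (Set Rhombus)) : Prop :=
  (∀ x ∈ X, IsTilingOn T x) ∧
  (∀ x ∈ X, ∀ w : Pt, translatePatch x w ∈ X) ∧
  (∀ x, IsTilingOn T x →
    (∀ P, P ⊆ x → P.Finite → P.Nonempty → ∃ y ∈ X, Appears P y) → x ∈ X)

/-- The shape `r` is uniformly recurrent in the tiling `x`: for some `R > 0`,
every disk of radius `R` contains an occurrence (a translate) of `r`. -/
def UniformlyRecurrentIn (r : Rhombus) (x : Set Rhombus) : Prop :=
  ∃ R : ℝ, 0 < R ∧ ∀ p : Pt, ∃ s ∈ x, s.SameShape r ∧ s.support ⊆ closedBall p R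

/-- A shape uniformly recurrent subshift: every shape appearing somewhere in `X`
is uniformly recurrent in every tiling of `X`. -/
def ShapeUniformlyRecurrent (X : Set (Set Rhombus)) : Prop :=
  ∀ r : Rhombus, (∃ y ∈ X, ∃ s ∈ y, s.SameShape r) →
    ∀ x ∈ X, UniformlyRecurrentIn r x

/-- The restriction of `X` to the tilings using only shapes of `T'`. -/
def restrictShapes (T' : Set Rhombus) (X : Set (Set Rhombus)) : Set (Set Rhombus) :=
  {x ∈ X | UsesShapes T' x}

/-- The subshift on `T` defined by the sequence `F` of forbidden patterns. -/
def SubshiftOfForbidden (T : Set Rhombus) (F : ℕ → Set Rhombus) : Set (Set Rhombus) :=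
  {x | IsTilingOn T x ∧ ∀ n : ℕ, ¬ Appears (F n) x}

/-- A chain of rhombuses of normal vector `w` in the tiling `x`: a bi-infinite
sequence of tiles in which any two consecutive tiles share a full common edge of
direction `w`, the chain crossing each of its tiles from one of its two
`w`-edges to the other one. -/
structure Chain (x : Set Rhombus) (w : Pt) where
  seq : ℤ → Rhombus
  mem : ∀ n : ℤ, seq n ∈ x
  shares : ∀ n : ℤ, ∃ a : Pt,
    segment ℝ a (a + w) ∈ (seq n).edges ∧
    segment ℝ a (a + w) ∈ (seq (n + 1)).edges ∧
    (seq n).support ∩ (seq (n + 1)).support = segment ℝ a (a + w)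
  progress : ∀ n : ℤ,
    (seq (n - 1)).support ∩ (seq n).support ≠ (seq n).support ∩ (seq (n + 1)).support

/-- The set of tiles of a chain. -/
def Chain.tiles {x : Set Rhombus} {w : Pt} (c : Chain x w) : Set Rhombus :=
  Set.range c.seq

/-- A symbolic Wang tile on the shapeset indexed by `Fin k`: a shape index
together with the four edge colours `(a₀, a₁, a₂, a₃)`. -/
abbrev SymbTile (k : ℕ) : Type := Fin k × ℕ × ℕ × ℕ × ℕ

/-- The colours of a symbolic tile, as a function on edge indices. -/
def SymbTile.colors {k : ℕ} (t : SymbTile k) : Fin 4 → ℕ :=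
  ![t.2.1, t.2.2.1, t.2.2.2.1, t.2.2.2.2]

/-- The geometric coloured tile `t` is a translate of the symbolic tile `p`. -/
def Realizes {k : ℕ} (shapes : Fin k → Rhombus) (t : ColoredRhombus) (p : SymbTile k) :
    Prop :=
  t.shape.SameShape (shapes p.1) ∧ t.color = SymbTile.colors p

/-- The Domino problem on the subshift `X`: given a tileset `T`, decide whether
there is a valid tiling by translates of tiles of `T` whose colour-erased image
belongs to `X`. -/
def DominoPred {k : ℕ} (shapes : Fin k → Rhombus) (X : Set (Set Rhombus))
    (T : List (SymbTile k)) : Prop :=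
  ∃ x : Set ColoredRhombus, IsColoredTiling x ∧
    (∀ t ∈ x, ∃ p ∈ T, Realizes shapes t p) ∧ eraseColors x ∈ X

/-- A displacement code: a formal integer combination of edge vectors of the shapes. -/
abbrev Disp (k : ℕ) : Type := List (Fin k × ℤ × ℤ)

/-- The vector coded by a displacement code. -/
def dispVec {k : ℕ} (shapes : Fin k → Rhombus) (d : Disp k) : Pt :=
  (d.map (fun e => (e.2.1 : ℝ) • (shapes e.1).u + (e.2.2 : ℝ) • (shapes e.1).v)).sum

/-- A code for a pattern of (uncoloured) shapes: each entry is a shape index and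
the displacement of the corresponding tile. -/
abbrev PatternCode (k : ℕ) : Type := List (Fin k × Disp k)

/-- The pattern coded by a pattern code. -/
def decodePattern {k : ℕ} (shapes : Fin k → Rhombus) (c : PatternCode k) : Set Rhombus :=
  {r | ∃ e ∈ c, r = (shapes e.1).translate (dispVec shapes e.2)}

/-- A code for a pattern of coloured tiles. -/
abbrev ColoredCode (k : ℕ) : Type := List (SymbTile k × Disp k)

/-- The coloured pattern coded by a coloured pattern code. -/
def decodeColored {k : ℕ} (shapes : Fin k → Rhombus) (c : ColoredCode k) :
    Set ColoredRhombus :=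
  {t | ∃ e ∈ c,
    t = ColoredRhombus.mk ((shapes e.1.1).translate (dispVec shapes e.2))
          (SymbTile.colors e.1)}

/-- A decision problem is `Π⁰₁` (co-computably enumerable): there is a total
computable `f` such that `A x ↔ ∀ n, f x n = true`. -/
def Pi01 {α : Type} [Primcodable α] (A : α → Prop) : Prop :=
  ∃ f : α → ℕ → Bool, Computable₂ f ∧ ∀ a, A a ↔ ∀ n : ℕ, f a n = true

/-- A decision problem is `Π⁰₁`-hard: every `Π⁰₁` problem many-one reduces to it. -/
def Pi01Hard {α : Type} [Primcodable α] (A : α → Prop) : Prop :=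
  ∀ (β : Type) [Primcodable β], ∀ B : β → Prop, Pi01 B → ManyOneReducible B A

/-!
The domino problem on the square grid is `Π⁰₁`-hard. A finite set of rules makes the lines of the
grid form a hierarchy: the odd lines are those of level `0`, and the even lines obey the same rules
as the whole grid. The lines of level `m` are divided into blocks of `2 ^ m`, so that the crossings
of two blocks form a `2 ^ m` by `2 ^ m` square, whose cells exchange their labels along the lines.
If the labels are those of the space-time diagram of a Turing machine, with the input on the
boundary of each square, then the grid can be tiled exactly when the squares of all sizes can be
filled, that is, by compactness, when the machine runs forever.

This is transferred to `X` through the tiles with sides `u` and `v`, the sides of some tile of a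
tiling in `X`. By uniform recurrence these cross tiles are relatively dense in every tiling of `X`.
Counting with sign the edges of vector `u` on a path of edges does not depend on the path, since the
plane is simply connected and the sides of a rhombus are opposite in pairs; this defines a height
function `f`, and similarly `g` for `v`. A cross tile is determined by the integral parts of `f` and
`g` at its corner, and all pairs of integers occur: starting from a cross tile, the tiles through
its edges of vector `u` form a bi-infinite chain on which `f` stays within a unit interval while `g`
increases by `1` at each cross tile. If the other tiles have equal colours on opposite edges, the
chains transmit the colours from a cross tile to the next one, so that the cross tiles simulate the
square grid. Conversely a tiling of the grid by Wang tiles is pulled back along `(g, f)`.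
-/

/-! ### Hierarchical configurations -/

/-- Edge labels of a configuration on the square grid. The cell `(x, y)` has west label `row x y`,
east label `row (x + 1) y`, south label `col x y` and north label `col x (y + 1)`. -/
structure Config (L : Type*) where
  row : ℤ → ℤ → L
  col : ℤ → ℤ → L

namespace Config

variable {L : Type*}

/-- Every cell of the configuration satisfies the relation `R` between its west, south, east and
north labels. -/
def IsValid (R : L → L → L → L → Prop) (c : Config L) : Prop :=
  ∀ x y, R (c.row x y) (c.col x y) (c.row (x + 1) y) (c.col x (y + 1))

/-- Reflection in the diagonal. -/
@[simps]
def transpose (c : Config L) : Config L := ⟨fun x y => c.col y x, fun x y => c.row y x⟩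

/-- The configuration seen from the origin `(a, b)`. -/
@[simps]
def translate (a b : ℤ) (c : Config L) : Config L :=
  ⟨fun x y => c.row (x + a) (y + b), fun x y => c.col (x + a) (y + b)⟩

/-- The labels at even positions of the lines of even index. -/
@[simps]
def coarsen (c : Config L) : Config L :=
  ⟨fun i j => c.row (2 * i) (2 * j), fun i j => c.col (2 * i) (2 * j)⟩

end Config

/-- A relation between the west, south, east and north labels of a cell, in which `none` stands for
the boundary of a quadrant. -/
abbrev Rule (A : Type*) : Type _ := Option A → Option A → A → A → Prop

namespace Rule

variable {A : Type*} (C : Rule A)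

/-- Reflection in the diagonal. -/
def transpose : Rule A := fun w s e n => C s w n e

/-- The label at position `k` of a line of a quadrant, `f k` being the one after the `k`-th cell. -/
def fromBoundary (f : ℕ → A) : ℕ → Option A
  | 0 => none
  | k + 1 => some (f k)

/-- The cell `(k, l)` of the quadrant with east labels `E` and north labels `N` obeys the rule. -/
def HoldsAt (E N : ℕ → ℕ → A) (k l : ℕ) : Prop :=
  C (fromBoundary (E · l) k) (fromBoundary (N k) l) (E k l) (N k l)

/-- The quadrant has a tiling obeying the rule with labels in `S`. -/
def TilesQuadrant (S : Set A) : Prop :=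
  ∃ E N : ℕ → ℕ → A, ∀ k l, E k l ∈ S ∧ N k l ∈ S ∧ C.HoldsAt E N k l

end Rule

/-- What the label of an edge records about the line `ℓ` carrying it. Lines have a level and an
index, odd lines having level `0`. A line has the parity `odd` of its index, the `block` of
the lines of its level that contains it, given by whether the line is the first of the block and the
number of the block modulo `4`, a `phase` counting the crossings, and the block `crossed` of the
last perpendicular line of the same level. -/
structure Frame where
  odd : Bool
  phase : ZMod 8
  block : Bool × ZMod 4
  crossed : Bool × ZMod 4

/-- The label of an edge: its frame, and data belonging to the tiling to be simulated. -/
abbrev Label (A : Type*) : Type _ := Frame × A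

/-- The phase at a crossing with an odd or even line of the lattice under consideration. -/
def phaseStep (o : Bool) : ZMod 8 := cond o 2 1

/-- A line going from `w` to `e` meets the line `s` of the same level and of lattice parity `o`. -/
structure Frame.Meets (o : Bool) (w e s : Frame) : Prop where
  phase_mem : w.phase = 1 ∨ w.phase = 5
  phase_eq : e.phase = w.phase + phaseStep o
  odd_iff : s.odd = true ↔ w.phase = 5
  number_eq : s.block.2 = w.crossed.2 + cond s.block.1 1 0
  crossed_eq : e.crossed = s.block

namespace Label

variable {A : Type*}

/-- A line keeps its parity and its block. -/
def SameLine (w e : Label A) : Prop := e.1.odd = w.1.odd ∧ e.1.block = w.1.block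

/-- A cell where two lines of the same level cross, and where the rule `C` is imposed. -/
structure Peers (C : Rule A) (ox oy : Bool) (w s e n : Label A) : Prop where
  row : Frame.Meets oy w.1 e.1 s.1
  col : Frame.Meets ox s.1 n.1 w.1
  rule : C (cond s.1.block.1 none (some w.2)) (cond w.1.block.1 none (some s.2)) e.2 n.2

/-- A cell where the column, going from `s` to `n`, has a lower level than the row, going from `w`
to `e`. The phase of the column tells whether the level of the row is the next one; if so, the
column determines whether the row is the first of its block. -/
structure Under (ox : Bool) (w s e n : Label A) : Prop where
  phase_eq : n.1.phase = s.1.phase + phaseStep ox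
  next_or : s.1.phase = 3 ∧ 4 * w.1.phase = 0 ∧ e.1.phase = w.1.phase + 1 ∧
      (w.1.block.1 = true ↔ s.1.crossed = (true, 0)) ∨
    s.1.phase = 7 ∧ e.1.phase = w.1.phase ∧ s.1.crossed ≠ (true, 0)
  row_crossed : e.1.crossed = w.1.crossed
  col_crossed : n.1.crossed = s.1.crossed
  row_data : e.2 = w.2
  col_data : n.2 = s.2

/-- The cases of `Label.Cell`. -/
def Crossing (C : Rule A) (ox oy : Bool) (w s e n : Label A) : Prop :=
  Peers C ox oy w s e n ∨ Under ox w s e n ∧ oy = false ∨ Under oy s w n e ∧ ox = false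

/-- The relation between the labels of a cell, in a column of parity `ox` and a row of parity
`oy`. -/
structure Cell (C : Rule A) (ox oy : Bool) (w s e n : Label A) : Prop where
  row : SameLine w e
  col : SameLine s n
  crossing : Crossing C ox oy w s e n
  parity : Peers C ox oy w s e n → ox = oy

theorem Peers.transpose {C : Rule A} {ox oy : Bool} {w s e n : Label A}
    (h : Peers C ox oy w s e n) : Peers C.transpose oy ox s w n e :=
  ⟨h.col, h.row, h.rule⟩

theorem Crossing.transpose {C : Rule A} {ox oy : Bool} {w s e n : Label A}
    (h : Crossing C ox oy w s e n) : Crossing C.transpose oy ox s w n e :=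
  h.imp Peers.transpose Or.symm

theorem Cell.transpose {C : Rule A} {ox oy : Bool} {w s e n : Label A}
    (h : Cell C ox oy w s e n) : Cell C.transpose oy ox s w n e :=
  ⟨h.col, h.row, h.crossing.transpose, fun hp => (h.parity hp.transpose).symm⟩

end Label

/-- A configuration all of whose cells obey the rules of the hierarchy. -/
def IsHierarchical {A : Type*} (C : Rule A) (c : Config (Label A)) : Prop :=
  ∀ x y : ℤ, Label.Cell C x.bodd y.bodd (c.row x y) (c.col x y) (c.row (x + 1) y)
    (c.col x (y + 1))

namespace IsHierarchical

variable {A : Type*} {C : Rule A} {c : Config (Label A)}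

theorem transpose (H : IsHierarchical C c) : IsHierarchical C.transpose c.transpose :=
  fun x y => (H y x).transpose

theorem translate (H : IsHierarchical C c) (a b : ℤ) :
    IsHierarchical C (c.translate (2 * a) (2 * b)) := by
  intro x y
  have h := H (x + 2 * a) (y + 2 * b)
  simpa [Config.translate, add_right_comm, Int.bodd_two] using h

theorem odd_odd (H : IsHierarchical C c) (i j : ℤ) :
    Label.Peers C true true (c.row (2 * i + 1) (2 * j + 1)) (c.col (2 * i + 1) (2 * j + 1))
      (c.row (2 * i + 2) (2 * j + 1)) (c.col (2 * i + 1) (2 * j + 2)) := by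
  have h := (H (2 * i + 1) (2 * j + 1)).crossing
  simpa [Label.Crossing, add_assoc, Int.bodd_two] using h

theorem odd_even (H : IsHierarchical C c) (i j : ℤ) :
    Label.Under true (c.row (2 * i + 1) (2 * j)) (c.col (2 * i + 1) (2 * j))
      (c.row (2 * i + 2) (2 * j)) (c.col (2 * i + 1) (2 * j + 1)) := by
  have h := H (2 * i + 1) (2 * j)
  rcases h.crossing with hp | hu | hu
  · simpa [Int.bodd_two] using h.parity hp
  · simpa [add_assoc, Int.bodd_two] using hu.1
  · simp [Int.bodd_two] at hu

theorem even_odd (H : IsHierarchical C c) (i j : ℤ) :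
    Label.Under true (c.col (2 * i) (2 * j + 1)) (c.row (2 * i) (2 * j + 1))
      (c.col (2 * i) (2 * j + 2)) (c.row (2 * i + 1) (2 * j + 1)) :=
  H.transpose.odd_even j i

theorem row_eq (H : IsHierarchical C c) (x x' y : ℤ) :
    (c.row x y).1.odd = (c.row x' y).1.odd ∧ (c.row x y).1.block = (c.row x' y).1.block := by
  have odd_periodic : Function.Periodic (fun x => (c.row x y).1.odd) 1 := fun x => (H x y).row.1
  have block_periodic : Function.Periodic (fun x => (c.row x y).1.block) 1 :=
    fun x => (H x y).row.2
  constructor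
  · simpa using (odd_periodic.int_mul_eq x).trans (odd_periodic.int_mul_eq x').symm
  · simpa using (block_periodic.int_mul_eq x).trans (block_periodic.int_mul_eq x').symm

theorem col_eq (H : IsHierarchical C c) (x y y' : ℤ) :
    (c.col x y).1.odd = (c.col x y').1.odd ∧ (c.col x y).1.block = (c.col x y').1.block :=
  H.transpose.row_eq y y' x

theorem phase_succ (H : IsHierarchical C c) (i j : ℤ) :
    (c.col (2 * i + 1) (2 * (j + 1))).1.phase = (c.col (2 * i + 1) (2 * j)).1.phase + 4 := by
  rw [mul_add, mul_one, (H.odd_odd i j).col.phase_eq, (H.odd_even i j).phase_eq, add_assoc]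
  rfl

theorem phase_mem (H : IsHierarchical C c) (i j : ℤ) :
    (c.col (2 * i + 1) (2 * j)).1.phase = 3 ∨ (c.col (2 * i + 1) (2 * j)).1.phase = 7 :=
  (H.odd_even i j).next_or.imp And.left And.left

theorem phase_eq_three_iff (H : IsHierarchical C c) (i j : ℤ) :
    (c.col (2 * i + 1) (2 * j)).1.phase = 3 ↔ (c.row 0 (2 * j + 1)).1.odd = true := by
  rw [(H.row_eq 0 (2 * i + 1) (2 * j + 1)).1, (H.odd_odd i j).col.odd_iff,
    (H.odd_even i j).phase_eq]
  exact (add_left_inj (2 : ZMod 8)).symm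

/-- The phases of the odd columns at the even rows are those of lines of level `0`. -/
def PhasesAligned (c : Config (Label A)) : Prop :=
  ∀ i j : ℤ, (c.col (2 * i + 1) (2 * j)).1.phase = cond j.bodd 3 7

theorem odd_succ (H : IsHierarchical C c) (j : ℤ) :
    (c.row 0 (2 * (j + 1) + 1)).1.odd = !(c.row 0 (2 * j + 1)).1.odd := by
  have step := H.phase_succ 0 j
  rw [Bool.eq_iff_iff, Bool.not_eq_true', ← Bool.not_eq_true, ← H.phase_eq_three_iff 0,
    ← H.phase_eq_three_iff 0, step]
  rcases H.phase_mem 0 j with h | h <;> rw [h] <;> decide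

theorem exists_phasesAligned (H : IsHierarchical C c) :
    ∃ ε : ℤ, ∀ δ, PhasesAligned (c.translate (2 * δ) (2 * ε)) := by
  have xor_periodic : Function.Periodic (fun j => (c.row 0 (2 * j + 1)).1.odd ^^ j.bodd) 1 := by
    intro j
    simp [H.odd_succ]
  have odd_eq : ∀ j : ℤ, (c.row 0 (2 * j + 1)).1.odd = ((c.row 0 1).1.odd ^^ j.bodd) := by
    intro j
    have h : ((c.row 0 (2 * j + 1)).1.odd ^^ j.bodd) = (c.row 0 1).1.odd := by
      simpa using xor_periodic.int_mul_eq j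
    rw [← h, Bool.xor_assoc, Bool.xor_self, Bool.xor_false]
  refine ⟨cond (c.row 0 1).1.odd 1 0, fun δ i j => ?_⟩
  generalize hε : cond (c.row 0 1).1.odd (1 : ℤ) 0 = ε
  have odd_eq' : (c.row 0 (2 * (j + ε) + 1)).1.odd = j.bodd := by
    rw [odd_eq, ← hε]
    cases (c.row 0 1).1.odd <;> simp
  have h3 := H.phase_eq_three_iff (i + δ) (j + ε)
  have h37 := H.phase_mem (i + δ) (j + ε)
  have hx : 2 * i + 1 + 2 * δ = 2 * (i + δ) + 1 := by ring
  simp only [Config.translate, hx, ← mul_add]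
  cases hj : j.bodd <;> simp_all

end IsHierarchical

namespace Label

variable {A : Type*}

/-- A line, going through an even cell from `w` to `e`, then crosses an odd line and continues as
`e'`; its index on the coarser lattice has parity `o`. -/
structure PassesOdd (o : Bool) (w e e' : Label A) : Prop where
  crossed_eq : e'.1.crossed = e.1.crossed
  data_eq : e'.2 = e.2
  phase_eq : e'.1.phase = e.1.phase + cond o 1 0
  of_odd : o = true → 4 * w.1.phase = 4 ∧ 4 * e.1.phase = 0

theorem PassesOdd.meets {o : Bool} {w e e' : Label A} {s : Frame} (h : PassesOdd o w e e')
    (hm : Frame.Meets false w.1 e.1 s) : Frame.Meets o w.1 e'.1 s where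
  phase_mem := hm.phase_mem
  phase_eq := by
    rw [h.phase_eq, hm.phase_eq, add_assoc]
    cases o <;> rfl
  odd_iff := hm.odd_iff
  number_eq := hm.number_eq
  crossed_eq := h.crossed_eq.trans hm.crossed_eq

theorem Under.eq_false_of_passesOdd {o o' : Bool} {w e e' s n : Label A}
    (h : PassesOdd o' w e e') (hu : Under o w s e n) : o' = false := by
  rw [← Bool.not_eq_true]
  intro ho
  obtain ⟨hw, he⟩ := h.of_odd ho
  rcases hu.next_or with ⟨-, hw', -⟩ | ⟨-, hew, -⟩
  · exact absurd (hw.symm.trans hw') (by decide)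
  · rw [hew] at he
    exact absurd (hw.symm.trans he) (by decide)

theorem Under.coarsen {oi oj : Bool} {w e e' s n n' : Label A} (hrow : PassesOdd oj w e e')
    (hcol : PassesOdd oi s n n') (hu : Under false w s e n) : Under oi w s e' n' where
  phase_eq := by
    rw [hcol.phase_eq, hu.phase_eq, add_assoc]
    cases oi <;> rfl
  next_or := by
    rw [hrow.phase_eq, hu.eq_false_of_passesOdd hrow, cond_false, add_zero]
    exact hu.next_or
  row_crossed := hrow.crossed_eq.trans hu.row_crossed
  col_crossed := hcol.crossed_eq.trans hu.col_crossed
  row_data := hrow.data_eq.trans hu.row_data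
  col_data := hcol.data_eq.trans hu.col_data

theorem Crossing.coarsen {C : Rule A} {oi oj : Bool} {w e e' s n n' : Label A}
    (hrow : PassesOdd oj w e e') (hcol : PassesOdd oi s n n')
    (h : Crossing C false false w s e n) : Crossing C oi oj w s e' n' := by
  rcases h with hp | ⟨hu, -⟩ | ⟨hu, -⟩
  · refine Or.inl ⟨hrow.meets hp.row, hcol.meets hp.col, ?_⟩
    rw [hrow.data_eq, hcol.data_eq]
    exact hp.rule
  · exact Or.inr (Or.inl ⟨hu.coarsen hrow hcol, hu.eq_false_of_passesOdd hrow⟩)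
  · exact Or.inr (Or.inr ⟨hu.coarsen hcol hrow, hu.eq_false_of_passesOdd hcol⟩)

theorem Peers.not_crossing_next {C : Rule A} {w s e n w' e' n' : Label A} {ox : Bool}
    (h : Peers C true true w s e n) : ¬ Peers C ox false w' n e' n' := by
  intro h'
  have hn := h'.col.phase_mem
  rw [h.col.phase_eq] at hn
  rcases h.col.phase_mem with hs | hs <;> rw [hs] at hn <;> revert hn <;> decide

end Label

namespace IsHierarchical

variable {A : Type*} {C : Rule A} {c : Config (Label A)}

theorem phase_of_odd (H : IsHierarchical C c) (hc : PhasesAligned c) (i : ℤ) {j : ℤ}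
    (hj : j.bodd = true) : 4 * (c.row (2 * i + 1) (2 * j)).1.phase = 0 ∧
      (c.row (2 * i + 2) (2 * j)).1.phase = (c.row (2 * i + 1) (2 * j)).1.phase + 1 := by
  rcases (H.odd_even i j).next_or with ⟨-, h4, hstep, -⟩ | ⟨h7, -⟩
  · exact ⟨h4, hstep⟩
  · rw [hc, hj] at h7
    exact absurd h7 (by decide)

theorem phase_of_even (H : IsHierarchical C c) (hc : PhasesAligned c) (i : ℤ) {j : ℤ}
    (hj : j.bodd = false) :
    (c.row (2 * i + 2) (2 * j)).1.phase = (c.row (2 * i + 1) (2 * j)).1.phase := by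
  rcases (H.odd_even i j).next_or with ⟨h3, -⟩ | ⟨-, heq, -⟩
  · rw [hc, hj] at h3
    exact absurd h3 (by decide)
  · exact heq

theorem passesOdd (H : IsHierarchical C c) (hc : PhasesAligned c) (i j : ℤ) :
    Label.PassesOdd j.bodd (c.row (2 * i) (2 * j)) (c.row (2 * i + 1) (2 * j))
      (c.row (2 * i + 2) (2 * j)) where
  crossed_eq := (H.odd_even i j).row_crossed
  data_eq := (H.odd_even i j).row_data
  phase_eq := by
    cases hj : j.bodd
    · rw [H.phase_of_even hc i hj, cond_false, add_zero]
    · exact (H.phase_of_odd hc i hj).2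
  of_odd := by
    intro hj
    obtain ⟨h4, hstep⟩ := H.phase_of_odd hc (i - 1) hj
    have hx : 2 * (i - 1) + 2 = 2 * i := by ring
    rw [hx] at hstep
    refine ⟨?_, (H.phase_of_odd hc i hj).1⟩
    rw [hstep, mul_add, h4, zero_add, mul_one]

theorem coarsen (H : IsHierarchical C c) (hcol : PhasesAligned c)
    (hrow : PhasesAligned c.transpose) : IsHierarchical C c.coarsen := by
  have row_passes := H.passesOdd hcol
  have col_passes := H.transpose.passesOdd hrow
  have even_cell (i j : ℤ) : Label.Cell C false false (c.row (2 * i) (2 * j))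
      (c.col (2 * i) (2 * j)) (c.row (2 * i + 1) (2 * j)) (c.col (2 * i) (2 * j + 1)) := by
    simpa [Int.bodd_two] using H (2 * i) (2 * j)
  have crossing (i j : ℤ) : Label.Crossing C i.bodd j.bodd (c.coarsen.row i j)
      (c.coarsen.col i j) (c.coarsen.row (i + 1) j) (c.coarsen.col i (j + 1)) := by
    simp only [Config.coarsen, mul_add, mul_one]
    exact (even_cell i j).crossing.coarsen (row_passes i j) (col_passes j i)
  have odd_peers (i j : ℤ) (hi : i.bodd = true) (hj : j.bodd = true) :
      Label.Peers C true true (c.coarsen.row i j) (c.coarsen.col i j) (c.coarsen.row (i + 1) j)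
        (c.coarsen.col i (j + 1)) := by
    simpa [Label.Crossing, hi, hj] using crossing i j
  intro i j
  refine ⟨H.row_eq _ _ _, H.col_eq _ _ _, crossing i j, fun hp => ?_⟩
  cases hi : i.bodd <;> cases hj : j.bodd <;> rw [hi, hj] at hp
  · have h := odd_peers (i - 1) j (by simp [sub_eq_add_neg, hi]) hj
    rw [sub_add_cancel] at h
    exact absurd hp.transpose h.transpose.not_crossing_next
  · have h := odd_peers i (j - 1) hi (by simp [sub_eq_add_neg, hj])
    rw [sub_add_cancel] at h
    exact absurd hp h.not_crossing_next

end IsHierarchical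

theorem apply_intCast_of_step {G : Type*} [AddCommGroup G] {f : ℤ → G} {a : G}
    (hf : ∀ j, f (j + 1) = f j + a) (j : ℤ) : f j = f 0 + j • a := by
  have h := AddConstMapClass.map_add_int' (⟨f, hf⟩ : AddConstMap ℤ G 1 a) 0 j
  rwa [Int.cast_id, zero_add] at h

theorem counter_multiple_eq {n : ℕ} {N : ℤ → ZMod n} {s a : ℤ} (hs : 0 < s)
    (hN : ∀ i, N (i + 1) = N i + if s ∣ i + 1 - a then 1 else 0) (q : ℤ) :
    N (a + s * q) = N a + q := by
  have const (q : ℤ) (r : ℕ) (hr : r < s) : N (a + s * q + r) = N (a + s * q) := by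
    induction r with
    | zero => simp
    | succ r ih =>
      have not_dvd : ¬ s ∣ a + s * q + r + 1 - a := by
        rw [show a + s * q + r + 1 - a = r + 1 + s * q by ring, dvd_add_left (dvd_mul_right s q)]
        exact fun h => hr.not_ge (Int.le_of_dvd (by positivity) (by exact_mod_cast h))
      rw [Nat.cast_succ, ← add_assoc, hN, if_neg not_dvd, add_zero, ih (by push_cast at hr; omega)]
  have step (q : ℤ) : N (a + s * (q + 1)) = N (a + s * q) + 1 := by
    lift s to ℕ using hs.le
    have hlast : a + s * (q + 1) = a + s * q + (s - 1 : ℕ) + 1 := by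
      rw [Nat.cast_pred (by exact_mod_cast hs)]
      ring
    have hdvd : (s : ℤ) ∣ a + s * (q + 1) - a := ⟨q + 1, by ring⟩
    rw [hlast] at hdvd ⊢
    rw [hN, if_pos hdvd, const q _ (by rw [Nat.cast_pred (by exact_mod_cast hs)]; omega)]
  have h := apply_intCast_of_step (f := fun q => N (a + s * q)) step q
  rwa [mul_zero, add_zero, zsmul_one] at h

theorem exists_dvd_sub_iff_counter_eq_zero {n : ℕ} [NeZero n] {N : ℤ → ZMod n} {s a : ℤ}
    (hs : 0 < s) (hN : ∀ i, N (i + 1) = N i + if s ∣ i + 1 - a then 1 else 0) :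
    ∃ b, ∀ i, s ∣ i - a ∧ N i = 0 ↔ n * s ∣ i - b := by
  refine ⟨a - s * (N a).val, fun i => ?_⟩
  have zero_iff (q : ℤ) : N (a + s * q) = 0 ↔ n * s ∣ a + s * q - (a - s * (N a).val) := by
    rw [show a + s * q - (a - s * (N a).val) = ((N a).val + q) * s by ring,
      mul_dvd_mul_iff_right hs.ne', counter_multiple_eq hs hN, ← ZMod.intCast_zmod_eq_zero_iff_dvd]
    simp
  constructor
  · rintro ⟨⟨q, hq⟩, h0⟩
    obtain rfl : i = a + s * q := by linarith
    exact (zero_iff q).1 h0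
  · intro h
    have hdvd : s ∣ i - a := by
      have h' : s ∣ i - (a - s * (N a).val) - s * (N a).val :=
        ((dvd_mul_left s n).trans h).sub (dvd_mul_right s _)
      rwa [show i - (a - s * (N a).val) - s * (N a).val = i - a by ring] at h'
    refine ⟨hdvd, ?_⟩
    obtain ⟨q, hq⟩ := hdvd
    obtain rfl : i = a + s * q := by linarith
    exact (zero_iff q).2 h

namespace IsHierarchical

variable {A : Type*} {C : Rule A} {c : Config (Label A)}

/-- The `i`-th column of odd index is the first of its block if and only if `i` is congruent to `a`
modulo `s`. -/
def FirstColsModEq (c : Config (Label A)) (s a : ℤ) : Prop :=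
  ∀ i y : ℤ, (c.col (2 * i + 1) y).1.block.1 = true ↔ s ∣ i - a

theorem number_succ (H : IsHierarchical C c) (i : ℤ) :
    (c.col (2 * (i + 1) + 1) 1).1.block.2 = (c.col (2 * i + 1) 1).1.block.2 +
      cond (c.col (2 * (i + 1) + 1) 1).1.block.1 1 0 := by
  have hi := (H.odd_odd i 0).row.crossed_eq
  have hnext := (H.even_odd (i + 1) 0).col_crossed
  have hi' := (H.odd_odd (i + 1) 0).row.number_eq
  simp only [mul_zero, zero_add] at hi hnext hi'
  rw [hi', hnext, mul_add, mul_one, hi]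

theorem exists_counter (H : IsHierarchical C c) {s a : ℤ} (hs : 0 < s)
    (hc : FirstColsModEq c s a) :
    ∃ b, ∀ i : ℤ, (c.col (2 * i + 1) 1).1.block = (true, 0) ↔ 4 * s ∣ i - b := by
  have hN (i : ℤ) : (c.col (2 * (i + 1) + 1) 1).1.block.2 = (c.col (2 * i + 1) 1).1.block.2 +
      if s ∣ i + 1 - a then 1 else 0 := by
    rw [H.number_succ, ← if_congr (hc (i + 1) 1) rfl rfl, Bool.cond_eq_ite]
  obtain ⟨b, hb⟩ := exists_dvd_sub_iff_counter_eq_zero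
    (N := fun i => (c.col (2 * i + 1) 1).1.block.2) hs hN
  refine ⟨b, fun i => ?_⟩
  rw [Prod.ext_iff, hc, hb]
  rfl

theorem first_iff_of_odd (H : IsHierarchical C c) (hrow : PhasesAligned c.transpose) {i : ℤ}
    (hi : i.bodd = true) : (c.col (2 * i) 1).1.block.1 = true ↔
      (c.col (2 * (i - 1) + 1) 1).1.block = (true, 0) := by
  have hcrossed := (H.odd_odd (i - 1) 0).row.crossed_eq
  have hnext := (H.even_odd i 0).next_or
  have hphase : (c.row (2 * i) (2 * 0 + 1)).1.phase = 3 := by simpa [hi] using hrow 0 i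
  rw [show 2 * (i - 1) + 2 = 2 * i by ring] at hcrossed
  rw [hphase, hcrossed] at hnext
  rcases hnext with ⟨-, -, -, h⟩ | ⟨h, -⟩
  · exact h
  · exact absurd h (by decide)

theorem block_ne_of_even (H : IsHierarchical C c) (hrow : PhasesAligned c.transpose) {i : ℤ}
    (hi : i.bodd = false) : (c.col (2 * (i - 1) + 1) 1).1.block ≠ (true, 0) := by
  have hcrossed := (H.odd_odd (i - 1) 0).row.crossed_eq
  have hnext := (H.even_odd i 0).next_or
  have hphase : (c.row (2 * i) (2 * 0 + 1)).1.phase = 7 := by simpa [hi] using hrow 0 i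
  rw [show 2 * (i - 1) + 2 = 2 * i by ring] at hcrossed
  rw [hphase, hcrossed] at hnext
  rcases hnext with ⟨h, -⟩ | ⟨-, -, h⟩
  · exact absurd h (by decide)
  · exact h

theorem firstColsModEq_coarsen (H : IsHierarchical C c) (hrow : PhasesAligned c.transpose)
    {s a : ℤ} (hs : 0 < s) (hc : FirstColsModEq c s a) :
    ∃ b, FirstColsModEq c.coarsen (2 * s) b := by
  obtain ⟨b, hb⟩ := H.exists_counter hs hc
  have b_even : b.bodd = false := by
    rw [← Bool.not_eq_true]
    intro h
    exact H.block_ne_of_even hrow (i := b + 1) (by simp [h]) ((hb _).2 (by simp))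
  obtain ⟨d, rfl⟩ : ∃ d, b = 2 * d := ⟨b.div2, by simpa [b_even] using (Int.bodd_add_div2 b).symm⟩
  refine ⟨d, fun i y => ?_⟩
  have h := H.first_iff_of_odd hrow (i := 2 * i + 1) (by simp [Int.bodd_two])
  rw [hb] at h
  rw [Config.coarsen, (H.col_eq _ (2 * y) 1).2, h,
    show 2 * i + 1 - 1 - 2 * d = 2 * (i - d) by ring, show 4 * s = 2 * (2 * s) by ring]
  exact mul_dvd_mul_iff_left two_ne_zero

theorem FirstColsModEq.translate {s a : ℤ} (hc : FirstColsModEq c s a) (δ ε : ℤ) :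
    FirstColsModEq (c.translate (2 * δ) (2 * ε)) s (a - δ) := fun i y => by
  rw [Config.translate_col, show 2 * i + 1 + 2 * δ = 2 * (i + δ) + 1 by ring, hc,
    sub_sub_eq_add_sub]

/-- The lines of odd index are all first of their block. -/
def OddLinesFirst (c : Config (Label A)) : Prop :=
  ∀ i y : ℤ, (c.col (2 * i + 1) y).1.block.1 = true ∧ (c.row y (2 * i + 1)).1.block.1 = true

/-- The data of all labels of `c` are in `S`. -/
def DataIn (S : Set A) (c : Config (Label A)) : Prop :=
  ∀ x y : ℤ, (c.row x y).2 ∈ S ∧ (c.col x y).2 ∈ S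

theorem exists_firstColsModEq_pow (H : IsHierarchical C c) {S : Set A} (hS : DataIn S c)
    (h1 : OddLinesFirst c) (m : ℕ) : ∃ c' : Config (Label A), IsHierarchical C c' ∧ DataIn S c' ∧
      (∃ a, FirstColsModEq c' (2 ^ m) a) ∧ ∃ b, FirstColsModEq c'.transpose (2 ^ m) b := by
  induction m with
  | zero =>
    exact ⟨c, H, hS, ⟨0, fun i y => by simp [(h1 i y).1]⟩,
      ⟨0, fun i y => by simp [Config.transpose, (h1 i y).2]⟩⟩
  | succ m ih =>
    obtain ⟨c', H', hS', ⟨a, ha⟩, ⟨b, hb⟩⟩ := ih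
    obtain ⟨ε, hε⟩ := H'.exists_phasesAligned
    obtain ⟨δ, hδ⟩ := H'.transpose.exists_phasesAligned
    have hcol := hε δ
    have hrow : PhasesAligned (c'.translate (2 * δ) (2 * ε)).transpose := hδ ε
    have H'' := H'.translate δ ε
    refine ⟨_, H''.coarsen hcol hrow, fun x y => hS' _ _, ?_, ?_⟩
    · rw [pow_succ']
      exact H''.firstColsModEq_coarsen hrow (by positivity) (ha.translate δ ε)
    · rw [pow_succ']
      exact H''.transpose.firstColsModEq_coarsen hcol (by positivity) (hb.translate ε δ)

theorem cond_first_col {s a : ℤ} (hc : FirstColsModEq c s a) {k : ℕ} (hk : k < s) (y : ℤ)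
    {f : ℕ → A} {p : A} (hp : ∀ k', k = k' + 1 → p = f k') :
    cond (c.col (2 * (a + k) + 1) y).1.block.1 none (some p) = Rule.fromBoundary f k := by
  have first_iff : (c.col (2 * (a + k) + 1) y).1.block.1 = true ↔ k = 0 := by
    rw [hc, add_sub_cancel_left]
    refine ⟨fun h => by_contra fun h0 => ?_, fun h => by simp [h]⟩
    exact absurd (Int.le_of_dvd (by omega) h) (by omega)
  cases k with
  | zero => rw [first_iff.2 rfl, cond_true, Rule.fromBoundary]
  | succ k' =>
    rw [eq_false_of_ne_true (mt first_iff.1 k'.succ_ne_zero), hp k' rfl, cond_false,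
      Rule.fromBoundary]

theorem exists_square (H : IsHierarchical C c) {S : Set A} (hS : DataIn S c)
    (h1 : OddLinesFirst c) (m : ℕ) : ∃ E N : ℕ → ℕ → A, ∀ k l, E k l ∈ S ∧ N k l ∈ S ∧
      (k < 2 ^ m → l < 2 ^ m → C.HoldsAt E N k l) := by
  obtain ⟨c', H', hS', ⟨a, ha⟩, ⟨b, hb⟩⟩ := H.exists_firstColsModEq_pow hS h1 m
  let E (k l : ℕ) : A := (c'.row (2 * (a + k) + 2) (2 * (b + l) + 1)).2
  let N (k l : ℕ) : A := (c'.col (2 * (a + k) + 1) (2 * (b + l) + 2)).2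
  refine ⟨E, N, fun k l => ⟨(hS' _ _).1, (hS' _ _).2, fun hk hl => ?_⟩⟩
  have west : cond (c'.col (2 * (a + k) + 1) (2 * (b + l) + 1)).1.block.1 none
      (some (c'.row (2 * (a + k) + 1) (2 * (b + l) + 1)).2) = Rule.fromBoundary (E · l) k := by
    refine cond_first_col ha (by exact_mod_cast hk) _ ?_
    rintro k rfl
    rw [(H'.even_odd (a + (k + 1 : ℕ)) (b + l)).col_data,
      show 2 * (a + (k + 1 : ℕ)) = 2 * (a + k) + 2 by push_cast; ring]
  have south : cond (c'.row (2 * (a + k) + 1) (2 * (b + l) + 1)).1.block.1 none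
      (some (c'.col (2 * (a + k) + 1) (2 * (b + l) + 1)).2) = Rule.fromBoundary (N k) l := by
    refine cond_first_col hb (by exact_mod_cast hl) _ ?_
    rintro l rfl
    rw [(H'.odd_even (a + k) (b + (l + 1 : ℕ))).col_data,
      show 2 * (b + (l + 1 : ℕ)) = 2 * (b + l) + 2 by push_cast; ring]
  have hrule := (H'.odd_odd (a + k) (b + l)).rule
  rwa [west, south] at hrule

end IsHierarchical

theorem exists_eventually_eq {ι I A : Type*} (U : Ultrafilter ι) {S : Set A} (hS : S.Finite)
    (f : ι → I → A) (hf : ∀ n i, f n i ∈ S) :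
    ∃ g : I → A, ∀ i, g i ∈ S ∧ ∀ᶠ n in U, f n i = g i := by
  have h (i : I) : ∃ a ∈ S, ∀ᶠ n in U, f n i = a :=
    (Ultrafilter.eventually_exists_mem_iff hS).1 (.of_forall fun n => ⟨f n i, hf n i, rfl⟩)
  choose g hg using h
  exact ⟨g, hg⟩

namespace Rule

variable {A : Type*} {C : Rule A}

theorem fromBoundary_congr {f g : ℕ → A} {k : ℕ} (h : f (k - 1) = g (k - 1)) :
    fromBoundary f k = fromBoundary g k := by
  cases k with
  | zero => rfl
  | succ k => exact congrArg some h

theorem tilesQuadrant_of_squares {S : Set A} (hS : S.Finite)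
    (h : ∀ n : ℕ, ∃ E N : ℕ → ℕ → A, ∀ k l, E k l ∈ S ∧ N k l ∈ S ∧
      (k < n → l < n → C.HoldsAt E N k l)) : C.TilesQuadrant S := by
  choose E N hEN using h
  obtain ⟨E', hE'⟩ := exists_eventually_eq (Filter.hyperfilter ℕ) hS
    (fun n (p : ℕ × ℕ) => E n p.1 p.2) fun n p => (hEN n p.1 p.2).1
  obtain ⟨N', hN'⟩ := exists_eventually_eq (Filter.hyperfilter ℕ) hS
    (fun n (p : ℕ × ℕ) => N n p.1 p.2) fun n p => (hEN n p.1 p.2).2.1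
  refine ⟨fun k l => E' (k, l), fun k l => N' (k, l), fun k l => ⟨(hE' _).1, (hN' _).1, ?_⟩⟩
  have large : ∀ᶠ n in (Filter.hyperfilter ℕ : Filter ℕ), max k l < n :=
    (Filter.eventually_gt_atTop _).filter_mono Nat.hyperfilter_le_atTop
  obtain ⟨n, hn, hE, hN, hW, hS⟩ := (large.and <| (hE' (k, l)).2.and <| (hN' (k, l)).2.and <|
    (hE' (k - 1, l)).2.and (hN' (k, l - 1)).2).exists
  have h := (hEN n k l).2.2 (by omega) (by omega)
  rw [HoldsAt, hE, hN, fromBoundary_congr (g := fun k => E' (k, l)) hW,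
    fromBoundary_congr (g := fun l => N' (k, l)) hS] at h
  exact h

end Rule

theorem IsHierarchical.tilesQuadrant {A : Type*} {C : Rule A} {c : Config (Label A)}
    (H : IsHierarchical C c) {S : Set A} (hfin : S.Finite) (hS : IsHierarchical.DataIn S c)
    (h1 : IsHierarchical.OddLinesFirst c) : C.TilesQuadrant S := by
  refine Rule.tilesQuadrant_of_squares hfin fun n => ?_
  obtain ⟨E, N, hEN⟩ := H.exists_square hS h1 n
  exact ⟨E, N, fun k l => ⟨(hEN k l).1, (hEN k l).2.1, fun hk hl =>
    (hEN k l).2.2 (hk.trans n.lt_two_pow_self) (hl.trans n.lt_two_pow_self)⟩⟩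

/-! ### The explicit hierarchical configuration -/

theorem exists_eq_two_pow_mul_odd (x : ℤ) (hx : x ≠ 0) :
    ∃ p : ℕ × ℤ, x = 2 ^ p.1 * (2 * p.2 + 1) := by
  obtain ⟨q, hq, hodd⟩ := (Int.finiteMultiplicity_iff.2
    ⟨by norm_num, hx⟩ : FiniteMultiplicity 2 x).exists_eq_pow_mul_and_not_dvd
  exact ⟨(multiplicity 2 x, q / 2), by rwa [show 2 * (q / 2) + 1 = q by omega]⟩

theorem bodd_two_pow_mul_odd (m : ℕ) (i : ℤ) :
    (2 ^ m * (2 * i + 1)).bodd = decide (m = 0) := by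
  cases m with
  | zero => simp [Int.bodd_mul, Int.bodd_two]
  | succ m => simp [pow_succ, Int.bodd_mul, Int.bodd_two]

theorem two_mul_add_one_div_two_pow {m : ℕ} {z : ℤ} :
    (2 * (2 ^ m * z + 1) - 1) / 2 ^ m = 2 * z + cond (decide (m = 0)) 1 0 := by
  rw [Int.ediv_eq_iff_of_pos (by positivity)]
  cases m with
  | zero =>
    simp only [decide_true, cond_true, pow_zero, mul_one, one_mul]
    omega
  | succ m =>
    have : (0 : ℤ) < 2 ^ m := by positivity
    simp only [pow_succ, Nat.succ_ne_zero, decide_false, cond_false]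
    constructor <;> nlinarith

theorem two_mul_sub_one_div_two_pow {m : ℕ} {z : ℤ} :
    (2 * (2 ^ m * z) - 1) / 2 ^ m = 2 * z - 1 := by
  have : (0 : ℤ) < 2 ^ m := by positivity
  rw [Int.ediv_eq_iff_of_pos this]
  constructor <;> nlinarith

theorem sub_one_ediv_of_not_dvd {z s : ℤ} (hs : 0 < s) (h : ¬s ∣ z) : (z - 1) / s = z / s := by
  have pos : 0 < z % s := Int.emod_pos_of_not_dvd h |>.resolve_left hs.ne'
  have lt := Int.emod_lt_of_pos z hs
  have eq := Int.mul_ediv_add_emod z s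
  rw [Int.ediv_eq_iff_of_pos hs, mul_comm]
  omega

theorem sub_one_ediv_of_dvd {z s : ℤ} (hs : 0 < s) (h : s ∣ z) : (z - 1) / s = z / s - 1 := by
  obtain ⟨q, rfl⟩ := h
  rw [Int.mul_ediv_cancel_left _ hs.ne', Int.ediv_eq_iff_of_pos hs]
  constructor <;> nlinarith

theorem cond_dvd_eq_fromBoundary {A : Type*} (f : ℕ → A) (z : ℤ) {s : ℤ} (hs : 0 < s) :
    cond (decide (s ∣ z)) none (some (f ((z - 1) % s).toNat)) =
      Rule.fromBoundary f (z % s).toNat := by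
  by_cases h : s ∣ z
  · rw [decide_eq_true h, cond_true, Int.emod_eq_zero_of_dvd h, Int.toNat_zero, Rule.fromBoundary]
  · have pos : 0 < z % s := Int.emod_pos_of_not_dvd h |>.resolve_left hs.ne'
    have pred : (z - 1) % s = z % s - 1 := by
      rw [Int.emod_def, sub_one_ediv_of_not_dvd hs h, Int.emod_def]
      ring
    obtain ⟨k, hk⟩ : ∃ k : ℕ, z % s = k + 1 := ⟨(z % s - 1).toNat, by omega⟩
    rw [decide_eq_false h, cond_false, pred, hk, add_sub_cancel_right, Int.toNat_natCast,
      Int.toNat_natCast_add_one, Rule.fromBoundary]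

/-- The block of the line of level `m` and index `i` in the explicit configuration: the blocks of
level `m` have length `2 ^ m`. -/
def blockOf (m : ℕ) (i : ℤ) : Bool × ZMod 4 := (decide ((2 : ℤ) ^ m ∣ i), (i / 2 ^ m : ℤ))

/-- The index of the last perpendicular line of level `m` before position `x`: the lines of level
`m` are at the positions `2 ^ m * (2 * i + 1)`. -/
def lastCrossed (m : ℕ) (x : ℤ) : ℤ := (x - 1 - 2 ^ m) / 2 ^ (m + 1)

/-- The frame at position `x` of the line of level `m` and index `i` in the explicit
configuration. -/
@[simps]
def Frame.onLine (m : ℕ) (i x : ℤ) : Frame where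
  odd := i.bodd
  phase := ((2 * x - 1) / 2 ^ m : ℤ)
  block := blockOf m i
  crossed := blockOf m (lastCrossed m x)

/-- The label at position `x` of the line of level `m` and index `i` in the explicit configuration:
every block of the level is a copy of the beginning of the quadrant. -/
def Label.onLine {A : Type*} (D : ℕ → ℕ → A) (m : ℕ) (i x : ℤ) : Label A :=
  (Frame.onLine m i x, D (lastCrossed m x % 2 ^ m).toNat (i % 2 ^ m).toNat)

theorem blockOf_eq_true_zero_iff {m : ℕ} {i : ℤ} :
    blockOf m i = (true, 0) ↔ (2 : ℤ) ^ (m + 2) ∣ i := by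
  have pos : (0 : ℤ) < 2 ^ m := by positivity
  simp only [blockOf, Prod.mk.injEq, decide_eq_true_eq, ZMod.intCast_zmod_eq_zero_iff_dvd]
  constructor
  · rintro ⟨⟨q, rfl⟩, h⟩
    rw [Int.mul_ediv_cancel_left _ pos.ne'] at h
    exact pow_add (2 : ℤ) m 2 ▸ mul_dvd_mul_left _ h
  · rintro ⟨q, rfl⟩
    rw [pow_add, mul_assoc, Int.mul_ediv_cancel_left _ pos.ne']
    exact ⟨dvd_mul_right _ _, dvd_mul_right _ _⟩

theorem lastCrossed_two_pow_mul (m : ℕ) (z : ℤ) : lastCrossed m (2 ^ m * z) = (z - 2) / 2 := by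
  have pos : (0 : ℤ) < 2 ^ m := by positivity
  rw [lastCrossed, pow_succ, ← Int.ediv_ediv_of_nonneg pos.le,
    show 2 ^ m * z - 1 - 2 ^ m = 2 ^ m * (z - 1) - 1 by ring,
    sub_one_ediv_of_dvd pos (dvd_mul_right _ _), Int.mul_ediv_cancel_left _ pos.ne']
  congr 1
  ring

theorem lastCrossed_two_pow_mul_add_one (m : ℕ) (z : ℤ) :
    lastCrossed m (2 ^ m * z + 1) = (z - 1) / 2 := by
  rw [lastCrossed, pow_succ, show 2 ^ m * z + 1 - 1 - 2 ^ m = 2 ^ m * (z - 1) by ring,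
    Int.mul_ediv_mul_of_pos _ _ (by positivity)]

theorem not_two_pow_dvd_two_pow_mul_odd {n m : ℕ} (h : n < m) (i : ℤ) :
    ¬(2 : ℤ) ^ m ∣ 2 ^ n * (2 * i + 1) := by
  obtain ⟨t, rfl⟩ := Nat.exists_eq_add_of_lt h
  rw [add_assoc, pow_add, mul_dvd_mul_iff_left (by positivity), pow_succ]
  exact fun h => absurd ((dvd_mul_left 2 _).trans h) (by omega)

theorem lastCrossed_add_one {n m : ℕ} (h : n < m) (i : ℤ) :
    lastCrossed m (2 ^ n * (2 * i + 1) + 1) = lastCrossed m (2 ^ n * (2 * i + 1)) := by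
  obtain ⟨t, rfl⟩ := Nat.exists_eq_add_of_lt h
  have not_dvd := not_two_pow_dvd_two_pow_mul_odd (show n < n + t + 1 + 1 by omega) (i - 2 ^ t)
  rw [lastCrossed, lastCrossed, add_sub_cancel_right, sub_right_comm,
    sub_one_ediv_of_not_dvd (by positivity)]
  convert not_dvd using 2
  ring

namespace Frame

theorem phase_onLine (m : ℕ) (i z : ℤ) : (onLine m i (2 ^ m * z)).phase = (2 * z - 1 : ℤ) := by
  rw [onLine_phase, two_mul_sub_one_div_two_pow]

theorem phase_onLine_add_one (m : ℕ) (i z : ℤ) :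
    (onLine m i (2 ^ m * z + 1)).phase =
      (onLine m i (2 ^ m * z)).phase + phaseStep (decide (m = 0)) := by
  rw [phase_onLine, onLine_phase, two_mul_add_one_div_two_pow]
  cases m with
  | zero =>
    simp only [phaseStep, decide_true, cond_true]
    push_cast
    ring
  | succ m => simp [phaseStep]

theorem phase_onLine_of_next (n : ℕ) (i j : ℤ) :
    (onLine n i (2 ^ (n + 1) * (2 * j + 1))).phase = 3 := by
  have h3 : ((3 : ℤ) : ZMod 8) = 3 := rfl
  rw [show (2 : ℤ) ^ (n + 1) * (2 * j + 1) = 2 ^ n * (2 * (2 * j + 1)) by ring, phase_onLine, ← h3,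
    ZMod.intCast_eq_intCast_iff']
  omega

theorem crossed_onLine_of_next (n : ℕ) (i j : ℤ) :
    (onLine n i (2 ^ (n + 1) * (2 * j + 1))).crossed = (true, 0) ↔ (2 : ℤ) ^ (n + 1) ∣ j := by
  rw [show (2 : ℤ) ^ (n + 1) * (2 * j + 1) = 2 ^ n * (2 * (2 * j + 1)) by ring, onLine_crossed,
    lastCrossed_two_pow_mul, blockOf_eq_true_zero_iff,
    show (2 * (2 * j + 1) - 2) / 2 = 2 * j by omega, pow_succ', mul_dvd_mul_iff_left two_ne_zero]

theorem phase_onLine_at_lower (n : ℕ) (i j : ℤ) :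
    (onLine (n + 1) j (2 ^ n * (2 * i + 1))).phase = (2 * i : ℤ) ∧
      (onLine (n + 1) j (2 ^ n * (2 * i + 1) + 1)).phase = (2 * i + 1 : ℤ) := by
  have pos : (0 : ℤ) < 2 ^ n := by positivity
  have pos' : (0 : ℤ) < 2 ^ (n + 1) := by positivity
  constructor <;> rw [onLine_phase, (Int.ediv_eq_iff_of_pos pos').2 ?_] <;> constructor <;>
    rw [pow_succ] <;> nlinarith

theorem phase_onLine_of_far (n t : ℕ) (i j : ℤ) :
    (onLine n i (2 ^ (n + t + 2) * (2 * j + 1))).phase = 7 := by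
  have h7 : ((7 : ℤ) : ZMod 8) = 7 := rfl
  rw [show (2 : ℤ) ^ (n + t + 2) * (2 * j + 1) = 2 ^ n * (4 * (2 ^ t * (2 * j + 1))) by ring,
    phase_onLine, ← h7, ZMod.intCast_eq_intCast_iff']
  omega

theorem crossed_onLine_of_far (n t : ℕ) (i j : ℤ) :
    (onLine n i (2 ^ (n + t + 2) * (2 * j + 1))).crossed ≠ (true, 0) := by
  rw [show (2 : ℤ) ^ (n + t + 2) * (2 * j + 1) = 2 ^ n * (4 * (2 ^ t * (2 * j + 1))) by ring,
    onLine_crossed, lastCrossed_two_pow_mul, Ne, blockOf_eq_true_zero_iff, pow_succ]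
  exact fun h => absurd ((dvd_mul_left 2 _).trans h) (by omega)

theorem phase_onLine_at_far (n t : ℕ) (i j : ℤ) :
    (onLine (n + t + 2) j (2 ^ n * (2 * i + 1) + 1)).phase =
      (onLine (n + t + 2) j (2 ^ n * (2 * i + 1))).phase := by
  have pos : (0 : ℤ) < 2 ^ (n + t + 2) := by positivity
  have not_dvd := not_two_pow_dvd_two_pow_mul_odd (show n + 1 < n + t + 2 by omega) i
  have not_dvd_odd : ¬(2 : ℤ) ^ (n + t + 2) ∣ 2 ^ (n + 1) * (2 * i + 1) + 1 := fun h =>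
    absurd ((dvd_pow_self 2 (by omega)).trans h) (by rw [pow_succ', mul_assoc]; omega)
  rw [onLine_phase, onLine_phase,
    show 2 * (2 ^ n * (2 * i + 1) + 1) - 1 = 2 ^ (n + 1) * (2 * i + 1) + 1 by ring,
    show 2 * (2 ^ n * (2 * i + 1)) - 1 = 2 ^ (n + 1) * (2 * i + 1) - 1 by ring,
    sub_one_ediv_of_not_dvd pos not_dvd, ← sub_one_ediv_of_not_dvd pos not_dvd_odd,
    add_sub_cancel_right]

theorem meets_onLine (m : ℕ) (i j y : ℤ) :
    Meets (decide (m = 0)) (onLine m j (2 ^ m * (2 * i + 1)))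
      (onLine m j (2 ^ m * (2 * i + 1) + 1)) (onLine m i y) where
  phase_mem := by
    have h1 : ((1 : ℤ) : ZMod 8) = 1 := rfl
    have h5 : ((5 : ℤ) : ZMod 8) = 5 := rfl
    rw [phase_onLine, ← h1, ← h5, ZMod.intCast_eq_intCast_iff', ZMod.intCast_eq_intCast_iff']
    omega
  phase_eq := phase_onLine_add_one m j _
  odd_iff := by
    have h5 : ((5 : ℤ) : ZMod 8) = 5 := rfl
    rw [phase_onLine, ← h5, ZMod.intCast_eq_intCast_iff', onLine_odd]
    have bodd_eq := Int.bodd_add_div2 i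
    cases h : i.bodd <;> rw [h] at bodd_eq <;> simp only [cond_false, cond_true] at bodd_eq <;>
      simp only [Bool.false_eq_true, Nat.cast_ofNat, true_iff, false_iff] <;> omega
  number_eq := by
    have pos : (0 : ℤ) < 2 ^ m := by positivity
    rw [onLine_crossed, onLine_block, lastCrossed_two_pow_mul,
      show (2 * i + 1 - 2) / 2 = i - 1 by omega]
    by_cases h : (2 : ℤ) ^ m ∣ i
    · simp [blockOf, h, sub_one_ediv_of_dvd pos h]
    · simp [blockOf, h, sub_one_ediv_of_not_dvd pos h]
  crossed_eq := by
    rw [onLine_crossed, onLine_block, lastCrossed_two_pow_mul_add_one,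
      show (2 * i + 1 - 1) / 2 = i by omega]

end Frame

namespace Label

variable {A : Type*} {C : Rule A} {E N : ℕ → ℕ → A}

theorem peers_onLine (h : ∀ k l, C.HoldsAt E N k l) (m : ℕ) (i j : ℤ) :
    Peers C (decide (m = 0)) (decide (m = 0))
      (onLine E m j (2 ^ m * (2 * i + 1))) (onLine (Function.swap N) m i (2 ^ m * (2 * j + 1)))
      (onLine E m j (2 ^ m * (2 * i + 1) + 1))
      (onLine (Function.swap N) m i (2 ^ m * (2 * j + 1) + 1)) where
  row := Frame.meets_onLine m i j _
  col := Frame.meets_onLine m j i _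
  rule := by
    have pos : (0 : ℤ) < 2 ^ m := by positivity
    have before (z : ℤ) : lastCrossed m (2 ^ m * (2 * z + 1)) = z - 1 := by
      rw [lastCrossed_two_pow_mul]; omega
    have after (z : ℤ) : lastCrossed m (2 ^ m * (2 * z + 1) + 1) = z := by
      rw [lastCrossed_two_pow_mul_add_one]; omega
    have := h (i % 2 ^ m).toNat (j % 2 ^ m).toNat
    rw [Rule.HoldsAt, ← cond_dvd_eq_fromBoundary _ i pos,
      ← cond_dvd_eq_fromBoundary _ j pos] at this
    simpa only [onLine, Frame.onLine_block, blockOf, before, after, Function.swap] using this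

theorem under_onLine (D D' : ℕ → ℕ → A) {n m : ℕ} (h : n < m) (i j : ℤ) :
    Under (decide (n = 0)) (onLine D m j (2 ^ n * (2 * i + 1)))
      (onLine D' n i (2 ^ m * (2 * j + 1)))
      (onLine D m j (2 ^ n * (2 * i + 1) + 1)) (onLine D' n i (2 ^ m * (2 * j + 1) + 1)) := by
  obtain ⟨t, rfl⟩ := Nat.exists_eq_add_of_lt h
  have even : (2 : ℤ) ^ (n + t + 1) * (2 * j + 1) = 2 ^ n * (2 * (2 ^ t * (2 * j + 1))) := by ring
  have col_last : lastCrossed n (2 ^ (n + t + 1) * (2 * j + 1) + 1) =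
      lastCrossed n (2 ^ (n + t + 1) * (2 * j + 1)) := by
    rw [even, lastCrossed_two_pow_mul_add_one, lastCrossed_two_pow_mul]
    omega
  refine ⟨?_, ?_, ?_, ?_, ?_, ?_⟩
  · simp only [onLine, even, Frame.phase_onLine_add_one]
  · cases t with
    | zero =>
      obtain ⟨before, after⟩ := Frame.phase_onLine_at_lower n i j
      refine .inl ⟨Frame.phase_onLine_of_next n i j, ?_, ?_, ?_⟩
      · rw [onLine, before, ← Int.cast_ofNat, ← Int.cast_mul, ZMod.intCast_zmod_eq_zero_iff_dvd]
        omega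
      · rw [onLine, onLine, after, before, Int.cast_add, Int.cast_one]
      · exact decide_eq_true_iff.trans (Frame.crossed_onLine_of_next n i j).symm
    | succ t => exact .inr ⟨Frame.phase_onLine_of_far n t i j, Frame.phase_onLine_at_far n t i j,
        Frame.crossed_onLine_of_far n t i j⟩
  all_goals simp only [onLine, Frame.onLine_crossed, lastCrossed_add_one h, col_last]

theorem Under.not_peers {C' : Rule A} {ox ox' oy' : Bool} {w s e n : Label A}
    (h : Under ox w s e n) : ¬Peers C' ox' oy' w s e n := fun hp => by
  rcases hp.col.phase_mem with h1 | h1 <;> rcases h.next_or with ⟨h2, -⟩ | ⟨h2, -⟩ <;>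
    exact absurd (h1.symm.trans h2) (by decide)

theorem cell_onLine (h : ∀ k l, C.HoldsAt E N k l) (n m : ℕ) (i j : ℤ) :
    Cell C (2 ^ n * (2 * i + 1)).bodd (2 ^ m * (2 * j + 1)).bodd
      (onLine E m j (2 ^ n * (2 * i + 1))) (onLine (Function.swap N) n i (2 ^ m * (2 * j + 1)))
      (onLine E m j (2 ^ n * (2 * i + 1) + 1))
      (onLine (Function.swap N) n i (2 ^ m * (2 * j + 1) + 1)) := by
  rw [bodd_two_pow_mul_odd, bodd_two_pow_mul_odd]
  rcases lt_trichotomy n m with hlt | rfl | hgt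
  · have under := under_onLine E (Function.swap N) hlt i j
    exact ⟨⟨rfl, rfl⟩, ⟨rfl, rfl⟩, .inr (.inl ⟨under, decide_eq_false (by omega)⟩),
      fun hp => absurd hp under.not_peers⟩
  · exact ⟨⟨rfl, rfl⟩, ⟨rfl, rfl⟩, .inl (peers_onLine h n i j), fun _ => rfl⟩
  · have under := under_onLine (Function.swap N) E hgt j i
    exact ⟨⟨rfl, rfl⟩, ⟨rfl, rfl⟩, .inr (.inr ⟨under, decide_eq_false (by omega)⟩),
      fun hp => absurd hp.transpose under.not_peers⟩

end Label

instance : Finite Frame :=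
  Finite.of_injective (fun f : Frame => (f.odd, f.phase, f.block, f.crossed))
    fun ⟨_, _, _, _⟩ ⟨_, _, _, _⟩ h => by simpa using h

/-- The explicit configuration, seen from the origin `(a, a)`, where the line at position `x` has
level `(p x).1` and index `(p x).2`. -/
@[simps]
def Config.explicit {A : Type*} (E N : ℕ → ℕ → A) (p : ℤ → ℕ × ℤ) (a : ℤ) : Config (Label A) where
  row x y := .onLine E (p (y + a)).1 (p (y + a)).2 (x + a)
  col x y := .onLine (Function.swap N) (p (x + a)).1 (p (x + a)).2 (y + a)

theorem Config.cell_explicit {A : Type*} {C : Rule A} {E N : ℕ → ℕ → A}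
    (h : ∀ k l, C.HoldsAt E N k l) {p : ℤ → ℕ × ℤ}
    (hp : ∀ x ≠ 0, x = 2 ^ (p x).1 * (2 * (p x).2 + 1)) {a x y : ℤ} (ha : a.bodd = false)
    (hx : x + a ≠ 0) (hy : y + a ≠ 0) :
    let c := explicit E N p a
    Label.Cell C x.bodd y.bodd (c.row x y) (c.col x y) (c.row (x + 1) y) (c.col x (y + 1)) := by
  have := Label.cell_onLine h (p (x + a)).1 (p (y + a)).1 (p (x + a)).2 (p (y + a)).2
  rw [← hp _ hx, ← hp _ hy] at this
  simpa [ha, Int.bodd_add, add_right_comm] using this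

theorem Frame.block_onLine_of_odd {m : ℕ} {i : ℤ} (h : (2 ^ m * (2 * i + 1)).bodd = true) (x : ℤ) :
    (onLine m i x).block.1 = true := by
  rw [bodd_two_pow_mul_odd, decide_eq_true_iff] at h
  simp [blockOf, h]

open Filter in
theorem Rule.TilesQuadrant.exists_isHierarchical {A : Type*} {C : Rule A} {S : Set A}
    (h : C.TilesQuadrant S) (hS : S.Finite) : ∃ c : Config (Label A), IsHierarchical C c ∧
      IsHierarchical.DataIn S c ∧ IsHierarchical.OddLinesFirst c := by
  obtain ⟨E, N, hEN⟩ := h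
  choose! p hp using exists_eq_two_pow_mul_odd
  let U : Ultrafilter ℕ := hyperfilter ℕ
  let c (n : ℕ) : Config (Label A) := .explicit E N p (2 ^ (n + 1))
  have finite_labels : {l : Label A | l.2 ∈ S}.Finite :=
    ((Set.finite_univ (α := Frame)).prod hS).subset fun _ hl => ⟨trivial, hl⟩
  obtain ⟨row, hrow⟩ := exists_eventually_eq U finite_labels
    (fun n (q : ℤ × ℤ) => (c n).row q.1 q.2) fun n q => (hEN _ _).1
  obtain ⟨col, hcol⟩ := exists_eventually_eq U finite_labels
    (fun n (q : ℤ × ℤ) => (c n).col q.1 q.2) fun n q => (hEN _ _).2.1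
  have ne_zero (x : ℤ) : ∀ᶠ n in U, x + 2 ^ (n + 1) ≠ 0 := by
    refine ((eventually_ge_atTop x.natAbs).filter_mono Nat.hyperfilter_le_atTop).mono fun n hn => ?_
    have : ((n + 1 : ℕ) : ℤ) < (2 ^ (n + 1) : ℕ) := Int.ofNat_lt.2 Nat.lt_two_pow_self
    push_cast at this
    omega
  have bodd_shift (n : ℕ) : (2 ^ (n + 1) : ℤ).bodd = false := by
    simp [pow_succ, Int.bodd_mul, Int.bodd_two]
  refine ⟨⟨fun x y => row (x, y), fun x y => col (x, y)⟩, fun x y => ?_,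
    fun x y => ⟨(hrow _).1, (hcol _).1⟩, fun i y => ?_⟩
  · obtain ⟨n, hw, he, hs, hn, hx, hy⟩ := ((hrow (x, y)).2.and <| (hrow (x + 1, y)).2.and <|
      (hcol (x, y)).2.and <| (hcol (x, y + 1)).2.and <| (ne_zero x).and (ne_zero y)).exists
    simp only [← hw, ← he, ← hs, ← hn]
    exact Config.cell_explicit (fun k l => (hEN k l).2.2) hp (bodd_shift n) hx hy
  · obtain ⟨n, hc, hr, hi⟩ := ((hcol (2 * i + 1, y)).2.and <| (hrow (y, 2 * i + 1)).2.and <|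
      ne_zero (2 * i + 1)).exists
    have odd : (2 * i + 1 + 2 ^ (n + 1)).bodd = true := by
      simp [Int.bodd_add, Int.bodd_mul, Int.bodd_two, bodd_shift]
    rw [hp _ hi] at odd
    simp only [← hc, ← hr]
    exact ⟨Frame.block_onLine_of_odd odd _, Frame.block_onLine_of_odd odd _⟩

/-! ### Turing machines on a quadrant -/

section Machines

open Turing PartrecToTM2

theorem not_dom_eval_iff_exists_run {σ : Type*} (f : σ → Option σ) (a : σ) :
    ¬ (StateTransition.eval f a).Dom ↔
      ∃ run : ℕ → σ, run 0 = a ∧ ∀ n, f (run n) = some (run (n + 1)) := by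
  rw [Part.dom_iff_mem]
  simp only [StateTransition.mem_eval]
  constructor
  · intro h
    have hsome : ∀ b, StateTransition.Reaches f a b → ∃ c, f b = some c := fun b hb =>
      Option.ne_none_iff_exists'.1 fun hn => h ⟨b, hb, hn⟩
    choose! g hg using hsome
    have hreach (n : ℕ) : StateTransition.Reaches f a (g^[n] a) := by
      induction n with
      | zero => exact .refl
      | succ n ih => rw [Function.iterate_succ_apply']; exact ih.tail (hg _ ih)
    refine ⟨fun n => g^[n] a, rfl, fun n => ?_⟩
    simpa only [Function.iterate_succ_apply'] using hg _ (hreach n)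
  · rintro ⟨run, h0, hrun⟩ ⟨b, hb, hn⟩
    obtain ⟨n, rfl⟩ : ∃ n, run n = b := by
      clear hn
      induction hb with
      | refl => exact ⟨0, h0⟩
      | tail _ h ih =>
        obtain ⟨n, rfl⟩ := ih
        exact ⟨n + 1, Option.some_injective _ ((hrun n).symm.trans h)⟩
    simp [hrun n] at hn

theorem exists_finite_machine_of_supports {Γ Λ : Type} [Inhabited Γ] [Inhabited Λ]
    (M : TM0.Machine Γ Λ) {S : Set Λ} (hS : S.Finite) (hM : TM0.Supports M S) :
    ∃ (Λ' : Type) (_ : Finite Λ') (_ : Inhabited Λ') (M' : TM0.Machine Γ Λ'),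
      ∀ l, (TM0.eval M' l).Dom ↔ (TM0.eval M l).Dom := by
  classical
  let _ : Inhabited S := ⟨⟨default, hM.1⟩⟩
  let toS : PointedMap Λ S :=
    ⟨fun q => if h : q ∈ S then ⟨q, h⟩ else default, dif_pos hM.1⟩
  let idΓ : PointedMap Γ Γ := ⟨id, rfl⟩
  refine ⟨S, hS, inferInstance, M.map idΓ idΓ toS Subtype.val, fun l => ?_⟩
  have hinit := TM0.map_init idΓ toS l
  rw [show l.map idΓ = l from List.map_id l] at hinit
  exact StateTransition.tr_eval_dom
    (TM0.Machine.map_respects M idΓ idΓ toS Subtype.val hM (fun _ => rfl)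
      fun q hq => by simp [toS, hq])
    ⟨hM.1, hinit⟩

instance : Finite K' :=
  Finite.of_surjective ![.main, .rev, .aux, .stack] fun k => by
    cases k
    exacts [⟨0, rfl⟩, ⟨1, rfl⟩, ⟨2, rfl⟩, ⟨3, rfl⟩]

/-- The tape alphabet of the machines simulating partial recursive functions. -/
abbrev TapeSymbol : Type := TM2to1.Γ' K' fun _ => PartrecToTM2.Γ'

instance : Finite TapeSymbol :=
  inferInstanceAs (Finite (Bool × (K' → Option PartrecToTM2.Γ')))

/-- The initial tape for the argument `n`. -/
def inputTape (n : ℕ) : List TapeSymbol :=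
  TM2to1.trInit (Γ := fun _ => PartrecToTM2.Γ') K'.main (trList [n])

theorem exists_machine_of_code (c : ToPartrec.Code) :
    ∃ (Λ : Type) (_ : Finite Λ) (_ : Inhabited Λ) (M : TM0.Machine TapeSymbol Λ),
      ∀ n, (TM0.eval M (inputTape n)).Dom ↔ (c.eval [n]).Dom := by
  let _ : Inhabited PartrecToTM2.Λ' := ⟨trNormal c Cont'.halt⟩
  have hsupp := TM1to0.tr_supports _ (TM2to1.tr_supports _ (tr_supports c Cont'.halt))
  obtain ⟨Λ, hΛ, hΛ', M, hM⟩ := exists_finite_machine_of_supports _ (Finset.finite_toSet _) hsupp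
  have hinit (n : ℕ) : init c [n] = TM2.init K'.main (trList [n]) := by
    unfold init TM2.init
    congr 1
    funext k
    cases k <;> rfl
  refine ⟨Λ, hΛ, hΛ', M, fun n => ?_⟩
  rw [hM, TM1to0.tr_eval]
  refine (TM2to1.tr_eval_dom PartrecToTM2.tr K'.main (trList [n])).trans ?_
  change (StateTransition.eval _ (TM2.init (Γ := fun _ => PartrecToTM2.Γ') K'.main _)).Dom ↔ _
  rw [← hinit, PartrecToTM2.tr_eval]
  rfl

theorem trPosNum_eq (p : PosNum) :
    trPosNum p = (p : ℕ).bits.map (fun b => cond b Γ'.bit1 Γ'.bit0) := by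
  induction p with
  | one => simp [trPosNum]
  | bit1 p ih =>
    have h : ((p.bit1 : PosNum) : ℕ) = Nat.bit true p := by
      rw [PosNum.cast_bit1, Nat.bit_true_apply, two_mul]
    rw [h, Nat.bits_append_bit _ _ (by simp), List.map_cons, ← ih]
    rfl
  | bit0 p ih =>
    have h : ((p.bit0 : PosNum) : ℕ) = Nat.bit false p := by
      rw [PosNum.cast_bit0, Nat.bit_false_apply, two_mul]
    rw [h, Nat.bits_append_bit _ _ (fun h => absurd h (PosNum.cast_pos (α := ℕ) p).ne'),
      List.map_cons, ← ih]
    rfl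

theorem trNat_eq (n : ℕ) : trNat n = n.bits.map (fun b => cond b Γ'.bit1 Γ'.bit0) := by
  have h (m : Num) : trNum m = (m : ℕ).bits.map (fun b => cond b Γ'.bit1 Γ'.bit0) := by
    rcases m with _ | p
    · simp [trNum]
    · exact trPosNum_eq p
  have hn := h n
  rwa [Num.to_of_nat] at hn

theorem primrec_bits : Primrec Nat.bits := by
  refine Primrec.nat_omega_rec' Nat.bits (m := id) (l := fun n => if n = 0 then [] else [n.div2])
    (g := fun n L => some (if n = 0 then [] else n.bodd :: L.headI)) .id ?_ ?_ ?_ ?_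
  · exact Primrec.ite (Primrec.eq.comp .id (.const 0)) (.const [])
      (Primrec.list_cons.comp Primrec.nat_div2 (.const []))
  · exact Primrec.option_some.comp (Primrec.ite (Primrec.eq.comp .fst (.const 0)) (.const [])
      (Primrec.list_cons.comp (Primrec.nat_bodd.comp .fst) (Primrec.list_headI.comp .snd)))
  · intro n m hm
    split_ifs at hm with h0
    · simp at hm
    · rw [List.mem_singleton.1 hm, Nat.div2_val]
      exact Nat.div_lt_self (Nat.pos_of_ne_zero h0) one_lt_two
  · intro n
    rcases eq_or_ne n 0 with rfl | h0
    · simp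
    · have hbit : n.div2 = 0 → n.bodd = true := fun h => by
        by_contra hb
        exact h0 (by rw [← Nat.bit_bodd_div2 n, h, Bool.eq_false_of_not_eq_true hb]; rfl)
      conv_rhs => rw [← Nat.bit_bodd_div2 n, Nat.bits_append_bit _ _ hbit]
      simp [h0]

/-- The tape symbol with the letter `a` on the main stack and nothing on the other stacks; `bottom`
marks the bottom of the stacks. -/
def mainSymbol (bottom : Bool) (a : PartrecToTM2.Γ') : TapeSymbol :=
  (bottom, Function.update (fun _ => none) K'.main (some a))

theorem inputTape_eq (n : ℕ) : inputTape n = mainSymbol true .cons ::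
    n.bits.reverse.map (fun b => mainSymbol false (cond b .bit1 .bit0)) := by
  have h : trList [n] = n.bits.map (fun b => cond b .bit1 .bit0) ++ [.cons] := by
    simp only [trList, trNat_eq]
  rw [inputTape, h, TM2to1.trInit, List.reverse_append, ← List.map_reverse]
  simp only [List.reverse_singleton, List.singleton_append]
  change _ :: List.map (mainSymbol false) (List.map _ _) = _
  rw [List.map_map]
  rfl

theorem primrec_inputTape [Primcodable TapeSymbol] : Primrec inputTape := by
  have hsymbol : Primrec fun b : Bool => mainSymbol false (cond b .bit1 .bit0) :=
    Primrec.dom_finite _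
  exact (Primrec.list_cons.comp (.const _) (Primrec.list_map
    (Primrec.list_reverse.comp primrec_bits) (hsymbol.comp .snd).to₂)).of_eq
      fun n => (inputTape_eq n).symm

theorem exists_code_dom_iff {β : Type*} [Primcodable β] {f : β → ℕ → Bool}
    (hf : Computable₂ f) :
    ∃ c : ToPartrec.Code, ∀ b, (c.eval [Encodable.encode b]).Dom ↔ ∃ n, f b n = false := by
  let F : ℕ →. ℕ := fun m => (Part.ofOption (Encodable.decode (α := β) m)).bind fun b =>
    Nat.rfind fun n => Part.some (!f b n)
  have hF : Partrec F := by
    have h : Computable₂ fun (p : ℕ × β) (n : ℕ) => !f p.2 n :=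
      Primrec.not.to_comp.comp (hf.comp (Computable.snd.comp .fst) .snd)
    exact Partrec.bind (Computable.ofOption Computable.decode) (Partrec.rfind h.partrec₂)
  obtain ⟨c, hc⟩ := ToPartrec.Code.exists_code (Nat.Partrec'.part_iff₁.2 hF)
  refine ⟨c, fun b => ?_⟩
  have hdom : (c.eval [Encodable.encode b]).Dom ↔ (F (Encodable.encode b)).Dom :=
    iff_of_eq (congrArg Part.Dom (hc ⟨[Encodable.encode b], rfl⟩))
  rw [hdom]
  simp only [F, Encodable.encodek, Part.coe_some, Part.bind_some]
  refine Nat.rfind_dom.trans ⟨?_, ?_⟩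
  · rintro ⟨n, h, -⟩
    exact ⟨n, by simpa [Part.mem_some_iff] using h⟩
  · rintro ⟨n, h⟩
    exact ⟨n, by simp [Part.mem_some_iff, h], fun _ => trivial⟩

theorem exists_machine_of_forall_eq_true {β : Type*} [Primcodable β] {B : β → Prop}
    {f : β → ℕ → Bool} (hf : Computable₂ f) (hB : ∀ b, B b ↔ ∀ n, f b n = true) :
    ∃ (Λ : Type) (_ : Finite Λ) (_ : Inhabited Λ) (M : TM0.Machine TapeSymbol Λ),
      ∀ b, B b ↔ ¬ (TM0.eval M (inputTape (Encodable.encode b))).Dom := by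
  obtain ⟨c, hc⟩ := exists_code_dom_iff hf
  obtain ⟨Λ, hΛ, hΛ', M, hM⟩ := exists_machine_of_code c
  exact ⟨Λ, hΛ, hΛ', M, fun b => by rw [hM, hc, hB]; simp⟩

end Machines

section Simulation

open Turing

variable {Λ Γ : Type*} [Inhabited Λ] [Inhabited Γ]

/-- The cell of a two-sided tape folded at the head: the state of the machine and the symbols at the
positions `k` and `-k`. -/
@[ext]
structure FoldedCell (Λ Γ : Type*) where
  state : Λ
  pos : Γ
  neg : Γ

instance [Finite Λ] [Finite Γ] : Finite (FoldedCell Λ Γ) :=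
  Finite.of_injective (fun c => (c.state, c.pos, c.neg)) fun c d h => by
    simp only [Prod.mk.injEq] at h
    exact FoldedCell.ext h.1 h.2.1 h.2.2

/-- The `k`-th cell of the folded tape of a configuration. -/
@[simps]
def foldCfg (c : TM0.Cfg Γ Λ) (k : ℕ) : FoldedCell Λ Γ := ⟨c.q, c.Tape.nth k, c.Tape.nth (-k)⟩

/-- A cell of the folded tape after the statement `a.2` and the passage to the state `a.1`, in terms
of its western neighbour, itself and its eastern neighbour. -/
def FoldedCell.next (a : Λ × TM0.Stmt Γ) (w : Option (FoldedCell Λ Γ)) (c e : FoldedCell Λ Γ) :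
    FoldedCell Λ Γ :=
  match a.2 with
  | .move .right => ⟨a.1, e.pos, w.elim e.pos neg⟩
  | .move .left => ⟨a.1, w.elim e.neg pos, e.neg⟩
  | .write s => w.elim ⟨a.1, s, s⟩ fun _ => ⟨a.1, c.pos, c.neg⟩

theorem foldCfg_of_step {M : TM0.Machine Γ Λ} {c c' : TM0.Cfg Γ Λ} {a : Λ × TM0.Stmt Γ}
    (ha : M c.q (c.Tape.nth 0) = some a) (hc : TM0.step M c = some c') (k : ℕ) :
    foldCfg c' k =
      .next a (Rule.fromBoundary (foldCfg c) k) (foldCfg c k) (foldCfg c (k + 1)) := by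
  obtain ⟨q, T⟩ := c
  obtain ⟨q', s⟩ := a
  rw [Tape.nth_zero] at ha
  simp only [TM0.step, ha, Option.map_some, Option.some.injEq] at hc
  subst hc
  rcases k with _ | k
  · rcases s with (_ | _) | s <;>
      simp [FoldedCell.next, foldCfg, Rule.fromBoundary, -Tape.nth_zero, Tape.write_nth]
  · rcases s with (_ | _) | s <;>
      simp only [FoldedCell.next, foldCfg, Rule.fromBoundary, Option.elim_some, Tape.write_nth,
        Tape.move_left_nth, Tape.move_right_nth] <;>
      grind

/-- The symbol on the eastern edge of the place `(k, n)` in the space-time diagram of a machine: the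
`k`-th cell of the folded tape at time `n`, its eastern neighbour, and the symbol under the head.
Northern edges carry the cell only, that is the other two entries are irrelevant there. -/
@[ext]
structure SpaceTimeSymbol (Λ Γ : Type*) where
  cell : FoldedCell Λ Γ
  nextCell : FoldedCell Λ Γ
  head : Γ

instance [Finite Λ] [Finite Γ] : Finite (SpaceTimeSymbol Λ Γ) :=
  Finite.of_injective (fun s => (s.cell, s.nextCell, s.head)) fun s t h => by
    simp only [Prod.mk.injEq] at h
    exact SpaceTimeSymbol.ext h.1 h.2.1 h.2.2

namespace SpaceTimeSymbol

/-- The cell of the folded tape at a place, read off the southern edge or, at time `0`, given by the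
input symbol `γ`. -/
def cellAt (γ : Γ) (w s : Option (SpaceTimeSymbol Λ Γ)) : FoldedCell Λ Γ :=
  s.elim ⟨default, γ, w.elim γ fun _ => default⟩ cell

/-- The rule of the space-time diagrams of `M`, where `γ` is the input symbol of the column. -/
structure Follows (M : TM0.Machine Γ Λ) (γ : Γ) (w s : Option (SpaceTimeSymbol Λ Γ))
    (e n : SpaceTimeSymbol Λ Γ) : Prop where
  cell_eq : e.cell = cellAt γ w s
  nextCell_eq : ∀ t ∈ w, t.nextCell = e.cell
  head_eq : e.head = w.elim e.cell.pos head
  north_eq : ∃ a, M e.cell.state e.head = some a ∧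
    n.cell = .next a (w.map cell) e.cell e.nextCell

end SpaceTimeSymbol

/-- The rule of the space-time diagrams of `M` started on the input `l`. The eastern edge of the
column `k` carries the number `min (k + 1) l.length`, which gives access to the input. -/
def spaceTimeRule (M : TM0.Machine Γ Λ) (l : List Γ) : Rule (SpaceTimeSymbol Λ Γ × ℕ) :=
  fun w s e n =>
    SpaceTimeSymbol.Follows M (l.getI (w.elim 0 Prod.snd)) (w.map Prod.fst) (s.map Prod.fst)
      e.1 n.1 ∧ e.2 = min (w.elim 0 Prod.snd + 1) l.length

theorem getI_min_length (l : List Γ) (k : ℕ) : l.getI (min k l.length) = l.getI k := by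
  rcases le_total k l.length with h | h
  · rw [min_eq_left h]
  · rw [min_eq_right h, List.getI_eq_default _ le_rfl, List.getI_eq_default _ h]

theorem map_fromBoundary {A B : Type*} (g : A → B) (f : ℕ → A) (k : ℕ) :
    (Rule.fromBoundary f k).map g = Rule.fromBoundary (fun i => g (f i)) k := by
  cases k <;> rfl

theorem getI_elim_fromBoundary {A : Type*} {f : ℕ → A × ℕ} {l : List Γ}
    (hf : ∀ k, (f k).2 = min (k + 1) l.length) (k : ℕ) :
    l.getI ((Rule.fromBoundary f k).elim 0 Prod.snd) = l.getI k := by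
  cases k with
  | zero => rfl
  | succ k => exact (congrArg l.getI (hf k)).trans (getI_min_length l _)

theorem foldCfg_init (l : List Γ) (k : ℕ) :
    foldCfg (TM0.init l : TM0.Cfg Γ Λ) k =
      ⟨default, l.getI k, if k = 0 then l.getI k else default⟩ := by
  have hnth (i : ℕ) : (Tape.mk₁ l).nth i = l.getI i :=
    (Tape.mk'_nth_nat _ _ i).trans (ListBlank.nth_mk l i)
  rcases k with _ | k
  · exact FoldedCell.ext rfl (hnth 0) (hnth 0)
  · refine FoldedCell.ext rfl (hnth (k + 1)) ?_
    change (ListBlank.mk []).nth k = _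
    simp [ListBlank.nth_mk]

theorem exists_step_of_follows {M : TM0.Machine Γ Λ} {c : TM0.Cfg Γ Λ} {γ : ℕ → Γ}
    {s : ℕ → Option (SpaceTimeSymbol Λ Γ)} {e n : ℕ → SpaceTimeSymbol Λ Γ}
    (h : ∀ k, SpaceTimeSymbol.Follows M (γ k) (Rule.fromBoundary e k) (s k) (e k) (n k))
    (hc : ∀ k, (e k).cell = foldCfg c k) :
    ∃ c', TM0.step M c = some c' ∧ ∀ k, (n k).cell = foldCfg c' k := by
  have hhead (k : ℕ) : (e k).head = c.Tape.nth 0 := by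
    induction k with
    | zero => rw [(h 0).head_eq, hc]; rfl
    | succ k ih => rw [(h (k + 1)).head_eq, ← ih]; rfl
  have hnext (k : ℕ) : (e k).nextCell = foldCfg c (k + 1) :=
    ((h (k + 1)).nextCell_eq _ rfl).trans (hc _)
  have hnorth (k : ℕ) : ∃ a, M c.q (c.Tape.nth 0) = some a ∧ (n k).cell =
      .next a (Rule.fromBoundary (foldCfg c) k) (foldCfg c k) (foldCfg c (k + 1)) := by
    simpa only [hc, hhead, hnext, map_fromBoundary, foldCfg_state] using (h k).north_eq
  obtain ⟨a, ha, -⟩ := hnorth 0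
  obtain ⟨c', hc'⟩ : ∃ c', TM0.step M c = some c' := by
    rw [Tape.nth_zero] at ha
    exact ⟨_, by rw [TM0.step, ha]; rfl⟩
  refine ⟨c', hc', fun k => ?_⟩
  obtain ⟨b, hb, hn⟩ := hnorth k
  rw [hn, foldCfg_of_step hb hc']

theorem follows_of_step {M : TM0.Machine Γ Λ} {c c' : TM0.Cfg Γ Λ}
    (h : TM0.step M c = some c') {γ : Γ} {k : ℕ} {s : Option (SpaceTimeSymbol Λ Γ)} {γ' : Γ}
    (hs : SpaceTimeSymbol.cellAt γ (Rule.fromBoundary (fun i =>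
      (⟨foldCfg c i, foldCfg c (i + 1), c.Tape.nth 0⟩ : SpaceTimeSymbol Λ Γ)) k) s =
        foldCfg c k) :
    SpaceTimeSymbol.Follows M γ (Rule.fromBoundary (fun i =>
      ⟨foldCfg c i, foldCfg c (i + 1), c.Tape.nth 0⟩) k) s
      ⟨foldCfg c k, foldCfg c (k + 1), c.Tape.nth 0⟩
      ⟨foldCfg c' k, foldCfg c' k, γ'⟩ := by
  obtain ⟨a, ha⟩ : ∃ a, M c.q (c.Tape.nth 0) = some a := by
    rw [Tape.nth_zero]
    exact Option.ne_none_iff_exists'.1 fun hn => by simp [TM0.step, hn] at h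
  refine ⟨hs.symm, ?_, ?_, a, ha, ?_⟩
  · cases k with
    | zero => exact fun t ht => nomatch ht
    | succ k => rintro t ⟨⟩; rfl
  · cases k <;> rfl
  · rw [map_fromBoundary]
    exact foldCfg_of_step ha h k

variable {M : TM0.Machine Γ Λ} {l : List Γ}

theorem tilesQuadrant_spaceTimeRule {run : ℕ → TM0.Cfg Γ Λ} (h0 : run 0 = TM0.init l)
    (hrun : ∀ n, TM0.step M (run n) = some (run (n + 1))) :
    (spaceTimeRule M l).TilesQuadrant {a | a.2 ≤ l.length} := by
  refine ⟨fun k n => (⟨foldCfg (run n) k, foldCfg (run n) (k + 1), (run n).Tape.nth 0⟩,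
      min (k + 1) l.length),
    fun k n => (⟨foldCfg (run (n + 1)) k, foldCfg (run (n + 1)) k, default⟩, 0),
    fun k n => ⟨min_le_right (k + 1) l.length, Nat.zero_le _, ?_, ?_⟩⟩
  · dsimp only
    rw [getI_elim_fromBoundary fun _ => rfl, map_fromBoundary, map_fromBoundary]
    refine follows_of_step (hrun n) ?_
    cases n with
    | zero =>
      rw [h0, foldCfg_init]
      cases k <;> rfl
    | succ n => rfl
  · cases k with
    | zero => rfl
    | succ k => simp only [Rule.fromBoundary, Option.elim_some]; omega

theorem exists_run_of_tilesQuadrant {S : Set (SpaceTimeSymbol Λ Γ × ℕ)}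
    (h : (spaceTimeRule M l).TilesQuadrant S) :
    ∃ run : ℕ → TM0.Cfg Γ Λ, run 0 = TM0.init l ∧
      ∀ n, TM0.step M (run n) = some (run (n + 1)) := by
  obtain ⟨E, N, hEN⟩ := h
  have hindex (n k : ℕ) : (E k n).2 = min (k + 1) l.length := by
    induction k with
    | zero => exact (hEN 0 n).2.2.2
    | succ k ih =>
      have hk := (hEN (k + 1) n).2.2.2
      simp only [Rule.fromBoundary, Option.elim_some, ih] at hk
      omega
  have hfollows (n k : ℕ) := (hEN k n).2.2.1
  simp only [getI_elim_fromBoundary (hindex _), map_fromBoundary] at hfollows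
  let run : ℕ → TM0.Cfg Γ Λ := Nat.rec (TM0.init l) fun _ c => (TM0.step M c).getD c
  have hstep (n : ℕ) (hc : ∀ k, (E k n).1.cell = foldCfg (run n) k) :
      TM0.step M (run n) = some (run (n + 1)) ∧
        ∀ k, (N k n).1.cell = foldCfg (run (n + 1)) k := by
    obtain ⟨c', hc', hN⟩ := exists_step_of_follows (hfollows n) hc
    have hrun : run (n + 1) = c' := by simp only [run, hc', Option.getD_some]
    exact hrun ▸ ⟨hc', hN⟩
  have hcell (n : ℕ) : ∀ k, (E k n).1.cell = foldCfg (run n) k := by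
    induction n with
    | zero =>
      intro k
      refine (hfollows 0 k).cell_eq.trans (Eq.trans ?_ (foldCfg_init l k).symm)
      cases k <;> rfl
    | succ n ih => exact fun k => (hfollows (n + 1) k).cell_eq.trans ((hstep n ih).2 k)
  exact ⟨run, rfl, fun n => (hstep n (hcell n)).1⟩

theorem tilesQuadrant_spaceTimeRule_iff :
    (spaceTimeRule M l).TilesQuadrant {a | a.2 ≤ l.length} ↔ ¬ (TM0.eval M l).Dom := by
  refine Iff.trans ⟨exists_run_of_tilesQuadrant, ?_⟩ (not_dom_eval_iff_exists_run _ _).symm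
  rintro ⟨run, h0, hrun⟩
  exact tilesQuadrant_spaceTimeRule h0 hrun

end Simulation

/-! ### Wang tiles -/

section Primrec

/-- Some primitive recursive coding of a finite type. -/
@[reducible]
def primcodableOfFinite (α : Type*) [Finite α] : Primcodable α :=
  Primcodable.ofEquiv (Fin (Nat.card α)) (Finite.equivFin α)

instance : Primcodable Frame := primcodableOfFinite Frame

theorem primrecPred_of_finite {α : Type*} [Primcodable α] [Finite α] (p : α → Prop) :
    PrimrecPred p := by
  classical
  exact Primrec.primrecPred (Primrec.dom_finite _)

theorem primrec_product {α β : Type*} [Primcodable α] [Primcodable β] :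
    Primrec₂ fun (l : List α) (m : List β) => l ×ˢ m :=
  Primrec.list_flatMap .fst (Primrec.list_map (Primrec.snd.comp .fst)
    ((Primrec.snd.comp .fst).pair .snd))

variable {α A : Type*} [Primcodable α] [Primcodable A] {C : α → Rule A} {ox oy : α → Bool}
  {w s e n : α → Label A}

theorem primrecPred_under (hox : Primrec ox) (hw : Primrec w) (hs : Primrec s) (he : Primrec e)
    (hn : Primrec n) : PrimrecPred fun a => Label.Under (ox a) (w a) (s a) (e a) (n a) := by
  let p (t : Bool × Frame × Frame × Frame × Frame) : Prop :=
    Label.Under (A := Unit) t.1 (t.2.1, ()) (t.2.2.1, ()) (t.2.2.2.1, ()) (t.2.2.2.2, ())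
  have hp : PrimrecPred fun a => p (ox a, (w a).1, (s a).1, (e a).1, (n a).1) :=
    (primrecPred_of_finite p).comp (hox.pair ((Primrec.fst.comp hw).pair
      ((Primrec.fst.comp hs).pair ((Primrec.fst.comp he).pair (Primrec.fst.comp hn)))))
  have hrow : PrimrecPred fun a => (e a).2 = (w a).2 :=
    Primrec.eq.comp (Primrec.snd.comp he) (Primrec.snd.comp hw)
  have hcol : PrimrecPred fun a => (n a).2 = (s a).2 :=
    Primrec.eq.comp (Primrec.snd.comp hn) (Primrec.snd.comp hs)
  exact (hp.and (hrow.and hcol)).of_eq fun a =>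
    ⟨fun ⟨h, hr, hc⟩ => ⟨h.1, h.2, h.3, h.4, hr, hc⟩,
      fun h => ⟨⟨h.1, h.2, h.3, h.4, rfl, rfl⟩, h.5, h.6⟩⟩

theorem primrecPred_peers
    (hC : PrimrecPred fun p : α × Option A × Option A × A × A =>
      C p.1 p.2.1 p.2.2.1 p.2.2.2.1 p.2.2.2.2)
    (hox : Primrec ox) (hoy : Primrec oy) (hw : Primrec w) (hs : Primrec s) (he : Primrec e)
    (hn : Primrec n) :
    PrimrecPred fun a => Label.Peers (C a) (ox a) (oy a) (w a) (s a) (e a) (n a) := by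
  let p (t : (Bool × Bool) × Frame × Frame × Frame × Frame) : Prop :=
    Frame.Meets t.1.2 t.2.1 t.2.2.2.1 t.2.2.1 ∧ Frame.Meets t.1.1 t.2.2.1 t.2.2.2.2 t.2.1
  have hp : PrimrecPred fun a => p ((ox a, oy a), (w a).1, (s a).1, (e a).1, (n a).1) :=
    (primrecPred_of_finite p).comp ((hox.pair hoy).pair ((Primrec.fst.comp hw).pair
      ((Primrec.fst.comp hs).pair ((Primrec.fst.comp he).pair (Primrec.fst.comp hn)))))
  have hfirst : Primrec fun f : Frame => f.block.1 := Primrec.dom_finite _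
  have hletter {f : α → Label A} {g : α → Label A} (hf : Primrec f) (hg : Primrec g) :
      Primrec fun a => cond (f a).1.block.1 none (some (g a).2) :=
    Primrec.cond (hfirst.comp (Primrec.fst.comp hf)) (.const none)
      (Primrec.option_some.comp (Primrec.snd.comp hg))
  have hrule := hC.comp (Primrec.id.pair ((hletter hs hw).pair ((hletter hw hs).pair
    ((Primrec.snd.comp he).pair (Primrec.snd.comp hn)))))
  exact (hp.and hrule).of_eq fun a => ⟨fun h => ⟨h.1.1, h.1.2, h.2⟩, fun h => ⟨⟨h.1, h.2⟩, h.3⟩⟩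

theorem primrecPred_cell
    (hC : PrimrecPred fun p : α × Option A × Option A × A × A =>
      C p.1 p.2.1 p.2.2.1 p.2.2.2.1 p.2.2.2.2)
    (hox : Primrec ox) (hoy : Primrec oy) (hw : Primrec w) (hs : Primrec s) (he : Primrec e)
    (hn : Primrec n) :
    PrimrecPred fun a => Label.Cell (C a) (ox a) (oy a) (w a) (s a) (e a) (n a) := by
  have hline {f g : α → Label A} (hf : Primrec f) (hg : Primrec g) :
      PrimrecPred fun a => Label.SameLine (f a) (g a) :=
    (primrecPred_of_finite fun t : Frame × Frame => t.2.odd = t.1.odd ∧ t.2.block = t.1.block).comp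
      ((Primrec.fst.comp hf).pair (Primrec.fst.comp hg))
  have hpeers := primrecPred_peers hC hox hoy hw hs he hn
  have hrow := (primrecPred_under hox hw hs he hn).and (Primrec.eq.comp hoy (.const false))
  have hcol := (primrecPred_under hoy hs hw hn he).and (Primrec.eq.comp hox (.const false))
  exact ((hline hw he).and ((hline hs hn).and ((hpeers.or (hrow.or hcol)).and
    (hpeers.not.or (Primrec.eq.comp hox hoy))))).of_eq fun a =>
      ⟨fun h => ⟨h.1, h.2.1, h.2.2.1, imp_iff_not_or.2 h.2.2.2⟩,
        fun h => ⟨h.1, h.2, h.3, imp_iff_not_or.1 h.4⟩⟩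

end Primrec

/-- The plane can be tiled by the Wang tiles in `W`, given by the colours of their west, south, east
and north edges. -/
def WangTiles (W : List (ℕ × ℕ × ℕ × ℕ)) : Prop :=
  ∃ c : Config ℕ, c.IsValid fun w s e n => (w, s, e, n) ∈ W

/-- The labels of `c` are in `S`. -/
def Config.LabelsIn {L : Type*} (S : Set L) (c : Config L) : Prop :=
  ∀ x y, c.row x y ∈ S ∧ c.col x y ∈ S

theorem Config.exists_isValid_of_encode {L : Type*} [Encodable L] {R : L → L → L → L → Prop}
    {c : Config ℕ} (h : ∀ x y, ∃ q : L × L × L × L, R q.1 q.2.1 q.2.2.1 q.2.2.2 ∧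
      Prod.map Encodable.encode (Prod.map Encodable.encode
        (Prod.map Encodable.encode Encodable.encode)) q =
          (c.row x y, c.col x y, c.row (x + 1) y, c.col x (y + 1))) :
    ∃ c' : Config L, c'.IsValid R := by
  choose q hR hq using h
  have hrow (x y : ℤ) : (q x y).2.2.1 = (q (x + 1) y).1 := Encodable.encode_injective
    ((congrArg (·.2.2.1) (hq x y)).trans (congrArg (·.1) (hq (x + 1) y)).symm)
  have hcol (x y : ℤ) : (q x y).2.2.2 = (q x (y + 1)).2.1 := Encodable.encode_injective
    ((congrArg (·.2.2.2) (hq x y)).trans (congrArg (·.2.1) (hq x (y + 1))).symm)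
  exact ⟨⟨fun x y => (q x y).1, fun x y => (q x y).2.1⟩, fun x y => by
    simpa only [hrow, hcol] using hR x y⟩

theorem exists_primrec_wangTiles_iff {β L : Type*} [Primcodable β] [Primcodable L]
    {R : β → L → L → L → L → Prop}
    (hR : PrimrecPred fun p : β × L × L × L × L => R p.1 p.2.1 p.2.2.1 p.2.2.2.1 p.2.2.2.2)
    {S : β → List L} (hS : Primrec S) :
    ∃ W : β → List (ℕ × ℕ × ℕ × ℕ), Primrec W ∧ ∀ b, WangTiles (W b) ↔
      ∃ c : Config L, c.IsValid (R b) ∧ c.LabelsIn {l | l ∈ S b} := by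
  classical
  let enc : L × L × L × L → ℕ × ℕ × ℕ × ℕ :=
    Prod.map Encodable.encode (Prod.map Encodable.encode
      (Prod.map Encodable.encode Encodable.encode))
  have hencode : Primrec (Encodable.encode (α := L)) := Primrec.encode
  have henc : Primrec enc := (hencode.comp .fst).pair ((hencode.comp (.comp .fst .snd)).pair
    ((hencode.comp (.comp .fst (.comp .snd .snd))).pair
      (hencode.comp (.comp .snd (.comp .snd .snd)))))
  have hinj : enc.Injective := Encodable.encode_injective.prodMap
    (Encodable.encode_injective.prodMap (Encodable.encode_injective.prodMap
      Encodable.encode_injective))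
  let W (b : β) : List (ℕ × ℕ × ℕ × ℕ) := (S b ×ˢ S b ×ˢ S b ×ˢ S b).filterMap fun q =>
    if R b q.1 q.2.1 q.2.2.1 q.2.2.2 then some (enc q) else none
  have hmem (b : β) (w s e n : L) : (enc (w, s, e, n) ∈ W b ↔
    (w ∈ S b ∧ s ∈ S b ∧ e ∈ S b ∧ n ∈ S b) ∧ R b w s e n) := by
    simp only [W, List.mem_filterMap, Option.ite_none_right_eq_some, Option.some_inj, hinj.eq_iff]
    constructor
    · rintro ⟨q, hq, hR, rfl⟩
      simpa only [List.mem_product] using And.intro hq hR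
    · exact fun h => ⟨_, by simpa only [List.mem_product] using h.1, h.2, rfl⟩
  refine ⟨W, Primrec.listFilterMap (primrec_product.comp hS (primrec_product.comp hS
    (primrec_product.comp hS hS))) (Primrec.ite hR (Primrec.option_some.comp (henc.comp .snd))
      (.const none)), fun b => ⟨?_, ?_⟩⟩
  · rintro ⟨c, hc⟩
    obtain ⟨c', hc'⟩ := Config.exists_isValid_of_encode (R := fun w s e n =>
      (w ∈ S b ∧ s ∈ S b ∧ e ∈ S b ∧ n ∈ S b) ∧ R b w s e n) (c := c) fun x y => by
        obtain ⟨q, -, h⟩ := List.mem_filterMap.1 (hc x y)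
        have h := Option.some_inj.1 ((Option.ite_none_right_eq_some ..).1 h).2
        exact ⟨q, (hmem b _ _ _ _).1 (h ▸ hc x y), h⟩
    exact ⟨c', fun x y => (hc' x y).2, fun x y => ⟨(hc' x y).1.1, (hc' x y).1.2.1⟩⟩
  · rintro ⟨c, hc, hL⟩
    exact ⟨⟨fun x y => Encodable.encode (c.row x y), fun x y => Encodable.encode (c.col x y)⟩,
      fun x y => (hmem b _ _ _ _).2
        ⟨⟨(hL x y).1, (hL x y).2, (hL (x + 1) y).1, (hL x (y + 1)).2⟩, hc x y⟩⟩

section Berger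

variable {A : Type*}

/-- A label together with the parities of the column and of the row of the cell whose western or
southern edge it labels. -/
abbrev PlaneLabel (A : Type*) : Type _ := (Bool × Bool) × Label A

/-- The rules of the hierarchy, the parities of the cells being recorded by the labels, with the
requirement that every odd line is the first of its block. -/
structure PlaneCell (C : Rule A) (w s e n : PlaneLabel A) : Prop where
  south : s.1 = w.1
  east : e.1 = (!w.1.1, w.1.2)
  north : n.1 = (w.1.1, !w.1.2)
  col_first : w.1.1 = true → s.2.1.block.1 = true
  row_first : w.1.2 = true → w.2.1.block.1 = true
  cell : Label.Cell C w.1.1 w.1.2 w.2 s.2 e.2 n.2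

theorem eq_xor_bodd {f : ℤ → Bool} (h : ∀ x, f (x + 1) = !f x) (x : ℤ) :
    f x = (f 0 ^^ x.bodd) := by
  induction x with
  | zero => simp
  | succ x ih => rw [h, ih, Int.bodd_add]; simp
  | pred x ih =>
    have h' := h (-x - 1)
    rw [sub_add_cancel, ih] at h'
    rw [← Bool.not_inj_iff, ← h', sub_eq_add_neg, Int.bodd_add]
    simp

theorem exists_parity_eq {C : Rule A} {c : Config (PlaneLabel A)} (hc : c.IsValid (PlaneCell C)) :
    ∃ a b : ℤ, ∀ x y, (c.row (x + a) (y + b)).1 = (x.bodd, y.bodd) := by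
  have hnorth (x y : ℤ) : (c.row x (y + 1)).1 = ((c.row x y).1.1, !(c.row x y).1.2) :=
    (hc x (y + 1)).south.symm.trans (hc x y).north
  have hx0 (y : ℤ) : (c.row 0 y).1.1 = (c.row 0 0).1.1 := by
    simpa using Function.Periodic.zsmul_eq (f := fun y => (c.row 0 y).1.1) (c := 1)
      (fun y => by simp only [hnorth]) y
  have hy0 (x : ℤ) : (c.row x 0).1.2 = (c.row 0 0).1.2 := by
    simpa using Function.Periodic.zsmul_eq (f := fun x => (c.row x 0).1.2) (c := 1)
      (fun x => by simp only [(hc x 0).east]) x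
  have hx (x y : ℤ) : (c.row x y).1.1 = ((c.row 0 0).1.1 ^^ x.bodd) :=
    hx0 y ▸ eq_xor_bodd (f := fun x => (c.row x y).1.1) (fun x => congrArg Prod.fst (hc x y).east) x
  have hy (x y : ℤ) : (c.row x y).1.2 = ((c.row 0 0).1.2 ^^ y.bodd) :=
    hy0 x ▸ eq_xor_bodd (f := fun y => (c.row x y).1.2) (fun y => congrArg Prod.snd (hnorth x y)) y
  refine ⟨cond (c.row 0 0).1.1 1 0, cond (c.row 0 0).1.2 1 0, fun x y => Prod.ext ?_ ?_⟩
  · rw [hx, Int.bodd_add]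
    cases (c.row 0 0).1.1 <;> simp
  · rw [hy, Int.bodd_add]
    cases (c.row 0 0).1.2 <;> simp

theorem exists_isValid_planeCell_iff {C : Rule A} {S : Set A} (hS : S.Finite) :
    (∃ c : Config (PlaneLabel A), c.IsValid (PlaneCell C) ∧ c.LabelsIn {l | l.2.2 ∈ S}) ↔
      C.TilesQuadrant S := by
  constructor
  · rintro ⟨c, hc, hcS⟩
    obtain ⟨a, b, hab⟩ := exists_parity_eq hc
    let c' : Config (Label A) :=
      ⟨fun x y => (c.row (x + a) (y + b)).2, fun x y => (c.col (x + a) (y + b)).2⟩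
    have H : IsHierarchical C c' := fun x y => by
      simpa only [c', hab, add_right_comm] using (hc (x + a) (y + b)).cell
    have hbodd : Int.bodd 2 = false := rfl
    refine H.tilesQuadrant hS (fun x y => hcS (x + a) (y + b)) fun i y => ⟨?_, ?_⟩
    · exact (hc _ _).col_first (by simp [hab, Int.bodd_add, Int.bodd_mul, hbodd])
    · exact (hc _ _).row_first (by simp [hab, Int.bodd_add, Int.bodd_mul, hbodd])
  · intro h
    obtain ⟨c, H, hcS, h1⟩ := h.exists_isHierarchical hS
    have hodd {x : ℤ} (hx : x.bodd = true) : ∃ i, x = 2 * i + 1 :=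
      ⟨x.div2, by simpa [hx, add_comm] using (Int.bodd_add_div2 x).symm⟩
    refine ⟨⟨fun x y => ((x.bodd, y.bodd), c.row x y), fun x y => ((x.bodd, y.bodd), c.col x y)⟩,
      fun x y => ⟨rfl, by simp [Int.bodd_add], by simp [Int.bodd_add], fun hx => ?_, fun hy => ?_,
        H x y⟩, hcS⟩
    · obtain ⟨i, rfl⟩ := hodd hx
      exact (h1 i y).1
    · obtain ⟨i, rfl⟩ := hodd hy
      exact (h1 i x).2

variable {α A : Type*} [Primcodable α] [Primcodable A] {C : α → Rule A}

theorem primrecPred_planeCell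
    (hC : PrimrecPred fun p : α × Option A × Option A × A × A =>
      C p.1 p.2.1 p.2.2.1 p.2.2.2.1 p.2.2.2.2) :
    PrimrecPred fun p : α × PlaneLabel A × PlaneLabel A × PlaneLabel A × PlaneLabel A =>
      PlaneCell (C p.1) p.2.1 p.2.2.1 p.2.2.2.1 p.2.2.2.2 := by
  let Q := α × PlaneLabel A × PlaneLabel A × PlaneLabel A × PlaneLabel A
  let p (t : ((Bool × Bool) × Frame) × ((Bool × Bool) × Frame) × (Bool × Bool) × (Bool × Bool)) :
      Prop := t.2.1.1 = t.1.1 ∧ t.2.2.1 = (!t.1.1.1, t.1.1.2) ∧ t.2.2.2 = (t.1.1.1, !t.1.1.2) ∧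
    (t.1.1.1 = true → t.2.1.2.block.1 = true) ∧ (t.1.1.2 = true → t.1.2.block.1 = true)
  have hw : Primrec fun q : Q => q.2.1 := .comp .fst .snd
  have hs : Primrec fun q : Q => q.2.2.1 := .comp .fst (.comp .snd .snd)
  have he : Primrec fun q : Q => q.2.2.2.1 := .comp .fst (.comp .snd (.comp .snd .snd))
  have hn : Primrec fun q : Q => q.2.2.2.2 := .comp .snd (.comp .snd (.comp .snd .snd))
  have hframe {f : Q → PlaneLabel A} (hf : Primrec f) : Primrec fun q => ((f q).1, (f q).2.1) :=
    .pair (.comp .fst hf) (.comp .fst (.comp .snd hf))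
  have hp : PrimrecPred fun q : Q => p ((q.2.1.1, q.2.1.2.1), (q.2.2.1.1, q.2.2.1.2.1),
      q.2.2.2.1.1, q.2.2.2.2.1) :=
    (primrecPred_of_finite p).comp ((hframe hw).pair ((hframe hs).pair
      ((Primrec.fst.comp he).pair (Primrec.fst.comp hn))))
  have hcell : PrimrecPred fun q : Q => Label.Cell (C q.1) q.2.1.1.1 q.2.1.1.2 q.2.1.2 q.2.2.1.2
      q.2.2.2.1.2 q.2.2.2.2.2 :=
    primrecPred_cell (C := fun q : Q => C q.1)
      (hC.comp ((Primrec.fst.comp .fst).pair .snd))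
      (.comp .fst (.comp .fst hw)) (.comp .snd (.comp .fst hw))
      (.comp .snd hw) (.comp .snd hs) (.comp .snd he) (.comp .snd hn)
  exact (hp.and hcell).of_eq fun q =>
    ⟨fun ⟨⟨h1, h2, h3, h4, h5⟩, h6⟩ => ⟨h1, h2, h3, h4, h5, h6⟩,
      fun h => ⟨⟨h.1, h.2, h.3, h.4, h.5⟩, h.6⟩⟩

theorem exists_primrec_wangTiles_iff_tilesQuadrant
    (hC : PrimrecPred fun p : α × Option A × Option A × A × A =>
      C p.1 p.2.1 p.2.2.1 p.2.2.2.1 p.2.2.2.2)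
    {S : α → List A} (hS : Primrec S) :
    ∃ W : α → List (ℕ × ℕ × ℕ × ℕ), Primrec W ∧
      ∀ a, WangTiles (W a) ↔ (C a).TilesQuadrant {s | s ∈ S a} := by
  let T (a : α) : List (PlaneLabel A) :=
    (Set.toFinite (univ : Set (Bool × Bool))).toFinset.toList ×ˢ
      (Set.toFinite (univ : Set Frame)).toFinset.toList ×ˢ S a
  obtain ⟨W, hW, h⟩ := exists_primrec_wangTiles_iff (R := fun a => PlaneCell (C a))
    (primrecPred_planeCell hC) (S := T)
    (primrec_product.comp (.const _) (primrec_product.comp (.const _) hS))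
  refine ⟨W, hW, fun a => (h a).trans ?_⟩
  have hT : {t | t ∈ T a} = {t | t.2.2 ∈ S a} := by
    ext ⟨p, f, x⟩
    simp [T, List.mem_product]
  rw [hT]
  exact exists_isValid_planeCell_iff (List.finite_toSet (S a))

open Turing in
theorem primrecPred_spaceTimeRule {Λ Γ : Type*} [Inhabited Λ] [Inhabited Γ] [Finite Λ] [Finite Γ]
    [Primcodable Γ] [Primcodable (SpaceTimeSymbol Λ Γ)] (M : TM0.Machine Γ Λ)
    {l : α → List Γ} (hl : Primrec l) :
    PrimrecPred fun p : α × Option (SpaceTimeSymbol Λ Γ × ℕ) × Option (SpaceTimeSymbol Λ Γ × ℕ) ×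
      (SpaceTimeSymbol Λ Γ × ℕ) × (SpaceTimeSymbol Λ Γ × ℕ) =>
        spaceTimeRule M (l p.1) p.2.1 p.2.2.1 p.2.2.2.1 p.2.2.2.2 := by
  let N := SpaceTimeSymbol Λ Γ
  let Q := α × Option (N × ℕ) × Option (N × ℕ) × (N × ℕ) × (N × ℕ)
  let p (t : Γ × Option N × Option N × N × N) : Prop :=
    SpaceTimeSymbol.Follows M t.1 t.2.1 t.2.2.1 t.2.2.2.1 t.2.2.2.2
  have hl : Primrec fun q : Q => l q.1 := hl.comp .fst
  have hw : Primrec fun q : Q => q.2.1 := .comp .fst .snd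
  have hs : Primrec fun q : Q => q.2.2.1 := .comp .fst (.comp .snd .snd)
  have he : Primrec fun q : Q => q.2.2.2.1 := .comp .fst (.comp .snd (.comp .snd .snd))
  have hn : Primrec fun q : Q => q.2.2.2.2 := .comp .snd (.comp .snd (.comp .snd .snd))
  have hcol : Primrec fun q : Q => q.2.1.elim 0 Prod.snd :=
    (Primrec.option_casesOn hw (.const 0) (Primrec.snd.comp .snd).to₂).of_eq fun q => by
      cases q.2.1 <;> rfl
  have hfst {f : Q → Option (N × ℕ)} (hf : Primrec f) : Primrec fun q => (f q).map Prod.fst :=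
    Primrec.option_map hf (Primrec.fst.comp .snd).to₂
  have hp : PrimrecPred fun q : Q => p ((l q.1).getI (q.2.1.elim 0 Prod.snd),
      q.2.1.map Prod.fst, q.2.2.1.map Prod.fst, q.2.2.2.1.1, q.2.2.2.2.1) :=
    (primrecPred_of_finite p).comp ((Primrec.list_getI.comp hl hcol).pair ((hfst hw).pair
      ((hfst hs).pair ((Primrec.fst.comp he).pair (Primrec.fst.comp hn)))))
  exact hp.and (Primrec.eq.comp (Primrec.snd.comp he)
    (Primrec.nat_min.comp (Primrec.succ.comp hcol) (Primrec.list_length.comp hl)))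

theorem exists_computable_wangTiles_iff {β : Type*} [Primcodable β] {B : β → Prop}
    {f : β → ℕ → Bool} (hf : Computable₂ f) (hB : ∀ b, B b ↔ ∀ n, f b n = true) :
    ∃ W : β → List (ℕ × ℕ × ℕ × ℕ), Computable W ∧ ∀ b, B b ↔ WangTiles (W b) := by
  obtain ⟨Λ, _, _, M, hM⟩ := exists_machine_of_forall_eq_true hf hB
  let _ : Primcodable TapeSymbol := primcodableOfFinite _
  let _ : Primcodable (SpaceTimeSymbol Λ TapeSymbol) := primcodableOfFinite _
  let l (b : β) : List TapeSymbol := inputTape (Encodable.encode b)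
  have hl : Primrec l := primrec_inputTape.comp Primrec.encode
  let S (b : β) : List (SpaceTimeSymbol Λ TapeSymbol × ℕ) :=
    (Set.toFinite (univ : Set (SpaceTimeSymbol Λ TapeSymbol))).toFinset.toList ×ˢ
      List.range ((l b).length + 1)
  have hS : Primrec S := primrec_product.comp (.const _)
    (Primrec.list_range.comp (Primrec.succ.comp (Primrec.list_length.comp hl)))
  obtain ⟨W, hW, h⟩ := exists_primrec_wangTiles_iff_tilesQuadrant
    (C := fun b => spaceTimeRule M (l b)) (primrecPred_spaceTimeRule M hl) hS
  refine ⟨W, hW.to_comp, fun b => ?_⟩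
  have hSb : {s | s ∈ S b} = {s | s.2 ≤ (l b).length} := by
    ext ⟨s, k⟩
    simp [S, List.mem_product]
  rw [hM, ← tilesQuadrant_spaceTimeRule_iff, h, hSb]

end Berger

/-! ### Rhombus tilings -/

section Plane

/-- The determinant of two vectors of the plane, as a bilinear form. -/
def det : Pt →ₗ[ℝ] Pt →ₗ[ℝ] ℝ :=
  LinearMap.mk₂ ℝ (fun a b => a 0 * b 1 - a 1 * b 0)
    (by intros; rw [PiLp.add_apply, PiLp.add_apply]; ring)
    (by intros; rw [PiLp.smul_apply, PiLp.smul_apply, smul_eq_mul, smul_eq_mul, smul_eq_mul]; ring)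
    (by intros; rw [PiLp.add_apply, PiLp.add_apply]; ring)
    (by intros; rw [PiLp.smul_apply, PiLp.smul_apply, smul_eq_mul, smul_eq_mul, smul_eq_mul]; ring)

theorem det_apply (a b : Pt) : det a b = a 0 * b 1 - a 1 * b 0 := rfl

@[simp]
theorem det_self (a : Pt) : det a a = 0 := by rw [det_apply]; ring

theorem det_swap (a b : Pt) : det a b = -det b a := by simp only [det_apply]; ring

theorem eq_smul_add_smul_of_det_ne_zero {y z : Pt} (h : det y z ≠ 0) (p : Pt) :
    p = (det p z / det y z) • y + (det y p / det y z) • z := by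
  ext i
  simp only [PiLp.add_apply, PiLp.smul_apply, smul_eq_mul]
  field_simp
  fin_cases i <;> simp only [det_apply, Fin.zero_eta, Fin.mk_one] <;> ring

theorem smul_add_smul_inj {y z : Pt} (h : det y z ≠ 0) {s t s' t' : ℝ} :
    s • y + t • z = s' • y + t' • z ↔ s = s' ∧ t = t' := by
  refine ⟨fun e => ⟨mul_right_cancel₀ h ?_, mul_right_cancel₀ h ?_⟩, by rintro ⟨rfl, rfl⟩; rfl⟩
  · simpa using congrArg (det · z) e
  · simpa using congrArg (det y) e

theorem det_ne_zero_of_linearIndependent {y z : Pt} (h : LinearIndependent ℝ ![y, z]) :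
    det y z ≠ 0 := by
  rw [LinearIndependent.pair_iff] at h
  intro h0
  have hz (i : Fin 2) : y i = 0 := by
    have hi : z i • y + (-y i) • z = 0 := by
      rw [det_apply] at h0
      ext j
      simp only [PiLp.add_apply, PiLp.smul_apply, PiLp.zero_apply, smul_eq_mul]
      fin_cases i <;> fin_cases j <;> simp only [Fin.zero_eta, Fin.mk_one] <;> linarith
    exact neg_eq_zero.1 (h _ _ hi).2
  exact one_ne_zero (h 1 0 (by ext i; simp [hz i])).1

theorem exists_eq_smul_of_det_eq_zero {y d : Pt} (hy : y ≠ 0) (h : det y d = 0) :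
    ∃ c : ℝ, d = c • y := by
  by_contra! hd
  exact det_ne_zero_of_linearIndependent
    ((LinearIndependent.pair_iff' hy).2 fun c hc => hd c hc.symm) h

end Plane

/-- The edge starting at `a` with edge vector `w`. -/
def edgeSegment (a w : Pt) : Set Pt := segment ℝ a (a + w)

theorem edgeSegment_neg (a w : Pt) : edgeSegment (a + w) (-w) = edgeSegment a w := by
  rw [edgeSegment, add_neg_cancel_right, segment_symm, edgeSegment]

theorem mem_edgeSegment {a w p : Pt} :
    p ∈ edgeSegment a w ↔ ∃ s ∈ Icc (0 : ℝ) 1, p = a + s • w := by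
  simp [edgeSegment, segment_eq_image', eq_comm]

theorem edgeSegment_inj {a w b w' : Pt} (h : edgeSegment a w = edgeSegment b w') :
    (a = b ∧ w = w') ∨ (a = b + w' ∧ w = -w') := by
  obtain ⟨s, hs, ha⟩ := mem_edgeSegment.1 (h.subset (left_mem_segment ..))
  obtain ⟨t, ht, haw⟩ := mem_edgeSegment.1 (h.subset (right_mem_segment ..))
  obtain ⟨s', hs', hb⟩ := mem_edgeSegment.1 (h.superset (left_mem_segment ..))
  obtain ⟨t', ht', hbw⟩ := mem_edgeSegment.1 (h.superset (right_mem_segment ..))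
  have hw : w = (t - s) • w' := by
    rw [← add_right_inj a, haw, ha]; module
  have hw' : w' = (t' - s') • w := by
    rw [← add_right_inj b, hbw, hb]; module
  rcases eq_or_ne w' 0 with rfl | hne
  · exact Or.inl ⟨by simpa using ha, by simpa using hw⟩
  have hmul : (t' - s') * (t - s) = 1 :=
    smul_left_injective ℝ hne (show _ • w' = (1 : ℝ) • w' by rw [mul_smul, ← hw, ← hw', one_smul])
  rcases le_total s t with hst | hst
  · obtain ⟨rfl, rfl⟩ : s = 0 ∧ t = 1 := by
      constructor <;> nlinarith [hs.1, hs.2, ht.1, ht.2, hs'.1, hs'.2, ht'.1, ht'.2]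
    exact Or.inl ⟨by simpa using ha, by simpa using hw⟩
  · obtain ⟨rfl, rfl⟩ : s = 1 ∧ t = 0 := by
      constructor <;> nlinarith [hs.1, hs.2, ht.1, ht.2, hs'.1, hs'.2, ht'.1, ht'.2]
    exact Or.inr ⟨by simpa using ha, by simpa using hw⟩

namespace Rhombus

/-- `T.HasCorner a y z`: the rhombus `T` is the parallelogram with vertex `a` and sides `y`, `z`
starting at `a`. The eight descriptions of `T` of this form are obtained from the one it is given
by. -/
inductive HasCorner (T : Rhombus) : Pt → Pt → Pt → Prop
  | base : HasCorner T T.pos T.u T.v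
  | swap {a y z : Pt} : HasCorner T a y z → HasCorner T a z y
  | flip {a y z : Pt} : HasCorner T a y z → HasCorner T (a + z) y (-z)

variable {T : Rhombus} {a y z : Pt}

theorem edge_zero (T : Rhombus) : T.edge 0 = edgeSegment T.pos T.u := rfl

theorem edge_one (T : Rhombus) : T.edge 1 = edgeSegment (T.pos + T.u) T.v := rfl

theorem edge_two (T : Rhombus) : T.edge 2 = edgeSegment (T.pos + T.v) T.u := by
  rw [edgeSegment, segment_symm, add_right_comm]; rfl

theorem edge_three (T : Rhombus) : T.edge 3 = edgeSegment T.pos T.v :=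
  segment_symm ..

namespace HasCorner

theorem flip_left (h : T.HasCorner a y z) : T.HasCorner (a + y) (-y) z := h.swap.flip.swap

theorem mem_support (h : T.HasCorner a y z) {p : Pt} :
    p ∈ T.support ↔ ∃ s ∈ Icc (0 : ℝ) 1, ∃ t ∈ Icc (0 : ℝ) 1, p = a + s • y + t • z := by
  induction h with
  | base => simp only [support, mem_ofPred_eq, exists_and_left]
  | swap _ ih =>
    rw [ih]
    constructor <;> rintro ⟨s, hs, t, ht, rfl⟩ <;> exact ⟨t, ht, s, hs, add_right_comm ..⟩
  | flip _ ih =>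
    rw [ih]
    constructor <;> rintro ⟨s, hs, t, ht, rfl⟩ <;>
      exact ⟨s, hs, 1 - t, ⟨by linarith [ht.2], by linarith [ht.1]⟩, by module⟩

theorem det_ne_zero (h : T.HasCorner a y z) (hT : T.IsValid) : det y z ≠ 0 := by
  induction h with
  | base => exact det_ne_zero_of_linearIndependent hT.1
  | swap _ ih => rwa [det_swap, neg_ne_zero]
  | flip _ ih => rwa [map_neg, neg_ne_zero]

theorem mem_edges (h : T.HasCorner a y z) {e : Set Pt} :
    e ∈ T.edges ↔ e = edgeSegment a y ∨ e = edgeSegment (a + z) y ∨ e = edgeSegment a z ∨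
      e = edgeSegment (a + y) z := by
  induction h with
  | base =>
    simp only [edges, mem_range, Fin.exists_fin_succ, Fin.succ_zero_eq_one, Fin.succ_one_eq_two,
      edge_zero, edge_one, edge_two, IsEmpty.exists_iff, or_false, eq_comm (b := e)]
    rw [show (2 : Fin 3).succ = (3 : Fin 4) from rfl, edge_three]
    tauto
  | swap _ ih => rw [ih]; tauto
  | @flip a y z _ ih =>
    rw [ih, add_neg_cancel_right, edgeSegment_neg, add_right_comm a z y, edgeSegment_neg]
    tauto

theorem exists_of_edge_eq {k : Fin 4} (h : T.edge k = edgeSegment a y) :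
    ∃ z, T.HasCorner a y z := by
  have of_eq {b w z : Pt} (hr : T.HasCorner b w z) (he : edgeSegment b w = edgeSegment a y) :
      ∃ z, T.HasCorner a y z := by
    rcases edgeSegment_inj he with ⟨rfl, rfl⟩ | ⟨rfl, rfl⟩
    · exact ⟨z, hr⟩
    · exact ⟨z, by simpa using hr.flip_left⟩
  fin_cases k
  · exact of_eq base (T.edge_zero.symm.trans h)
  · exact of_eq base.swap.flip (T.edge_one.symm.trans h)
  · exact of_eq base.flip (T.edge_two.symm.trans h)
  · exact of_eq base.swap (T.edge_three.symm.trans h)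

theorem exists_of_mem_edges {e : Set Pt} (he : e ∈ T.edges) :
    ∃ a y z, T.HasCorner a y z ∧ e = edgeSegment a y := by
  rcases base.mem_edges.1 he with rfl | rfl | rfl | rfl
  · exact ⟨_, _, _, base, rfl⟩
  · exact ⟨_, _, _, base.flip, rfl⟩
  · exact ⟨_, _, _, base.swap, rfl⟩
  · exact ⟨_, _, _, base.swap.flip, rfl⟩

theorem mem_vertices (h : T.HasCorner a y z) {p : Pt} :
    p ∈ T.vertices ↔ p = a ∨ p = a + y ∨ p = a + z ∨ p = a + y + z := by
  induction h with
  | base => rfl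
  | @swap a y z _ ih => rw [ih, add_right_comm a z y]; tauto
  | @flip a y z _ ih =>
    rw [ih, add_neg_cancel_right, add_right_comm a z y, add_neg_cancel_right]
    tauto

theorem exists_coord_eq_of_mem_edge (h : T.HasCorner a y z) {e : Set Pt} (he : e ∈ T.edges)
    {p : Pt} (hp : p ∈ e) :
    ∃ s t : ℝ, p = a + (s • y + t • z) ∧ (s = 0 ∨ s = 1 ∨ t = 0 ∨ t = 1) := by
  rcases h.mem_edges.1 he with rfl | rfl | rfl | rfl <;>
    obtain ⟨r, -, rfl⟩ := mem_edgeSegment.1 hp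
  · exact ⟨r, 0, by module, by simp⟩
  · exact ⟨r, 1, by module, by simp⟩
  · exact ⟨0, r, by module, by simp⟩
  · exact ⟨1, r, by module, by simp⟩

end HasCorner

theorem exists_mem_edge_of_mem_vertices {p : Pt} (hp : p ∈ T.vertices) :
    ∃ e ∈ T.edges, p ∈ e := by
  rcases hp with rfl | rfl | rfl | rfl
  · exact ⟨T.edge 0, ⟨0, rfl⟩, left_mem_segment ..⟩
  · exact ⟨T.edge 0, ⟨0, rfl⟩, right_mem_segment ..⟩
  · exact ⟨T.edge 3, ⟨3, rfl⟩, left_mem_segment ..⟩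
  · exact ⟨T.edge 1, ⟨1, rfl⟩, right_mem_segment ..⟩

end Rhombus

theorem IsTiling.eq_of_interior_mem {x : Set Rhombus} (hx : IsTiling x) {T T' : Rhombus}
    (hT : T ∈ x) (hT' : T' ∈ x) {a y z : Pt} (h : T.HasCorner a y z) {s t : ℝ}
    (hs : s ∈ Ioo (0 : ℝ) 1) (ht : t ∈ Ioo (0 : ℝ) 1) (hp : a + s • y + t • z ∈ T'.support) :
    T = T' := by
  by_contra hne
  have notMem_edge {e : Set Pt} (he : e ∈ T.edges) : a + s • y + t • z ∉ e := by
    intro hpe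
    obtain ⟨s', t', e, h'⟩ := h.exists_coord_eq_of_mem_edge he hpe
    rw [add_assoc, add_right_inj, smul_add_smul_inj (h.det_ne_zero (hx.1 T hT))] at e
    rw [← e.1, ← e.2] at h'
    rcases h' with rfl | rfl | rfl | rfl <;> simp at hs ht
  have hmem : a + s • y + t • z ∈ T.support ∩ T'.support :=
    ⟨h.mem_support.2 ⟨s, Ioo_subset_Icc_self hs, t, Ioo_subset_Icc_self ht, rfl⟩, hp⟩
  rcases hx.2.2 T hT T' hT' hne with hST | ⟨p, hpv, -, hST⟩ | ⟨e, he, -, hST⟩ <;> rw [hST] at hmem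
  · exact hmem
  · obtain ⟨e, he, hpe⟩ := Rhombus.exists_mem_edge_of_mem_vertices hpv
    exact notMem_edge he (mem_singleton_iff.1 hmem ▸ hpe)
  · exact notMem_edge he hmem

section Poincare

open Filter Topology

/-- `H` is a primitive on `U` of the discrete form `L`: near each point `p` of `U`, its increment
from `p` is `L p`. -/
def IsPrimitiveOn {E : Type*} [TopologicalSpace E] (L : E → E → ℝ) (U : Set E) (H : E → ℝ) : Prop :=
  ∀ p ∈ U, ∀ᶠ q in 𝓝 p, H q - H p = L p q

namespace IsPrimitiveOn

variable {E : Type*} [TopologicalSpace E] {L : E → E → ℝ} {U V : Set E} {H H' : E → ℝ}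

theorem mono (h : IsPrimitiveOn L U H) (hV : V ⊆ U) : IsPrimitiveOn L V H :=
  fun p hp => h p (hV hp)

theorem sub_eq_sub (h : IsPrimitiveOn L U H) (h' : IsPrimitiveOn L U H') (hU : IsPreconnected U)
    {p q : E} (hp : p ∈ U) (hq : q ∈ U) : H p - H' p = H q - H' q := by
  refine hU.induction₂ (fun p q => H p - H' p = H q - H' q) (fun p hp => ?_)
    (fun _ _ _ _ _ _ h₁ h₂ => h₁.trans h₂) (fun _ _ _ _ h₁ => h₁.symm) hp hq
  filter_upwards [nhdsWithin_le_nhds (h p hp), nhdsWithin_le_nhds (h' p hp)] with q h₁ h₂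
  linarith

theorem union (hU : IsOpen U) (hV : IsOpen V) (hc : IsPreconnected (U ∩ V))
    (h : ∃ H, IsPrimitiveOn L U H) (h' : ∃ H, IsPrimitiveOn L V H) :
    ∃ H, IsPrimitiveOn L (U ∪ V) H := by
  classical
  obtain ⟨H, hH⟩ := h
  obtain ⟨K, hK⟩ := h'
  obtain ⟨c, hHK⟩ : ∃ c, ∀ p ∈ U ∩ V, H p = K p + c := by
    rcases (U ∩ V).eq_empty_or_nonempty with h0 | ⟨q, hq⟩
    · exact ⟨0, by simp [h0]⟩
    · refine ⟨H q - K q, fun p hp => ?_⟩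
      have := (hH.mono inter_subset_left).sub_eq_sub (hK.mono inter_subset_right) hc hp hq
      linarith
  have hV_eq {p : E} (hp : p ∈ V) : U.piecewise H (K · + c) p = K p + c := by
    by_cases hpU : p ∈ U
    · rw [piecewise_eq_of_mem _ _ _ hpU, hHK p ⟨hpU, hp⟩]
    · rw [piecewise_eq_of_notMem _ _ _ hpU]
  refine ⟨U.piecewise H (K · + c), ?_⟩
  rintro p (hp | hp)
  · filter_upwards [hH p hp, hU.mem_nhds hp] with q hq hqU
    simp only [piecewise_eq_of_mem _ _ _ hp, piecewise_eq_of_mem _ _ _ hqU, hq]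
  · filter_upwards [hK p hp, hV.mem_nhds hp] with q hq hqV
    rw [hV_eq hp, hV_eq hqV, ← hq]; ring

end IsPrimitiveOn

theorem Ioo_induction {P : ℝ → ℝ → Prop} (mono : ∀ {a b a' b'}, a ≤ a' → b' ≤ b → P a b → P a' b')
    (glue : ∀ {a b a' b'}, a' < b → P a b → P a' b' → P a b')
    (loc : ∀ t, ∃ ε > 0, P (t - ε) (t + ε)) (a b : ℝ) : P a b := by
  by_contra hab
  have le_b : ∀ t ∈ {t | P a t}, t ≤ b := fun t ht =>
    not_lt.1 fun hlt => hab (mono le_rfl hlt.le ht)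
  obtain ⟨ε₀, hε₀, h₀⟩ := loc a
  obtain ⟨ε, hε, h₁⟩ := loc (sSup {t | P a t})
  obtain ⟨t, ht, ht'⟩ := exists_lt_of_lt_csSup (s := {t | P a t})
    ⟨a + ε₀, mono (by linarith) le_rfl h₀⟩ (sub_lt_self _ hε)
  linarith [le_csSup ⟨b, le_b⟩ (glue ht' ht h₁)]

/-- The open rectangle `(a, b) × (c, d)`. -/
def openRect (a b c d : ℝ) : Set Pt := {p | p 0 ∈ Ioo a b ∧ p 1 ∈ Ioo c d}

theorem isOpen_openRect (a b c d : ℝ) : IsOpen (openRect a b c d) :=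
  (isOpen_Ioo.preimage (f := fun p : Pt => p 0) (by fun_prop)).inter
    (isOpen_Ioo.preimage (f := fun p : Pt => p 1) (by fun_prop))

theorem convex_openRect (a b c d : ℝ) : Convex ℝ (openRect a b c d) :=
  ((convex_Ioo a b).linear_preimage (EuclideanSpace.proj (𝕜 := ℝ) 0).toLinearMap).inter
    ((convex_Ioo c d).linear_preimage (EuclideanSpace.proj (𝕜 := ℝ) 1).toLinearMap)

variable {L : Pt → Pt → ℝ}

theorem exists_isPrimitiveOn_openRect_union {a b c d a' b' c' d' : ℝ}
    (h : ∃ H, IsPrimitiveOn L (openRect a b c d) H)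
    (h' : ∃ H, IsPrimitiveOn L (openRect a' b' c' d') H) :
    ∃ H, IsPrimitiveOn L (openRect a b c d ∪ openRect a' b' c' d') H :=
  IsPrimitiveOn.union (isOpen_openRect ..) (isOpen_openRect ..)
    ((convex_openRect ..).inter (convex_openRect ..)).isPreconnected h h'

theorem exists_openRect_subset_ball (s t : ℝ) {ε : ℝ} (hε : 0 < ε) :
    ∃ δ > 0, openRect (s - δ) (s + δ) (t - δ) (t + δ) ⊆ ball !₂[s, t] ε := by
  refine ⟨ε / 2, by linarith, ?_⟩
  rintro p ⟨⟨h₁, h₂⟩, h₃, h₄⟩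
  rw [mem_ball, EuclideanSpace.dist_eq, Real.sqrt_lt' hε]
  simp only [Fin.sum_univ_two, Real.dist_eq, sq_abs, Matrix.cons_val_zero, Matrix.cons_val_one,
    Matrix.cons_val_fin_one]
  nlinarith

theorem exists_isPrimitiveOn_strip (hL : ∀ p, ∃ ε > 0, ∃ H, IsPrimitiveOn L (ball p ε) H)
    (t a b : ℝ) : ∃ ε > 0, ∃ H, IsPrimitiveOn L (openRect a b (t - ε) (t + ε)) H := by
  induction a, b using Ioo_induction with
  | mono ha hb h =>
    obtain ⟨ε, hε, H, hH⟩ := h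
    exact ⟨ε, hε, H, hH.mono fun p hp => ⟨Ioo_subset_Ioo ha hb hp.1, hp.2⟩⟩
  | @glue a b a' b' hlt h h' =>
    obtain ⟨ε, hε, hH⟩ := h
    obtain ⟨ε', hε', hH'⟩ := h'
    obtain ⟨K, hK⟩ := exists_isPrimitiveOn_openRect_union hH hH'
    refine ⟨min ε ε', lt_min hε hε', K, hK.mono ?_⟩
    rintro p ⟨⟨h₁, h₂⟩, h₃, h₄⟩
    have hle := min_le_left ε ε'
    have hle' := min_le_right ε ε'
    rcases lt_or_ge (p 0) b with h | h
    · exact Or.inl ⟨⟨h₁, h⟩, by linarith, by linarith⟩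
    · exact Or.inr ⟨⟨by linarith, h₂⟩, by linarith, by linarith⟩
  | loc s =>
    obtain ⟨ε, hε, H, hH⟩ := hL !₂[s, t]
    obtain ⟨δ, hδ, hsub⟩ := exists_openRect_subset_ball s t hε
    exact ⟨δ, hδ, δ, hδ, H, hH.mono hsub⟩

theorem exists_isPrimitiveOn_openRect (hL : ∀ p, ∃ ε > 0, ∃ H, IsPrimitiveOn L (ball p ε) H)
    (a b c d : ℝ) : ∃ H, IsPrimitiveOn L (openRect a b c d) H := by
  induction c, d using Ioo_induction with
  | mono hc hd h =>
    obtain ⟨H, hH⟩ := h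
    exact ⟨H, hH.mono fun p hp => ⟨hp.1, Ioo_subset_Ioo hc hd hp.2⟩⟩
  | @glue c d c' d' hlt h h' =>
    obtain ⟨K, hK⟩ := exists_isPrimitiveOn_openRect_union h h'
    refine ⟨K, hK.mono ?_⟩
    rintro p ⟨h₀, h₁, h₂⟩
    rcases lt_or_ge (p 1) d with h | h
    · exact Or.inl ⟨h₀, h₁, h⟩
    · exact Or.inr ⟨h₀, by linarith, h₂⟩
  | loc t => exact exists_isPrimitiveOn_strip hL t a b

theorem exists_isPrimitiveOn_ball (hL : ∀ p, ∃ ε > 0, ∃ H, IsPrimitiveOn L (ball p ε) H) (r : ℝ) :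
    ∃ H, IsPrimitiveOn L (ball 0 r) H := by
  obtain ⟨H, hH⟩ := exists_isPrimitiveOn_openRect hL (-r) r (-r) r
  refine ⟨H, hH.mono fun p hp => ?_⟩
  have hlt (i : Fin 2) : |p i| < r := (PiLp.norm_apply_le p i).trans_lt (mem_ball_zero_iff.1 hp)
  exact ⟨abs_lt.1 (hlt 0), abs_lt.1 (hlt 1)⟩

theorem exists_isPrimitiveOn_univ (hL : ∀ p, ∃ ε > 0, ∃ H, IsPrimitiveOn L (ball p ε) H) :
    ∃ h, IsPrimitiveOn L univ h := by
  choose H hH using exists_isPrimitiveOn_ball hL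
  have compat {p : Pt} {r : ℝ} (hr : ‖p‖ + 1 ≤ r) :
      H (‖p‖ + 1) p - H (‖p‖ + 1) 0 = H r p - H r 0 := by
    have := (hH (‖p‖ + 1)).sub_eq_sub ((hH r).mono (ball_subset_ball hr))
      (convex_ball _ _).isPreconnected (p := p) (q := 0) (by simp)
      (by simpa using add_pos_of_nonneg_of_pos (norm_nonneg p) one_pos)
    linarith
  refine ⟨fun p => H (‖p‖ + 1) p - H (‖p‖ + 1) 0, fun p _ => ?_⟩
  have near : ∀ᶠ q in 𝓝 p, ‖q‖ < ‖p‖ + 1 :=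
    continuous_norm.continuousAt.eventually_lt continuousAt_const (lt_add_one _)
  filter_upwards [near, hH (‖p‖ + 2) p (by simp)] with q hq hpq
  rw [compat (p := q) (r := ‖p‖ + 2) (by linarith), compat (p := p) (r := ‖p‖ + 2) (by linarith),
    ← hpq]
  ring

end Poincare

section FiniteShapes

open Filter Topology

namespace Rhombus

variable {T : Rhombus}

theorem support_eq_image (T : Rhombus) :
    T.support = (fun q : ℝ × ℝ => T.pos + q.1 • T.u + q.2 • T.v) '' (Icc 0 1 ×ˢ Icc 0 1) := by
  ext p
  simp only [support, mem_ofPred_eq, mem_image, mem_prod, Prod.exists, and_assoc, eq_comm (a := p)]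

theorem isCompact_support (T : Rhombus) : IsCompact T.support := by
  rw [support_eq_image]
  exact (isCompact_Icc.prod isCompact_Icc).image (by fun_prop)

theorem isPreconnected_support (T : Rhombus) : IsPreconnected T.support := by
  rw [support_eq_image]
  exact (isPreconnected_Icc.prod isPreconnected_Icc).image _ (by fun_prop)

theorem dist_pos_le {p : Pt} (hp : p ∈ T.support) : dist T.pos p ≤ ‖T.u‖ + ‖T.v‖ := by
  obtain ⟨s, t, hs, ht, rfl⟩ := hp
  rw [add_assoc, dist_self_add_right]
  refine (norm_add_le _ _).trans (add_le_add ?_ ?_) <;> rw [norm_smul, Real.norm_eq_abs]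
  · exact mul_le_of_le_one_left (norm_nonneg _) (by rw [abs_of_nonneg hs.1]; exact hs.2)
  · exact mul_le_of_le_one_left (norm_nonneg _) (by rw [abs_of_nonneg ht.1]; exact ht.2)

theorem HasCorner.hasEdgeDir {a y z : Pt} (h : T.HasCorner a y z) :
    T.HasEdgeDir y ∧ T.HasEdgeDir z := by
  induction h with
  | base => simp [HasEdgeDir]
  | swap _ ih => exact ih.symm
  | flip _ ih => exact ⟨ih.1, by have := ih.2; simp only [HasEdgeDir, neg_neg] at this ⊢; tauto⟩

end Rhombus

/-- A tiling whose tiles are translates of finitely many shapes. -/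
structure IsFinShapeTiling (x : Set Rhombus) : Prop where
  isTiling : IsTiling x
  finite_shapes : ((fun T : Rhombus => (T.u, T.v)) '' x).Finite

/-- The edge vectors of the tiles of `x`, in both orientations. -/
def edgeDirs (x : Set Rhombus) : Set Pt := {w | ∃ T ∈ x, T.HasEdgeDir w}

variable {x : Set Rhombus}

theorem IsTiling.exists_mem_support (hx : IsTiling x) (p : Pt) : ∃ T ∈ x, p ∈ T.support := by
  simpa using hx.2.1.superset (mem_univ p)

theorem IsTiling.eq_of_pos_near (hx : IsTiling x) {T T' : Rhombus} (hT : T ∈ x) (hT' : T' ∈ x)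
    (hu : T'.u = T.u) (hv : T'.v = T.v) {s t : ℝ} (hs : |s| < 1) (ht : |t| < 1)
    (h : T'.pos = T.pos + (s • T.u + t • T.v)) : T = T' := by
  rw [abs_lt] at hs ht
  refine hx.eq_of_interior_mem hT hT' .base (s := (1 + s) / 2) (t := (1 + t) / 2)
    ⟨by linarith, by linarith⟩ ⟨by linarith, by linarith⟩
    ⟨(1 - s) / 2, (1 - t) / 2, ⟨by linarith, by linarith⟩, ⟨by linarith, by linarith⟩, ?_⟩
  rw [h, hu, hv]
  module

theorem IsTiling.finite_shape_near (hx : IsTiling x) (U V p : Pt) (r : ℝ) :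
    {T ∈ x | T.u = U ∧ T.v = V ∧ dist T.pos p ≤ r}.Finite := by
  rcases eq_or_ne (det U V) 0 with hd | hd
  · convert finite_empty
    refine eq_empty_of_forall_notMem ?_
    rintro T ⟨hT, rfl, rfl, -⟩
    exact det_ne_zero_of_linearIndependent (hx.1 T hT).1 hd
  let α : Pt →ₗ[ℝ] ℝ := (det U V)⁻¹ • det.flip V
  let β : Pt →ₗ[ℝ] ℝ := (det U V)⁻¹ • det U
  have coords (q : Pt) : q = α q • U + β q • V := by
    simpa [α, β, div_eq_inv_mul] using eq_smul_add_smul_of_det_ne_zero hd q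
  have bound (f : Pt →ₗ[ℝ] ℝ) : ∃ C, ∀ q ∈ closedBall p r, ‖f q‖ ≤ C :=
    (isCompact_closedBall p r).exists_bound_of_continuousOn
      f.continuous_of_finiteDimensional.continuousOn
  obtain ⟨C, hC⟩ := bound α
  obtain ⟨D, hD⟩ := bound β
  refine Set.Finite.of_finite_image (f := fun T => (⌊α T.pos⌋, ⌊β T.pos⌋)) ?_ ?_
  · refine ((finite_Icc ⌊-C⌋ ⌊C⌋).prod (finite_Icc ⌊-D⌋ ⌊D⌋)).subset ?_
    rintro _ ⟨T, ⟨-, -, -, hT⟩, rfl⟩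
    have hα := abs_le.1 (hC _ hT)
    have hβ := abs_le.1 (hD _ hT)
    exact ⟨⟨Int.floor_mono hα.1, Int.floor_mono hα.2⟩, Int.floor_mono hβ.1, Int.floor_mono hβ.2⟩
  · rintro T ⟨hT, rfl, rfl, -⟩ T' ⟨hT', hu, hv, -⟩ he
    rw [Prod.mk.injEq] at he
    refine hx.eq_of_pos_near hT hT' hu hv
      (Int.abs_sub_lt_one_of_floor_eq_floor he.1.symm)
      (Int.abs_sub_lt_one_of_floor_eq_floor he.2.symm) ?_
    conv_lhs => rw [coords T'.pos]
    conv_rhs => enter [1]; rw [coords T.pos]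
    module

namespace IsFinShapeTiling

theorem finite_near (hx : IsFinShapeTiling x) (p : Pt) (r : ℝ) :
    {T ∈ x | (T.support ∩ closedBall p r).Nonempty}.Finite := by
  refine (hx.finite_shapes.biUnion fun s _ =>
    hx.isTiling.finite_shape_near s.1 s.2 p (‖s.1‖ + ‖s.2‖ + r)).subset ?_
  rintro T ⟨hT, q, hq, hqp⟩
  refine mem_iUnion₂.2 ⟨(T.u, T.v), ⟨T, hT, rfl⟩, hT, rfl, rfl, ?_⟩
  exact (dist_triangle _ q _).trans (add_le_add (Rhombus.dist_pos_le hq) hqp)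

theorem eventually_mem_support (hx : IsFinShapeTiling x) (p : Pt) :
    ∀ᶠ q in 𝓝 p, ∀ T ∈ x, q ∈ T.support → p ∈ T.support := by
  have near : ∀ᶠ q in 𝓝 p, ∀ T ∈ {T ∈ x | (T.support ∩ closedBall p 1).Nonempty},
      q ∈ T.support → p ∈ T.support := by
    rw [eventually_all_finite (hx.finite_near p 1)]
    intro T _
    by_cases hp : p ∈ T.support
    · exact Eventually.of_forall fun _ _ => hp
    · filter_upwards [T.isCompact_support.isClosed.isOpen_compl.mem_nhds hp] with q hq hq'
      exact (hq hq').elim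
  filter_upwards [near, closedBall_mem_nhds p one_pos] with q hq hqp T hT hqT
  exact hq T ⟨hT, q, hqT, hqp⟩ hqT

theorem finite_edgeDirs (hx : IsFinShapeTiling x) : (edgeDirs x).Finite := by
  refine (hx.finite_shapes.biUnion fun s _ => toFinite {s.1, -s.1, s.2, -s.2}).subset ?_
  rintro w ⟨T, hT, h⟩
  refine mem_iUnion₂.2 ⟨(T.u, T.v), ⟨T, hT, rfl⟩, ?_⟩
  rcases h with h | h | h | h <;> simp [h]

end IsFinShapeTiling

theorem IsTiling.edgeSegment_mem_edges (hx : IsTiling x) {T T' : Rhombus} (hT : T ∈ x)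
    (hT' : T' ∈ x) (hne : T ≠ T') {a y z : Pt} (h : T.HasCorner a y z) {s : ℝ}
    (hs : s ∈ Ioo (0 : ℝ) 1) (hp : a + s • y ∈ T'.support) : edgeSegment a y ∈ T'.edges := by
  have coord_eq {s' t' : ℝ} (e : a + s • y = a + (s' • y + t' • z)) : s = s' ∧ 0 = t' := by
    rwa [add_right_inj, ← add_zero (s • y), ← zero_smul ℝ z,
      smul_add_smul_inj (h.det_ne_zero (hx.1 T hT))] at e
  have hmem : a + s • y ∈ T.support ∩ T'.support :=
    ⟨h.mem_support.2 ⟨s, Ioo_subset_Icc_self hs, 0, by simp, by simp⟩, hp⟩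
  rcases hx.2.2 T hT T' hT' hne with hST | ⟨p, hpv, -, hST⟩ | ⟨e, he, he', hST⟩ <;> rw [hST] at hmem
  · exact hmem.elim
  · exfalso
    rw [← mem_singleton_iff.1 hmem, h.mem_vertices] at hpv
    rcases hpv with e | e | e | e
    · linarith [hs.1, (coord_eq (s' := 0) (t' := 0) (by rw [e]; module)).1]
    · linarith [hs.2, (coord_eq (s' := 1) (t' := 0) (by rw [e]; module)).1]
    · linarith [(coord_eq (s' := 0) (t' := 1) (by rw [e]; module)).2]
    · linarith [(coord_eq (s' := 1) (t' := 1) (by rw [e]; module)).2]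
  · rcases h.mem_edges.1 he with rfl | rfl | rfl | rfl
    · exact he'
    all_goals
      exfalso
      obtain ⟨r, -, e⟩ := mem_edgeSegment.1 hmem
    · linarith [(coord_eq (s' := r) (t' := 1) (by rw [e]; module)).2]
    · linarith [hs.1, (coord_eq (s' := 0) (t' := r) (by rw [e]; module)).1]
    · linarith [hs.2, (coord_eq (s' := 1) (t' := r) (by rw [e]; module)).1]

theorem IsFinShapeTiling.exists_tile_across (hx : IsFinShapeTiling x) {T : Rhombus} (hT : T ∈ x)
    {a y z : Pt} (h : T.HasCorner a y z) :
    ∃ T' ∈ x, ∃ z', T'.HasCorner a y z' ∧ det y z' * det y z < 0 := by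
  have hd := h.det_ne_zero (hx.isTiling.1 T hT)
  set m := a + (1 / 2 : ℝ) • y with hm
  have hlim : Tendsto (fun δ : ℝ => m - δ • z) (𝓝[>] 0) (𝓝 m) :=
    (Continuous.tendsto' (by fun_prop) _ _ (by simp)).mono_left nhdsWithin_le_nhds
  obtain ⟨δ, hδ, hδ0 : 0 < δ⟩ :=
    ((hlim.eventually (hx.eventually_mem_support m)).and self_mem_nhdsWithin).exists
  obtain ⟨T', hT', hq⟩ := hx.isTiling.exists_mem_support (m - δ • z)
  have hne : T ≠ T' := by
    rintro rfl
    obtain ⟨s, -, t, ht, e⟩ := h.mem_support.1 hq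
    rw [hm, add_sub_assoc, add_assoc, add_right_inj, sub_eq_add_neg, ← neg_smul,
      smul_add_smul_inj hd] at e
    linarith [ht.1]
  obtain ⟨k, hk⟩ := hx.isTiling.edgeSegment_mem_edges hT hT' hne h ⟨by norm_num, by norm_num⟩
    (hδ T' hT' hq)
  obtain ⟨z', hz'⟩ := Rhombus.HasCorner.exists_of_edge_eq hk
  refine ⟨T', hT', z', hz', ?_⟩
  obtain ⟨s, -, t, ht, e⟩ := hz'.mem_support.1 hq
  have hdet : -(δ * det y z) = t * det y z' := by
    simpa [hm, add_assoc, add_sub_assoc] using congrArg (det y) e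
  have hδz : 0 < δ * det y z ^ 2 := by positivity
  by_contra! hnonneg
  have hmul : t * (det y z' * det y z) = -(δ * det y z ^ 2) := by rw [← mul_assoc, ← hdet]; ring
  linarith [mul_nonneg ht.1 hnonneg]

/-- A one-sided chain of tiles of `x`: the `n`-th tile has corner `A n` and sides `y`, `Z n`, shares
with the next one its edge opposite to `edgeSegment (A n) y`, and all tiles progress to the same
side of the line directed by `y`. -/
structure IsHalfChain (x : Set Rhombus) (y : Pt) (A Z : ℕ → Pt) : Prop where
  succ : ∀ n, A (n + 1) = A n + Z n
  tile : ∀ n, ∃ T ∈ x, T.HasCorner (A n) y (Z n)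
  det_pos : ∀ n, 0 < det y (Z n) * det y (Z 0)

theorem IsFinShapeTiling.exists_isHalfChain (hx : IsFinShapeTiling x) {T : Rhombus} (hT : T ∈ x)
    {a y z : Pt} (h : T.HasCorner a y z) : ∃ A Z, A 0 = a ∧ Z 0 = z ∧ IsHalfChain x y A Z := by
  let P (s : Pt × Pt) : Prop := (∃ T ∈ x, T.HasCorner s.1 y s.2) ∧ 0 < det y s.2 * det y z
  have step (s : {s // P s}) : ∃ s' : {s // P s}, s'.1.1 = s.1.1 + s.1.2 := by
    obtain ⟨⟨b, w⟩, ⟨T₁, hT₁, hw⟩, hpos⟩ := s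
    obtain ⟨T', hT', z', hz', hneg⟩ := hx.exists_tile_across hT₁ hw.flip
    refine ⟨⟨(b + w, z'), ⟨T', hT', hz'⟩, ?_⟩, rfl⟩
    rw [map_neg, mul_neg, neg_lt_zero] at hneg
    exact pos_of_mul_pos_left
      (show 0 < det y z' * det y z * det y w ^ 2 by nlinarith [mul_pos hneg hpos]) (sq_nonneg _)
  choose f hf using step
  let s₀ : {s // P s} := ⟨(a, z), ⟨T, hT, h⟩, mul_self_pos.2 (h.det_ne_zero (hx.isTiling.1 T hT))⟩
  refine ⟨fun n => (f^[n] s₀).1.1, fun n => (f^[n] s₀).1.2, rfl, rfl, fun n => ?_,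
    fun n => (f^[n] s₀).2.1, fun n => (f^[n] s₀).2.2⟩
  simp only [Function.iterate_succ_apply', hf]

theorem exists_pos_forall_le_of_finite {ι : Type*} {S : Set ι} (hS : S.Finite) (f : ι → ℝ) :
    ∃ c > 0, ∀ w ∈ S, 0 < f w → c ≤ f w := by
  have small : ∀ᶠ c in 𝓝[>] (0 : ℝ), ∀ w ∈ S, 0 < f w → c ≤ f w := by
    rw [eventually_all_finite hS]
    intro w _
    by_cases hw : 0 < f w
    · filter_upwards [Ioo_mem_nhdsGT hw] with c hc _ using hc.2.le
    · exact Eventually.of_forall fun _ h => (hw h).elim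
  obtain ⟨c, hc, hc0⟩ := (small.and self_mem_nhdsWithin).exists
  exact ⟨c, hc0, hc⟩

theorem IsHalfChain.exists_growth (hx : IsFinShapeTiling x) {y : Pt} {A Z : ℕ → Pt}
    (h : IsHalfChain x y A Z) :
    ∃ c > 0, ∀ n : ℕ, det y (A 0) * det y (Z 0) + n * c ≤ det y (A n) * det y (Z 0) := by
  obtain ⟨c, hc, hle⟩ :=
    exists_pos_forall_le_of_finite hx.finite_edgeDirs (fun w => det y w * det y (Z 0))
  refine ⟨c, hc, fun n => ?_⟩
  induction n with
  | zero => simp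
  | succ n ih =>
    obtain ⟨T, hT, hn⟩ := h.tile n
    have := hle (Z n) ⟨T, hT, hn.hasEdgeDir.2⟩ (h.det_pos n)
    rw [h.succ, map_add, add_mul]
    push_cast
    linarith

end FiniteShapes

/-! ### Height functions -/

section Heights

open Filter Topology

open scoped Classical in
/-- The algebraic number of times the edge vector `q` follows the direction `w`: `1` if `q = w`,
`-1` if `q = -w` and `0` otherwise. -/
def edgeSign (w q : Pt) : ℝ := if q = w then 1 else if q = -w then -1 else 0

section EdgeSign

variable {w q : Pt}

@[simp]
theorem edgeSign_self (w : Pt) : edgeSign w w = 1 := if_pos rfl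

theorem edgeSign_eq_zero (h : q ≠ w) (h' : q ≠ -w) : edgeSign w q = 0 := by simp [edgeSign, h, h']

theorem edgeSign_neg (hw : w ≠ 0) (q : Pt) : edgeSign w (-q) = -edgeSign w q := by
  have : IsAddTorsionFree Pt := .of_isTorsionFree ℝ Pt
  have hw' : w ≠ -w := mt self_eq_neg.1 hw
  by_cases h : q = w
  · simp [edgeSign, h, hw'.symm]
  by_cases h' : q = -w
  · simp [edgeSign, h', hw'.symm]
  simp [edgeSign, h, h', neg_eq_iff_eq_neg]

theorem edgeSign_neg_left (hw : w ≠ 0) (q : Pt) : edgeSign (-w) q = -edgeSign w q := by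
  rw [← edgeSign_neg hw]
  simp [edgeSign, neg_eq_iff_eq_neg]

theorem edgeSign_of_det_ne_zero (h : det w q ≠ 0) : edgeSign w q = 0 := by
  apply edgeSign_eq_zero <;> rintro rfl <;> simp at h

theorem edgeSign_smul_of_ne_zero (h : edgeSign w q ≠ 0) : edgeSign w q • q = w := by
  unfold edgeSign at h ⊢
  split_ifs at h ⊢ with hq hq
  · rw [hq, one_smul]
  · rw [hq, neg_smul_neg, one_smul]
  · exact (h rfl).elim

end EdgeSign

/-- The linear form whose values at the sides `y`, `z` of a rhombus are `edgeSign w y` and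
`edgeSign w z`. -/
def heightForm (w y z : Pt) : Pt →ₗ[ℝ] ℝ :=
  (det y z)⁻¹ • (edgeSign w y • det.flip z + edgeSign w z • det y)

theorem heightForm_smul_add_smul (w : Pt) {y z : Pt} (h : det y z ≠ 0) (s t : ℝ) :
    heightForm w y z (s • y + t • z) = s * edgeSign w y + t * edgeSign w z := by
  simp only [heightForm, smul_add, LinearMap.add_apply, LinearMap.smul_apply, LinearMap.flip_apply,
    map_add, map_smul, smul_eq_mul, det_self, mul_zero, add_zero, zero_add]
  field_simp

theorem heightForm_self_nonneg (w : Pt) {y z : Pt} (h : det y z ≠ 0) : 0 ≤ heightForm w y z w := by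
  by_cases hy : edgeSign w y = 0
  · by_cases hz : edgeSign w z = 0
    · simp [heightForm, hy, hz]
    · have := heightForm_smul_add_smul w h 0 (edgeSign w z)
      rw [zero_smul, zero_add, edgeSign_smul_of_ne_zero hz] at this
      rw [this]
      nlinarith
  · have := heightForm_smul_add_smul w h (edgeSign w y) 0
    rw [zero_smul, add_zero, edgeSign_smul_of_ne_zero hy] at this
    rw [this]
    nlinarith

theorem Rhombus.HasCorner.heightForm_eq {w : Pt} (hw : w ≠ 0) {T : Rhombus} {a y z : Pt}
    (h : T.HasCorner a y z) : heightForm w T.u T.v = heightForm w y z := by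
  induction h with
  | base => rfl
  | @swap a y z _ ih =>
    rw [ih]
    ext1 d
    simp only [heightForm, LinearMap.add_apply, LinearMap.smul_apply, LinearMap.flip_apply,
      det_swap z y, det_swap d, smul_eq_mul]
    ring
  | flip _ ih =>
    rw [ih]
    ext1 d
    simp [heightForm, edgeSign_neg hw]

variable {x : Set Rhombus} {w : Pt}

theorem IsTiling.heightForm_eq_of_mem (hx : IsTiling x) (hw : w ≠ 0) {T T' : Rhombus} (hT : T ∈ x)
    (hT' : T' ∈ x) {p q : Pt} (hp : p ∈ T.support ∩ T'.support)
    (hq : q ∈ T.support ∩ T'.support) :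
    heightForm w T.u T.v (q - p) = heightForm w T'.u T'.v (q - p) := by
  rcases eq_or_ne T T' with rfl | hne
  · rfl
  rcases hx.2.2 T hT T' hT' hne with hST | ⟨r, -, -, hST⟩ | ⟨e, he, ⟨k, hk⟩, hST⟩ <;>
    rw [hST] at hp hq
  · exact hp.elim
  · rw [mem_singleton_iff.1 hp, mem_singleton_iff.1 hq, sub_self, map_zero, map_zero]
  · obtain ⟨a, y, z, h, rfl⟩ := Rhombus.HasCorner.exists_of_mem_edges he
    obtain ⟨z', h'⟩ := Rhombus.HasCorner.exists_of_edge_eq hk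
    obtain ⟨s, -, rfl⟩ := mem_edgeSegment.1 hp
    obtain ⟨t, -, rfl⟩ := mem_edgeSegment.1 hq
    have hsub (z : Pt) : a + t • y - (a + s • y) = (t - s) • y + (0 : ℝ) • z := by module
    rw [h.heightForm_eq hw, h'.heightForm_eq hw, hsub z,
      heightForm_smul_add_smul _ (h.det_ne_zero (hx.1 T hT)), ← hsub z, hsub z',
      heightForm_smul_add_smul _ (h'.det_ne_zero (hx.1 T' hT')), zero_mul, zero_mul]

namespace IsFinShapeTiling

theorem exists_forall_sub_eq_heightForm (hx : IsFinShapeTiling x) (hw : w ≠ 0) :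
    ∃ h : Pt → ℝ, ∀ T ∈ x, ∀ p ∈ T.support, ∀ q ∈ T.support,
      h q - h p = heightForm w T.u T.v (q - p) := by
  choose tile htile hmem using hx.isTiling.exists_mem_support
  let L (p q : Pt) : ℝ := heightForm w (tile q).u (tile q).v (q - p)
  have local_primitive (p : Pt) : ∃ ε > 0, ∃ H, IsPrimitiveOn L (ball p ε) H := by
    obtain ⟨ε, hε, hball⟩ := eventually_nhds_iff_ball.1 (hx.eventually_mem_support p)
    refine ⟨ε, hε, L p, fun p' hp' => ?_⟩
    filter_upwards [hx.eventually_mem_support p', isOpen_ball.mem_nhds hp'] with q hqp' hq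
    have := hx.isTiling.heightForm_eq_of_mem hw (htile p') (htile q)
      ⟨hball p' hp' _ (htile p') (hmem p'), hball q hq _ (htile q) (hmem q)⟩
      ⟨hmem p', hqp' _ (htile q) (hmem q)⟩
    simp only [L, this, ← map_sub, sub_sub_sub_cancel_right]
  obtain ⟨h, hh⟩ := exists_isPrimitiveOn_univ local_primitive
  refine ⟨h, fun T hT p hp q hq => ?_⟩
  refine T.isPreconnected_support.induction₂
    (fun p q => h q - h p = heightForm w T.u T.v (q - p)) (fun p hp => ?_)
    (fun p q r _ _ _ hpq hqr => ?_) (fun p q _ _ hpq => ?_) hp hq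
  · filter_upwards [nhdsWithin_le_nhds (hh p (mem_univ p)),
      nhdsWithin_le_nhds (hx.eventually_mem_support p), self_mem_nhdsWithin] with q hL hqp hq
    rw [hL, hx.isTiling.heightForm_eq_of_mem hw hT (htile q)
      ⟨hp, hqp _ (htile q) (hmem q)⟩ ⟨hq, hmem q⟩]
  · rw [← sub_add_sub_cancel r q p, map_add, ← hqr, ← hpq, sub_add_sub_cancel]
  · rw [← neg_sub q p, map_neg, ← hpq, neg_sub]

end IsFinShapeTiling

theorem apply_le_of_eventually_le {g : ℝ → ℝ}
    (h : ∀ t, ∀ᶠ s in 𝓝 t, (t ≤ s → g s ≤ g t) ∧ (s ≤ t → g t ≤ g s)) {a b : ℝ} (hab : a ≤ b) :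
    g b ≤ g a := by
  let S := {t ∈ Icc a b | g t ≤ g a}
  have hS : IsLUB S (sSup S) := isLUB_csSup ⟨a, ⟨le_rfl, hab⟩, le_rfl⟩ ⟨b, fun t ht => ht.1.2⟩
  set c := sSup S
  have hac : a ≤ c := hS.1 ⟨⟨le_rfl, hab⟩, le_rfl⟩
  obtain ⟨ε, hε, hball⟩ := Metric.eventually_nhds_iff.1 (h c)
  have near {s : ℝ} (h₁ : c - ε < s) (h₂ : s < c + ε) := @hball s
    (by rw [Real.dist_eq, abs_lt]; constructor <;> linarith)
  obtain ⟨r, hr, hcr, hrc⟩ := hS.exists_between (sub_lt_self c hε)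
  have hc : g c ≤ g a := ((near hcr (by linarith)).2 hrc).trans hr.2
  rcases (hS.2 fun t ht => ht.1.2 : c ≤ b).eq_or_lt with hcb | hcb
  · rwa [hcb] at hc
  obtain ⟨s, hcs, hs⟩ := exists_between (lt_min (lt_add_of_pos_right c hε) hcb)
  rw [lt_min_iff] at hs
  have hsS : s ∈ S :=
    ⟨⟨by linarith, hs.2.le⟩, ((near (by linarith) hs.1).1 hcs.le).trans hc⟩
  exact (hcs.not_ge (hS.1 hsS)).elim

theorem IsFinShapeTiling.sub_le_of_forall_heightForm_le (hx : IsFinShapeTiling x) {h : Pt → ℝ}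
    (hh : ∀ T ∈ x, ∀ p ∈ T.support, ∀ q ∈ T.support, h q - h p = heightForm w T.u T.v (q - p))
    {d : Pt} {C : ℝ} (hC : ∀ T ∈ x, heightForm w T.u T.v d ≤ C) (p : Pt) :
    h (p + d) - h p ≤ C := by
  have := apply_le_of_eventually_le (g := fun t => h (p + t • d) - C * t) (fun t => ?_) zero_le_one
  · simp only [one_smul, mul_one, zero_smul, add_zero, mul_zero, sub_zero] at this
    linarith
  have hcont : Continuous fun s : ℝ => p + s • d := by fun_prop
  filter_upwards [hcont.continuousAt.eventually (hx.eventually_mem_support (p + t • d))] with s hs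
  obtain ⟨T, hT, hsT⟩ := hx.isTiling.exists_mem_support (p + s • d)
  have hsub := hh T hT _ (hs T hT hsT) _ hsT
  rw [show p + s • d - (p + t • d) = (s - t) • d by module, map_smul, smul_eq_mul] at hsub
  have := hC T hT
  constructor <;> intro hst <;> nlinarith

/-- `h` is a height function of the tiling `x` for the direction `w`: it increases by `1` along the
edges of vector `w` and is constant along those of the other directions. -/
structure IsHeight (x : Set Rhombus) (w : Pt) (h : Pt → ℝ) : Prop where
  ne_zero : w ≠ 0
  apply_add : ∀ T ∈ x, ∀ {a y z : Pt}, T.HasCorner a y z → ∀ {s t : ℝ}, s ∈ Icc (0 : ℝ) 1 →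
    t ∈ Icc (0 : ℝ) 1 → h (a + s • y + t • z) = h a + s * edgeSign w y + t * edgeSign w z
  lipschitz : ∃ K, LipschitzWith K h
  le_add_smul : ∀ (p : Pt) {c : ℝ}, 0 ≤ c → h p ≤ h (p + c • w)

theorem IsFinShapeTiling.exists_heightForm_le (hx : IsFinShapeTiling x) (w : Pt) :
    ∃ K, ∀ T ∈ x, ∀ d, heightForm w T.u T.v d ≤ K * ‖d‖ := by
  let N (s : Pt × Pt) : ℝ := ‖(heightForm w s.1 s.2).toContinuousLinearMap‖
  obtain ⟨K, hK⟩ := (hx.finite_shapes.image N).bddAbove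
  refine ⟨K, fun T hT d => (le_abs_self _).trans ?_⟩
  refine ((heightForm w T.u T.v).toContinuousLinearMap.le_opNorm d).trans ?_
  exact mul_le_mul_of_nonneg_right (hK ⟨_, ⟨T, hT, rfl⟩, rfl⟩) (norm_nonneg d)

theorem IsFinShapeTiling.exists_isHeight (hx : IsFinShapeTiling x) (hw : w ≠ 0) :
    ∃ h, IsHeight x w h := by
  obtain ⟨h, hh⟩ := hx.exists_forall_sub_eq_heightForm hw
  refine ⟨h, hw, fun T hT a y z hc s t hs ht => ?_, ?_, fun p c hc => ?_⟩
  · have := hh T hT a (hc.mem_support.2 ⟨0, by simp, 0, by simp, by simp⟩) _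
      (hc.mem_support.2 ⟨s, hs, t, ht, rfl⟩)
    rw [hc.heightForm_eq hw, add_assoc, add_sub_cancel_left,
      heightForm_smul_add_smul _ (hc.det_ne_zero (hx.isTiling.1 T hT))] at this
    rw [add_assoc]
    linarith
  · obtain ⟨K, hK⟩ := hx.exists_heightForm_le w
    refine ⟨K.toNNReal, LipschitzWith.of_le_add_mul' K fun q p => ?_⟩
    have := hx.sub_le_of_forall_heightForm_le hh (fun T hT => hK T hT (q - p)) p
    rw [add_sub_cancel, ← dist_eq_norm] at this
    linarith
  · have := hx.sub_le_of_forall_heightForm_le (d := -(c • w)) (C := 0) hh (fun T hT => ?_)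
      (p + c • w)
    · rw [add_neg_cancel_right] at this
      linarith
    rw [map_neg, map_smul, neg_nonpos]
    exact mul_nonneg hc (heightForm_self_nonneg w (det_ne_zero_of_linearIndependent
      (hx.isTiling.1 T hT).1))

theorem IsHeight.neg {h : Pt → ℝ} (hh : IsHeight x w h) : IsHeight x (-w) (-h) := by
  obtain ⟨K, hK⟩ := hh.lipschitz
  refine ⟨neg_ne_zero.2 hh.ne_zero, fun T hT a y z hc s t hs ht => ?_, ⟨K, hK.neg⟩,
    fun p c hc => ?_⟩
  · simp only [Pi.neg_apply, hh.apply_add T hT hc hs ht, edgeSign_neg_left hh.ne_zero]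
    ring
  · simpa using hh.le_add_smul (p + c • -w) hc

end Heights

/-! ### Cross tiles -/

section CrossTiles

open Bornology

variable {x : Set Rhombus} {w y z : Pt} {f g : Pt → ℝ}

theorem Rhombus.HasCorner.eq_of_hasCorner {T : Rhombus} {a a' : Pt} (h : T.HasCorner a y z)
    (h' : T.HasCorner a' y z) (hT : T.IsValid) : a = a' := by
  have mem {s : ℝ} (hs : s ∈ Icc (0 : ℝ) 1) : a' + s • y + s • z ∈ T.support :=
    h'.mem_support.2 ⟨s, hs, s, hs, rfl⟩
  obtain ⟨s, hs, t, ht, e⟩ := h.mem_support.1 (mem (s := 0) (by simp))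
  obtain ⟨s', hs', t', ht', e'⟩ := h.mem_support.1 (mem (s := 1) (by simp))
  rw [zero_smul, zero_smul, add_zero, add_zero] at e
  rw [e, show a + s • y + t • z + (1 : ℝ) • y + (1 : ℝ) • z = a + ((s + 1) • y + (t + 1) • z) by
    module, add_assoc, add_right_inj, smul_add_smul_inj (h.det_ne_zero hT)] at e'
  obtain ⟨rfl, rfl⟩ : s = 0 ∧ t = 0 :=
    ⟨by linarith [hs.1, hs'.2, e'.1], by linarith [ht.1, ht'.2, e'.2]⟩
  rw [e, zero_smul, zero_smul, add_zero, add_zero]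

namespace IsHeight

theorem apply_add_cross (hf : IsHeight x y f) {T : Rhombus} (hT : T ∈ x) {a : Pt}
    (h : T.HasCorner a y z) (hd : det y z ≠ 0) {s t : ℝ} (hs : s ∈ Icc (0 : ℝ) 1)
    (ht : t ∈ Icc (0 : ℝ) 1) : f (a + s • y + t • z) = f a + s := by
  rw [hf.apply_add T hT h hs ht, edgeSign_self, edgeSign_of_det_ne_zero hd, mul_one, mul_zero,
    add_zero]

theorem coord_eq_of_apply_eq (hf : IsHeight x y f) {T : Rhombus} (hT : T ∈ x) {a : Pt}
    (h : T.HasCorner a y z) (hd : det y z ≠ 0) {s c t : ℝ} (hs : s ∈ Ioo (0 : ℝ) 1)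
    (ht : t ∈ Icc (0 : ℝ) 1) (e : f (a + s • y + t • z) = f (a + c • y + t • z)) : s = c := by
  have mono {s s' : ℝ} (hss : s ≤ s') : f (a + s • y + t • z) ≤ f (a + s' • y + t • z) := by
    convert hf.le_add_smul (a + s • y + t • z) (sub_nonneg.2 hss) using 2
    module
  have linear {s : ℝ} (hs : s ∈ Ioo (0 : ℝ) 1) :=
    hf.apply_add_cross hT h hd (Ioo_subset_Icc_self hs) ht
  by_contra hne
  rcases lt_or_gt_of_ne hne with hsc | hcs
  · obtain ⟨r, hsr, hr⟩ := exists_between (lt_min hsc hs.2)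
    rw [lt_min_iff] at hr
    linarith [mono hr.1.le, linear hs, linear ⟨hs.1.trans hsr, hr.2⟩]
  · obtain ⟨r, hr, hrs⟩ := exists_between (max_lt hcs hs.1)
    rw [max_lt_iff] at hr
    linarith [mono hr.1.le, linear hs, linear ⟨hr.2, hrs.trans hs.2⟩]

theorem apply_add_side (hf : IsHeight x w f) {T : Rhombus} (hT : T ∈ x) {a : Pt}
    (h : T.HasCorner a y z) : f (a + z) = f a + edgeSign w z := by
  simpa using hf.apply_add T hT h (s := 0) (t := 1) (by simp) (by simp)

end IsHeight

namespace IsHalfChain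

variable {A Z : ℕ → Pt} (h : IsHalfChain x y A Z)

include h

theorem det_ne_zero (n : ℕ) : det y (Z n) ≠ 0 := left_ne_zero_of_mul (h.det_pos n).ne'

theorem ne_neg (n : ℕ) : Z n ≠ -Z 0 := by
  intro e
  have := h.det_pos n
  rw [e, map_neg, neg_mul] at this
  linarith [mul_self_nonneg (det y (Z 0))]

theorem edgeSign_nonneg (n : ℕ) : 0 ≤ edgeSign (Z 0) (Z n) := by
  by_cases hn : Z n = Z 0
  · simp [hn]
  · rw [edgeSign_eq_zero hn (h.ne_neg n)]

theorem height_succ (hf : IsHeight x w f) (n : ℕ) :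
    f (A (n + 1)) = f (A n) + edgeSign w (Z n) := by
  obtain ⟨T, hT, hn⟩ := h.tile n
  rw [h.succ, hf.apply_add_side hT hn]

theorem height_eq (hf : IsHeight x y f) (n : ℕ) : f (A n) = f (A 0) := by
  induction n with
  | zero => rfl
  | succ n ih => rw [h.height_succ hf, ih, edgeSign_of_det_ne_zero (h.det_ne_zero n), add_zero]

theorem add_one_le_height (hg : IsHeight x (Z 0) g) (n : ℕ) : g (A 0) + 1 ≤ g (A (n + 1)) := by
  induction n with
  | zero => rw [h.height_succ hg, edgeSign_self]
  | succ n ih =>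
    rw [h.height_succ hg (n + 1)]
    linarith [h.edgeSign_nonneg (n + 1)]

theorem exists_eq_add_smul_add_smul (hx : IsFinShapeTiling x) {p : Pt}
    (hp : 0 < det y (p - A 0) * det y (Z 0)) :
    ∃ n, ∃ r ∈ Ico (0 : ℝ) 1, ∃ c : ℝ, p = A n + c • y + r • Z n := by
  classical
  obtain ⟨c, hc, hgrow⟩ := h.exists_growth hx
  set D : Pt → ℝ := fun q => det y q * det y (Z 0)
  have hpA : D (A 0) < D p := by
    rw [map_sub, sub_mul] at hp
    exact sub_pos.1 hp
  have exceeds : ∃ n, D p < D (A n) := by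
    obtain ⟨n, hn⟩ := exists_nat_gt ((D p - D (A 0)) / c)
    rw [div_lt_iff₀ hc] at hn
    exact ⟨n, by linarith [hgrow n]⟩
  obtain ⟨n, hn⟩ : ∃ n, Nat.find exceeds = n + 1 :=
    Nat.exists_eq_succ_of_ne_zero fun h0 => hpA.not_gt (h0 ▸ Nat.find_spec exceeds)
  have hlt : D p < D (A (n + 1)) := hn ▸ Nat.find_spec exceeds
  have hle : D (A n) ≤ D p := not_lt.1 (Nat.find_min exceeds (by omega))
  have hadd : D (A (n + 1)) = D (A n) + D (Z n) := by simp only [D, h.succ, map_add, add_mul]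
  have hpos : 0 < D (Z n) := h.det_pos n
  set r := (D p - D (A n)) / D (Z n) with hr
  have hdet : det y (p - (A n + r • Z n)) = 0 := by
    refine (mul_eq_zero.1 (?_ : _ * det y (Z 0) = 0)).resolve_right (h.det_ne_zero 0)
    have : r * D (Z n) = D p - D (A n) := div_mul_cancel₀ _ hpos.ne'
    simp only [D, map_sub, map_add, map_smul, smul_eq_mul] at this ⊢
    linarith
  have hy : y ≠ 0 := by
    rintro rfl
    simpa using h.det_ne_zero 0
  obtain ⟨c, hc⟩ := exists_eq_smul_of_det_eq_zero hy hdet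
  refine ⟨n, r, ⟨div_nonneg (by linarith) hpos.le, (div_lt_one hpos).2 (by linarith)⟩, c, ?_⟩
  rw [add_right_comm, ← hc, add_sub_cancel]

theorem not_isBounded_range (hx : IsFinShapeTiling x) : ¬ IsBounded (range A) := by
  intro hA
  obtain ⟨c, hc, hgrow⟩ := h.exists_growth hx
  have hbdd := ((det y).toContinuousLinearMap.lipschitz.isBounded_image hA).exists_norm_le
  obtain ⟨C, hC⟩ := hbdd
  obtain ⟨n, hn⟩ := exists_nat_gt ((C * ‖det y (Z 0)‖ - det y (A 0) * det y (Z 0)) / c)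
  rw [div_lt_iff₀ hc] at hn
  have hle : det y (A n) * det y (Z 0) ≤ C * ‖det y (Z 0)‖ := by
    refine (le_abs_self _).trans ?_
    rw [abs_mul]
    exact mul_le_mul_of_nonneg_right (hC _ ⟨A n, ⟨n, rfl⟩, rfl⟩) (abs_nonneg _)
  linarith [hgrow n]

end IsHalfChain

variable {u v : Pt}

/-- The tiles of `x` which have sides `y` and `z` are relatively dense. -/
def HasDenseCrosses (x : Set Rhombus) (y z : Pt) : Prop :=
  ∃ R : ℝ, ∀ p, ∃ T ∈ x, ∃ a ∈ closedBall p R, T.HasCorner a y z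

namespace HasDenseCrosses

variable (h : HasDenseCrosses x y z)

include h

theorem swap : HasDenseCrosses x z y := by
  obtain ⟨R, hR⟩ := h
  refine ⟨R, fun p => ?_⟩
  obtain ⟨T, hT, a, ha, hc⟩ := hR p
  exact ⟨T, hT, a, ha, hc.swap⟩

theorem neg_right : HasDenseCrosses x y (-z) := by
  obtain ⟨R, hR⟩ := h
  refine ⟨R, fun p => ?_⟩
  obtain ⟨T, hT, a, ha, hc⟩ := hR (p - z)
  refine ⟨T, hT, a + z, ?_, hc.flip⟩
  rwa [mem_closedBall, dist_eq_norm, sub_sub_eq_add_sub, ← dist_eq_norm] at ha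

end HasDenseCrosses

theorem IsFinShapeTiling.exists_eq_add_of_height_eq (hx : IsFinShapeTiling x) (hf : IsHeight x u f)
    (hg : IsHeight x v g) {T : Rhombus} (hT : T ∈ x) {a p : Pt} (h : T.HasCorner a u v) {s t : ℝ}
    (hs : s ∈ Ioo (0 : ℝ) 1) (ht : t < 1) (hfp : f p = f a + s) (hgp : g p = g a + t)
    (hp : 0 < det u (p - a) * det u v) : ∃ r ∈ Ioo (0 : ℝ) 1, p = a + s • u + r • v := by
  obtain ⟨A, Z, rfl, rfl, hch⟩ := hx.exists_isHalfChain hT h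
  obtain ⟨n, r, hr, c, rfl⟩ := hch.exists_eq_add_smul_add_smul hx hp
  have hr' := Ico_subset_Icc_self hr
  obtain ⟨T₁, hT₁, h₁⟩ := hch.tile n
  obtain rfl : s = c := hf.coord_eq_of_apply_eq hT₁ h₁ (hch.det_ne_zero n) hs hr'
    (by rw [hf.apply_add_cross hT₁ h₁ (hch.det_ne_zero n) (Ioo_subset_Icc_self hs) hr', hfp,
      hch.height_eq hf])
  rcases n with _ | n
  · refine ⟨r, ⟨hr.1.lt_of_ne ?_, hr.2⟩, rfl⟩
    rintro rfl
    simp at hp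
  · have hle := hg.apply_add T₁ hT₁ h₁ (Ioo_subset_Icc_self hs) hr'
    rw [edgeSign_of_det_ne_zero (by rw [det_swap, neg_ne_zero]; exact hch.det_ne_zero 0)] at hle
    nlinarith [hch.add_one_le_height hg n, mul_nonneg hr.1 (hch.edgeSign_nonneg (n + 1))]

theorem IsFinShapeTiling.eq_of_abs_sub_height_lt (hx : IsFinShapeTiling x) (hf : IsHeight x u f)
    (hg : IsHeight x v g) {T T' : Rhombus} (hT : T ∈ x) (hT' : T' ∈ x) {a a' : Pt}
    (h : T.HasCorner a u v) (h' : T'.HasCorner a' u v) (hfa : |f a - f a'| < 1)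
    (hga : |g a - g a'| < 1) : T = T' := by
  wlog hD : det u (a + ((1 - (g a - g a')) / 2) • v) * det u v ≤
      det u (a' + ((1 - (g a' - g a)) / 2) • v) * det u v generalizing T T' a a'
  · exact (this hT' hT h' h (by rwa [abs_sub_comm]) (by rwa [abs_sub_comm]) (not_le.1 hD).le).symm
  have hd := h.det_ne_zero (hx.isTiling.1 T hT)
  have hd' : det v u ≠ 0 := by rwa [det_swap, neg_ne_zero]
  rw [abs_lt] at hfa hga
  set s := (1 - (f a - f a')) / 2 with hs
  set t := (1 - (g a - g a')) / 2 with ht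
  set s' := (1 - (f a' - f a)) / 2 with hs'
  set t' := (1 - (g a' - g a)) / 2 with ht'
  have hsI : s ∈ Ioo (0 : ℝ) 1 := ⟨by linarith, by linarith⟩
  have hs'I : s' ∈ Icc (0 : ℝ) 1 := ⟨by linarith, by linarith⟩
  have ht'I : t' ∈ Icc (0 : ℝ) 1 := ⟨by linarith, by linarith⟩
  set p := a' + s' • u + t' • v with hp
  have hfp : f p = f a + s := by
    rw [hp, hf.apply_add_cross hT' h' hd hs'I ht'I]
    linarith
  have hgp : g p = g a + t := by
    rw [hp, add_right_comm, hg.apply_add_cross hT' h'.swap hd' ht'I hs'I]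
    linarith
  have hpos : 0 < det u (p - a) * det u v := by
    have : 0 < t * (det u v * det u v) := mul_pos (by linarith) (mul_self_pos.2 hd)
    simp only [hp, map_sub, map_add, map_smul, smul_eq_mul, det_self] at hD ⊢
    linarith
  obtain ⟨r, hr, e⟩ := hx.exists_eq_add_of_height_eq hf hg hT h hsI (by linarith) hfp hgp hpos
  exact hx.isTiling.eq_of_interior_mem hT hT' h hsI hr
    (e ▸ h'.mem_support.2 ⟨s', hs'I, t', ht'I, rfl⟩)

theorem IsFinShapeTiling.eq_of_floor_height_eq (hx : IsFinShapeTiling x) (hf : IsHeight x u f)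
    (hg : IsHeight x v g) {T T' : Rhombus} (hT : T ∈ x) (hT' : T' ∈ x) {a a' : Pt}
    (h : T.HasCorner a u v) (h' : T'.HasCorner a' u v) (hfa : ⌊f a⌋ = ⌊f a'⌋)
    (hga : ⌊g a⌋ = ⌊g a'⌋) : a = a' := by
  obtain rfl := hx.eq_of_abs_sub_height_lt hf hg hT hT' h h'
    (Int.abs_sub_lt_one_of_floor_eq_floor hfa) (Int.abs_sub_lt_one_of_floor_eq_floor hga)
  exact h.eq_of_hasCorner h' (hx.isTiling.1 T hT)

theorem IsFinShapeTiling.finite_cross_corners (hx : IsFinShapeTiling x) (hf : IsHeight x u f)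
    (hg : IsHeight x v g) (b c b' c' : ℝ) :
    {a | (∃ T ∈ x, T.HasCorner a u v) ∧ f a ∈ Icc b c ∧ g a ∈ Icc b' c'}.Finite := by
  refine Set.Finite.of_finite_image (f := fun a => (⌊f a⌋, ⌊g a⌋)) ?_ ?_
  · refine ((finite_Icc ⌊b⌋ ⌊c⌋).prod (finite_Icc ⌊b'⌋ ⌊c'⌋)).subset ?_
    rintro _ ⟨a, ⟨-, hfa, hga⟩, rfl⟩
    exact ⟨⟨Int.floor_mono hfa.1, Int.floor_mono hfa.2⟩,
      Int.floor_mono hga.1, Int.floor_mono hga.2⟩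
  · rintro a ⟨⟨T, hT, h⟩, -⟩ a' ⟨⟨T', hT', h'⟩, -⟩ e
    rw [Prod.mk.injEq] at e
    exact hx.eq_of_floor_height_eq hf hg hT hT' h h' e.1 e.2

namespace IsHalfChain

variable {A Z : ℕ → Pt} (h : IsHalfChain x y A Z)

include h

theorem height_of_forall_ne (hg : IsHeight x (Z 0) g) {n : ℕ} (hn : ∀ m < n, Z (m + 1) ≠ Z 0) :
    g (A (n + 1)) = g (A 0) + 1 := by
  induction n with
  | zero => rw [h.height_succ hg, edgeSign_self]
  | succ n ih =>
    rw [h.height_succ hg, ih fun m hm => hn m (by omega),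
      edgeSign_eq_zero (hn n (by omega)) (h.ne_neg _), add_zero]

theorem color_of_forall_ne {α : Type*} {F : Set Pt → α}
    (hF : ∀ T ∈ x, ∀ a w, T.HasCorner a y w → w ≠ Z 0 → w ≠ -Z 0 →
      F (edgeSegment a y) = F (edgeSegment (a + w) y)) {n : ℕ} (hn : ∀ m < n, Z (m + 1) ≠ Z 0) :
    F (edgeSegment (A (n + 1)) y) = F (edgeSegment (A 1) y) := by
  induction n with
  | zero => rfl
  | succ n ih =>
    obtain ⟨T, hT, hc⟩ := h.tile (n + 1)
    rw [h.succ, ← hF T hT _ _ hc (hn n (by omega)) (h.ne_neg _), ih fun m hm => hn m (by omega)]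

theorem exists_succ_eq (hx : IsFinShapeTiling x) (hf : IsHeight x y f) (hg : IsHeight x (Z 0) g)
    (hdense : HasDenseCrosses x y (Z 0)) : ∃ n, Z (n + 1) = Z 0 := by
  by_contra! hne
  obtain ⟨R, hR⟩ := hdense
  obtain ⟨K, hK⟩ := hf.lipschitz
  obtain ⟨K', hK'⟩ := hg.lipschitz
  have hfin := hx.finite_cross_corners hf hg (f (A 0) - K * R) (f (A 0) + K * R)
    (g (A 0) - K' * R) (g (A 0) + 1 + K' * R)
  refine h.not_isBounded_range hx (((isBounded_biUnion hfin).2 fun a _ =>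
    isBounded_closedBall (x := a) (r := R)).subset ?_)
  rintro _ ⟨n, rfl⟩
  have hgn : g (A n) ∈ Icc (g (A 0)) (g (A 0) + 1) := by
    rcases n with _ | n
    · simp
    · simp [h.height_of_forall_ne hg fun m (_ : m < n) => hne m]
  obtain ⟨T, hT, a, ha, hc⟩ := hR (A n)
  have hfa := (hK.dist_le_mul a (A n)).trans (mul_le_mul_of_nonneg_left ha K.2)
  have hga := (hK'.dist_le_mul a (A n)).trans (mul_le_mul_of_nonneg_left ha K'.2)
  rw [Real.dist_eq, abs_le] at hfa hga
  rw [h.height_eq hf] at hfa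
  refine mem_iUnion₂.2 ⟨a, ⟨⟨T, hT, hc⟩, ⟨?_, ?_⟩, ?_, ?_⟩, mem_closedBall_comm.1 ha⟩
  all_goals linarith [hgn.1, hgn.2]

end IsHalfChain

theorem IsFinShapeTiling.exists_next_cross (hx : IsFinShapeTiling x) (hf : IsHeight x y f)
    (hg : IsHeight x z g) (hdense : HasDenseCrosses x y z) {T : Rhombus} (hT : T ∈ x)
    {a : Pt} (h : T.HasCorner a y z) {α : Type*} {F : Set Pt → α}
    (hF : ∀ T ∈ x, ∀ a w, T.HasCorner a y w → w ≠ z → w ≠ -z →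
      F (edgeSegment a y) = F (edgeSegment (a + w) y)) :
    ∃ T' ∈ x, ∃ a', T'.HasCorner a' y z ∧ f a' = f a ∧ g a' = g a + 1 ∧
      F (edgeSegment a' y) = F (edgeSegment (a + z) y) := by
  classical
  obtain ⟨A, Z, rfl, rfl, hch⟩ := hx.exists_isHalfChain hT h
  have hex := hch.exists_succ_eq hx hf hg hdense
  have hne : ∀ m < Nat.find hex, Z (m + 1) ≠ Z 0 := fun m hm => Nat.find_min hex hm
  obtain ⟨T', hT', hc⟩ := hch.tile (Nat.find hex + 1)
  rw [Nat.find_spec hex] at hc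
  refine ⟨T', hT', _, hc, hch.height_eq hf _, hch.height_of_forall_ne hg hne, ?_⟩
  rw [hch.color_of_forall_ne hF hne, ← hch.succ]

end CrossTiles

/-! ### Colourings of rhombus tilings -/

section EdgeColors

theorem edgeSegment_left_injective (w : Pt) : Function.Injective (edgeSegment · w) := by
  intro a b h
  rcases edgeSegment_inj h with ⟨hab, -⟩ | ⟨hab, hw⟩
  · exact hab
  · have : IsAddTorsionFree Pt := .of_isTorsionFree ℝ Pt
    rw [hab, self_eq_neg.1 hw, add_zero]

theorem edgeSegment_ne_of_det_ne_zero {y z : Pt} (h : det y z ≠ 0) (a b : Pt) :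
    edgeSegment a y ≠ edgeSegment b z := by
  intro e
  rcases edgeSegment_inj e with ⟨-, rfl⟩ | ⟨-, rfl⟩ <;> simp at h

theorem image_add_edgeSegment (a d w : Pt) :
    (d + ·) '' edgeSegment a w = edgeSegment (a + d) w := by
  rw [edgeSegment, segment_translate_image, add_comm d, ← add_assoc, add_comm d, edgeSegment,
    add_right_comm]

namespace Rhombus

theorem edge_injective {T : Rhombus} (hT : T.IsValid) : Function.Injective T.edge := by
  have huv := HasCorner.base.det_ne_zero hT
  have hvu := HasCorner.base.swap.det_ne_zero hT
  have hu : T.u ≠ 0 := by rintro h; simp [h] at huv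
  have hv : T.v ≠ 0 := by rintro h; simp [h] at huv
  intro i j h
  fin_cases i <;> fin_cases j <;>
    simp_all [edge_zero, edge_one, edge_two, edge_three, edgeSegment_ne_of_det_ne_zero,
      (edgeSegment_left_injective _).eq_iff]

theorem edge_translate (T : Rhombus) (d : Pt) (k : Fin 4) :
    (T.translate d).edge k = (d + ·) '' T.edge k := by
  fin_cases k <;> simp only [Fin.zero_eta, Fin.mk_one, Fin.reduceFinMk, edge_zero, edge_one,
    edge_two, edge_three, image_add_edgeSegment, translate, add_right_comm _ _ d]

theorem SameShape.eq_translate {T T' : Rhombus} (h : T.SameShape T') :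
    T = T'.translate (T.pos - T'.pos) := by
  rw [translate, add_sub_cancel, ← h.1, ← h.2]

namespace HasCorner

variable {T : Rhombus} {a y z : Pt}

theorem translate (h : T.HasCorner a y z) (d : Pt) : (T.translate d).HasCorner (a + d) y z := by
  induction h with
  | base => exact base
  | swap _ ih => exact ih.swap
  | flip _ ih => rw [add_right_comm]; exact ih.flip

theorem translate_iff (T : Rhombus) (a y z d : Pt) :
    (T.translate d).HasCorner (a + d) y z ↔ T.HasCorner a y z := by
  refine ⟨fun h => ?_, fun h => h.translate d⟩
  simpa [Rhombus.translate] using h.translate (-d)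

theorem side_of_mem_edges (h : T.HasCorner a y z) {b w : Pt} (hb : edgeSegment b w ∈ T.edges) :
    (w = y ∨ w = -y) ∨ w = z ∨ w = -z := by
  rcases h.mem_edges.1 hb with e | e | e | e <;> rcases edgeSegment_inj e with ⟨-, hw⟩ | ⟨-, hw⟩ <;>
    simp [hw]

theorem eq_or_eq_neg {b w : Pt} (h : T.HasCorner a y z) (h' : T.HasCorner b y w)
    (hT : T.IsValid) : w = z ∨ w = -z := by
  refine (h.side_of_mem_edges (h'.mem_edges.2 (.inr (.inr (.inl rfl))))).resolve_left ?_
  have hd := h'.det_ne_zero hT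
  rintro (rfl | rfl) <;> simp at hd

theorem base_of_mem_edges (h : T.HasCorner a y z) (hd : det y z ≠ 0) {b : Pt}
    (hb : edgeSegment b y ∈ T.edges) : b = a ∨ b = a + z := by
  rcases h.mem_edges.1 hb with e | e | e | e
  · exact .inl (edgeSegment_left_injective y e)
  · exact .inr (edgeSegment_left_injective y e)
  · exact (edgeSegment_ne_of_det_ne_zero hd _ _ e).elim
  · exact (edgeSegment_ne_of_det_ne_zero hd _ _ e).elim

end HasCorner

end Rhombus

variable {u v : Pt} {T : Rhombus}

open scoped Classical in
/-- The colour of the edge `e` of the tile `T` as far as the edges of direction `u` are concerned: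
in a tile with sides `u` and `v` the two edges of direction `u` are coloured `c` and `c'`, the
second one being the one shifted by `v`; in the other tiles they are both coloured `c`. The edges
of other directions are coloured `o`. -/
def sideColor (u v : Pt) (T : Rhombus) (c c' o : ℕ) (e : Set Pt) : ℕ :=
  if ∃ a, T.HasCorner a u v ∧ e = edgeSegment (a + v) u then c'
  else if ∃ a, e = edgeSegment a u then c
  else o

section SideColor

variable {c c' o : ℕ}

theorem Rhombus.HasCorner.sideColor_add {a : Pt} (h : T.HasCorner a u v) :
    sideColor u v T c c' o (edgeSegment (a + v) u) = c' :=
  if_pos ⟨a, h, rfl⟩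

theorem Rhombus.HasCorner.sideColor {a : Pt} (h : T.HasCorner a u v) (hT : T.IsValid) :
    sideColor u v T c c' o (edgeSegment a u) = c := by
  rw [_root_.sideColor, if_neg, if_pos ⟨a, rfl⟩]
  rintro ⟨b, hb, e⟩
  obtain rfl : v = 0 := by
    simpa [h.eq_of_hasCorner hb hT] using edgeSegment_left_injective u e
  simpa using h.det_ne_zero hT

theorem sideColor_of_forall_not_hasCorner (h : ∀ a, ¬ T.HasCorner a u v) (b : Pt) :
    sideColor u v T c c' o (edgeSegment b u) = c := by
  rw [sideColor, if_neg (fun ⟨a, ha, _⟩ => h a ha), if_pos ⟨b, rfl⟩]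

theorem sideColor_of_forall_ne {e : Set Pt} (h : ∀ a, e ≠ edgeSegment a u) :
    sideColor u v T c c' o e = o := by
  rw [sideColor, if_neg (fun ⟨a, _, ha⟩ => h _ ha), if_neg (fun ⟨a, ha⟩ => h a ha)]

theorem sideColor_translate (d : Pt) (e : Set Pt) :
    sideColor u v (T.translate d) c c' o ((d + ·) '' e) = sideColor u v T c c' o e := by
  have image_eq {b : Pt} : (d + ·) '' e = edgeSegment (b + d) u ↔ e = edgeSegment b u := by
    rw [← image_add_edgeSegment]
    exact (image_injective.2 (add_right_injective d)).eq_iff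
  have corner : (∃ a, (T.translate d).HasCorner a u v ∧ (d + ·) '' e = edgeSegment (a + v) u) ↔
      ∃ a, T.HasCorner a u v ∧ e = edgeSegment (a + v) u :=
    ((Equiv.addRight d).exists_congr fun a => by
      rw [Equiv.coe_addRight, Rhombus.HasCorner.translate_iff, add_right_comm, image_eq]).symm
  have side : (∃ a, (d + ·) '' e = edgeSegment a u) ↔ ∃ a, e = edgeSegment a u :=
    ((Equiv.addRight d).exists_congr fun a => by rw [Equiv.coe_addRight, image_eq]).symm
  unfold sideColor
  congr 1
  · exact propext corner
  · congr 1
    exact propext side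

end SideColor

/-- The colour which the Wang tile `t = (west, south, east, north)` puts on the edge `e` of the
rhombus `T`. The tiles with sides `u` and `v` play the role of the cells of the grid, their edges
of direction `u` being the west and east ones and their edges of direction `v` the south and north
ones. The other tiles transmit the colours of their edges of direction `u` and `v`. -/
def edgeColor (u v : Pt) (T : Rhombus) (t : ℕ × ℕ × ℕ × ℕ) (e : Set Pt) : ℕ :=
  sideColor u v T t.1 t.2.2.1 (sideColor v u T t.2.1 t.2.2.2 0 e) e

theorem Rhombus.HasCorner.forall_edges_eq_edgeColor_iff {a : Pt} (h : T.HasCorner a u v)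
    (hT : T.IsValid) (F : Set Pt → ℕ) (t : ℕ × ℕ × ℕ × ℕ) :
    (∀ e ∈ T.edges, F e = edgeColor u v T t e) ↔
      (F (edgeSegment a u), F (edgeSegment a v), F (edgeSegment (a + v) u),
        F (edgeSegment (a + u) v)) = t := by
  have hne (b b' : Pt) := edgeSegment_ne_of_det_ne_zero (h.swap.det_ne_zero hT) b b'
  have forall_edges {P : Set Pt → Prop} : (∀ e ∈ T.edges, P e) ↔ P (edgeSegment a u) ∧
      P (edgeSegment (a + v) u) ∧ P (edgeSegment a v) ∧ P (edgeSegment (a + u) v) := by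
    simp only [h.mem_edges, forall_eq_or_imp, forall_eq]
  simp only [forall_edges, edgeColor, h.sideColor hT, h.sideColor_add,
    sideColor_of_forall_ne (hne _), h.swap.sideColor hT, h.swap.sideColor_add, Prod.ext_iff]
  tauto

theorem forall_edges_eq_edgeColor_iff_of_forall_not_hasCorner (hd : det u v ≠ 0)
    (h : ∀ a, ¬ T.HasCorner a u v) (F : Set Pt → ℕ) (t : ℕ × ℕ × ℕ × ℕ) :
    (∀ e ∈ T.edges, F e = edgeColor u v T t e) ↔
      (∀ b, edgeSegment b u ∈ T.edges → F (edgeSegment b u) = t.1) ∧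
        (∀ b, edgeSegment b v ∈ T.edges → F (edgeSegment b v) = t.2.1) ∧
          ∀ e ∈ T.edges, (∀ b, e ≠ edgeSegment b u) → (∀ b, e ≠ edgeSegment b v) → F e = 0 := by
  have h' (a : Pt) : ¬ T.HasCorner a v u := fun ha => h a ha.swap
  have west (b : Pt) : edgeColor u v T t (edgeSegment b u) = t.1 :=
    sideColor_of_forall_not_hasCorner h b
  have south (b : Pt) : edgeColor u v T t (edgeSegment b v) = t.2.1 := by
    rw [edgeColor, sideColor_of_forall_ne fun a => (edgeSegment_ne_of_det_ne_zero hd a b).symm,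
      sideColor_of_forall_not_hasCorner h']
  have other {e : Set Pt} (hu : ∀ b, e ≠ edgeSegment b u) (hv : ∀ b, e ≠ edgeSegment b v) :
      edgeColor u v T t e = 0 := by
    rw [edgeColor, sideColor_of_forall_ne hu, sideColor_of_forall_ne hv]
  refine ⟨fun hF => ⟨fun b hb => (hF _ hb).trans (west b), fun b hb => (hF _ hb).trans (south b),
    fun e he hu hv => (hF e he).trans (other hu hv)⟩, fun ⟨hw, hs, ho⟩ e he => ?_⟩
  by_cases hu : ∃ b, e = edgeSegment b u
  · obtain ⟨b, rfl⟩ := hu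
    rw [hw b he, west]
  by_cases hv : ∃ b, e = edgeSegment b v
  · obtain ⟨b, rfl⟩ := hv
    rw [hs b he, south]
  push Not at hu hv
  rw [ho e he hu hv, other hu hv]

/-- `F` colours every tile of `x` with edges as prescribed by some Wang tile of `W`. -/
def IsWangColoring (u v : Pt) (W : List (ℕ × ℕ × ℕ × ℕ)) (x : Set Rhombus) (F : Set Pt → ℕ) :
    Prop :=
  ∀ T ∈ x, ∃ t ∈ W, ∀ e ∈ T.edges, F e = edgeColor u v T t e

/-- The tileset carrying the Wang tiles of `W` on the tiles with sides `u` and `v`. -/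
def rhombusTileset {k : ℕ} (u v : Pt) (shapes : Fin k → Rhombus) (W : List (ℕ × ℕ × ℕ × ℕ)) :
    List (SymbTile k) :=
  (List.finRange k).flatMap fun i => W.map fun t =>
    let color j := edgeColor u v (shapes i) t ((shapes i).edge j)
    (i, color 0, color 1, color 2, color 3)

theorem exists_mem_rhombusTileset {k : ℕ} {u v : Pt} {shapes : Fin k → Rhombus}
    {W : List (ℕ × ℕ × ℕ × ℕ)} {T : ColoredRhombus} :
    (∃ p ∈ rhombusTileset u v shapes W, Realizes shapes T p) ↔
      (∃ i, T.shape.SameShape (shapes i)) ∧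
        ∃ t ∈ W, ∀ j, T.color j = edgeColor u v T.shape t (T.shape.edge j) := by
  have color_iff {i : Fin k} (h : T.shape.SameShape (shapes i)) (t : ℕ × ℕ × ℕ × ℕ) :
      (∀ j, T.color j = edgeColor u v T.shape t (T.shape.edge j)) ↔
        ∀ j, T.color j = edgeColor u v (shapes i) t ((shapes i).edge j) := by
    rw [h.eq_translate]
    simp only [Rhombus.edge_translate, edgeColor, sideColor_translate]
  have realizes_iff (i : Fin k) (c : Fin 4 → ℕ) :
      Realizes shapes T (i, c 0, c 1, c 2, c 3) ↔
        T.shape.SameShape (shapes i) ∧ ∀ j, T.color j = c j := by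
    simp [Realizes, SymbTile.colors, funext_iff, Fin.forall_fin_succ]
  constructor
  · rintro ⟨p, hp, hreal⟩
    obtain ⟨i, -, hi⟩ := List.mem_flatMap.1 hp
    obtain ⟨t, ht, rfl⟩ := List.mem_map.1 hi
    obtain ⟨hs, hc⟩ :=
      (realizes_iff i fun j => edgeColor u v (shapes i) t ((shapes i).edge j)).1 hreal
    exact ⟨⟨i, hs⟩, t, ht, (color_iff hs t).2 hc⟩
  · rintro ⟨⟨i, hs⟩, t, ht, hc⟩
    exact ⟨_, List.mem_flatMap.2 ⟨i, List.mem_finRange i, List.mem_map.2 ⟨t, ht, rfl⟩⟩,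
      (realizes_iff i _).2 ⟨hs, (color_iff hs t).1 hc⟩⟩

theorem IsColoredTiling.exists_edge_coloring {x : Set ColoredRhombus} (hx : IsColoredTiling x) :
    ∃ F : Set Pt → ℕ, ∀ t ∈ x, ∀ j, F (t.shape.edge j) = t.color j := by
  obtain ⟨htil, hinj, hmatch⟩ := hx
  let edge (p : x × Fin 4) : Set Pt := p.1.1.shape.edge p.2
  let color (p : x × Fin 4) : ℕ := p.1.1.color p.2
  have hfact : Function.FactorsThrough color edge := by
    rintro ⟨⟨t, ht⟩, i⟩ ⟨⟨s, hs⟩, j⟩ (h : t.shape.edge i = s.shape.edge j)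
    by_cases hts : t.shape = s.shape
    · obtain rfl := hinj t ht s hs hts
      rw [Rhombus.edge_injective (htil.1 _ ⟨t, ht, rfl⟩) h]
    · exact hmatch t ht s hs hts i j h
  exact ⟨Function.extend edge color 0, fun t ht j => hfact.extend_apply 0 (⟨t, ht⟩, j)⟩

theorem dominoPred_rhombusTileset_iff {k : ℕ} {shapes : Fin k → Rhombus} {X : Set (Set Rhombus)}
    (hsub : IsSubshift (range shapes) X) (u v : Pt) (W : List (ℕ × ℕ × ℕ × ℕ)) :
    DominoPred shapes X (rhombusTileset u v shapes W) ↔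
      ∃ x ∈ X, ∃ F, IsWangColoring u v W x F := by
  simp only [DominoPred, exists_mem_rhombusTileset]
  constructor
  · rintro ⟨x, hx, htile, hX⟩
    obtain ⟨F, hF⟩ := hx.exists_edge_coloring
    refine ⟨_, hX, F, ?_⟩
    rintro _ ⟨T, hT, rfl⟩
    obtain ⟨-, t, ht, hc⟩ := htile T hT
    refine ⟨t, ht, ?_⟩
    rintro _ ⟨j, rfl⟩
    rw [hF T hT, hc]
  · rintro ⟨x, hx, F, hF⟩
    let paint (T : Rhombus) : ColoredRhombus := ⟨T, fun j => F (T.edge j)⟩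
    have herase : eraseColors (paint '' x) = x := by simp [eraseColors, paint, image_image]
    refine ⟨paint '' x, ⟨?_, ?_, ?_⟩, ?_, ?_⟩
    · rw [herase]
      exact (hsub.1 x hx).1
    · rintro _ ⟨T, -, rfl⟩ _ ⟨T', -, rfl⟩ (h : T = T')
      rw [h]
    · rintro _ ⟨T, -, rfl⟩ _ ⟨T', -, rfl⟩ - i j h
      exact congrArg F h
    · rintro _ ⟨T, hT, rfl⟩
      obtain ⟨_, ⟨i, rfl⟩, hs⟩ := (hsub.1 x hx).2 T hT
      obtain ⟨t, ht, hc⟩ := hF T hT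
      exact ⟨⟨i, hs⟩, t, ht, fun j => hc _ ⟨j, rfl⟩⟩
    · rwa [herase]

end EdgeColors

section WangColorings

variable {x : Set Rhombus} {u v y z : Pt} {f g : Pt → ℝ} {W : List (ℕ × ℕ × ℕ × ℕ)}
  {F : Set Pt → ℕ} {T : Rhombus}

namespace IsFinShapeTiling

theorem exists_cross_apply_eq_add_int (hx : IsFinShapeTiling x) (hf : IsHeight x y f)
    (hg : IsHeight x z g) (hdense : HasDenseCrosses x y z) (hT : T ∈ x) {a : Pt}
    (h : T.HasCorner a y z) (n : ℤ) :
    ∃ T' ∈ x, ∃ a', T'.HasCorner a' y z ∧ f a' = f a ∧ g a' = g a + n := by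
  induction n with
  | zero => exact ⟨T, hT, a, h, rfl, by simp⟩
  | succ n ih =>
    obtain ⟨T', hT', a', h', hfa, hga⟩ := ih
    obtain ⟨T₁, hT₁, a₁, h₁, hfa₁, hga₁, -⟩ :=
      hx.exists_next_cross hf hg hdense hT' h' (F := fun _ => ()) (fun _ _ _ _ _ _ _ => rfl)
    refine ⟨T₁, hT₁, a₁, h₁, hfa₁.trans hfa, ?_⟩
    rw [hga₁, hga]
    push_cast
    ring
  | pred n ih =>
    obtain ⟨T', hT', a', h', hfa, hga⟩ := ih
    obtain ⟨T₁, hT₁, a₁, h₁, hfa₁, hga₁, -⟩ := hx.exists_next_cross hf hg.neg hdense.neg_right hT'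
      h'.flip (F := fun _ => ()) (fun _ _ _ _ _ _ _ => rfl)
    have hd := h'.det_ne_zero (hx.isTiling.1 T' hT')
    have hflip := h₁.flip
    rw [neg_neg] at hflip
    have hg' := hg.apply_add_side hT₁ hflip
    rw [neg_add_cancel_right, edgeSign_self] at hg'
    have hf' := hf.apply_add_side hT₁ hflip
    rw [neg_add_cancel_right, edgeSign_of_det_ne_zero hd, add_zero] at hf'
    refine ⟨T₁, hT₁, _, hflip, ?_, ?_⟩
    · rw [← hf', hfa₁, hf.apply_add_side hT' h', edgeSign_of_det_ne_zero hd, add_zero, hfa]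
    · have hga' := hg.apply_add_side hT' h'
      rw [edgeSign_self] at hga'
      rw [Pi.neg_apply, Pi.neg_apply, hga', hga] at hga₁
      push_cast at hga₁ ⊢
      linarith

theorem exists_cross_grid (hx : IsFinShapeTiling x) (hf : IsHeight x u f) (hg : IsHeight x v g)
    (hdense : HasDenseCrosses x u v) :
    ∃ c d : ℝ, ∀ m n : ℤ, ∃ T ∈ x, ∃ a, T.HasCorner a u v ∧ g a = c + m ∧ f a = d + n := by
  obtain ⟨R, hR⟩ := id hdense
  obtain ⟨T, hT, a, -, h⟩ := hR 0
  refine ⟨g a, f a, fun m n => ?_⟩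
  obtain ⟨T', hT', a', h', hfa', hga'⟩ := hx.exists_cross_apply_eq_add_int hf hg hdense hT h m
  obtain ⟨T'', hT'', a'', h'', hga'', hfa''⟩ :=
    hx.exists_cross_apply_eq_add_int hg hf hdense.swap hT' h'.swap n
  exact ⟨T'', hT'', a'', h''.swap, hga''.trans hga', hfa''.trans (by rw [hfa'])⟩

end IsFinShapeTiling

namespace IsWangColoring

theorem mem_of_hasCorner (hF : IsWangColoring u v W x F) (hx : IsTiling x) (hT : T ∈ x) {a : Pt}
    (h : T.HasCorner a u v) :
    (F (edgeSegment a u), F (edgeSegment a v), F (edgeSegment (a + v) u),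
      F (edgeSegment (a + u) v)) ∈ W := by
  obtain ⟨t, ht, hc⟩ := hF T hT
  exact (h.forall_edges_eq_edgeColor_iff (hx.1 T hT) F t).1 hc ▸ ht

theorem apply_eq_of_hasCorner_left (hF : IsWangColoring u v W x F) (hx : IsTiling x)
    (hd : det u v ≠ 0) (hT : T ∈ x) {a w : Pt} (h : T.HasCorner a u w) (hw : w ≠ v)
    (hw' : w ≠ -v) : F (edgeSegment a u) = F (edgeSegment (a + w) u) := by
  obtain ⟨t, -, hc⟩ := hF T hT
  have hcross (b : Pt) : ¬ T.HasCorner b u v := fun hb =>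
    (hb.eq_or_eq_neg h (hx.1 T hT)).elim hw hw'
  have := ((forall_edges_eq_edgeColor_iff_of_forall_not_hasCorner hd hcross F t).1 hc).1
  rw [this _ (h.mem_edges.2 (.inl rfl)), this _ (h.mem_edges.2 (.inr (.inl rfl)))]

theorem apply_eq_of_hasCorner_right (hF : IsWangColoring u v W x F) (hx : IsTiling x)
    (hd : det u v ≠ 0) (hT : T ∈ x) {a w : Pt} (h : T.HasCorner a v w) (hw : w ≠ u)
    (hw' : w ≠ -u) : F (edgeSegment a v) = F (edgeSegment (a + w) v) := by
  obtain ⟨t, -, hc⟩ := hF T hT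
  have hcross (b : Pt) : ¬ T.HasCorner b u v := fun hb =>
    (hb.swap.eq_or_eq_neg h (hx.1 T hT)).elim hw hw'
  have := ((forall_edges_eq_edgeColor_iff_of_forall_not_hasCorner hd hcross F t).1 hc).2.1
  rw [this _ (h.mem_edges.2 (.inl rfl)), this _ (h.mem_edges.2 (.inr (.inl rfl)))]

theorem wangTiles (hF : IsWangColoring u v W x F) (hx : IsFinShapeTiling x) (hd : det u v ≠ 0)
    (hdense : HasDenseCrosses x u v) : WangTiles W := by
  obtain ⟨f, hf⟩ := hx.exists_isHeight (w := u) (by rintro rfl; simp at hd)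
  obtain ⟨g, hg⟩ := hx.exists_isHeight (w := v) (by rintro rfl; simp at hd)
  obtain ⟨c, d, hgrid⟩ := hx.exists_cross_grid hf hg hdense
  choose tile htile a h hga hfa using hgrid
  have eq_a {T : Rhombus} (hT : T ∈ x) {b : Pt} (hb : T.HasCorner b u v) {m n : ℤ}
      (hgb : g b = c + m) (hfb : f b = d + n) : b = a m n :=
    hx.eq_of_floor_height_eq hf hg hT (htile m n) hb (h m n) (by rw [hfb, hfa]) (by rw [hgb, hga])
  have east (m n : ℤ) : F (edgeSegment (a (m + 1) n) u) = F (edgeSegment (a m n + v) u) := by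
    obtain ⟨T, hT, b, hb, hfb, hgb, hFb⟩ := hx.exists_next_cross hf hg hdense (htile m n) (h m n)
      (fun T hT b w hb => hF.apply_eq_of_hasCorner_left hx.isTiling hd hT hb)
    rw [← eq_a hT hb (by rw [hgb, hga]; push_cast; ring) (by rw [hfb, hfa]), hFb]
  have north (m n : ℤ) : F (edgeSegment (a m (n + 1)) v) = F (edgeSegment (a m n + u) v) := by
    obtain ⟨T, hT, b, hb, hgb, hfb, hFb⟩ := hx.exists_next_cross hg hf hdense.swap (htile m n)
      (h m n).swap (fun T hT b w hb => hF.apply_eq_of_hasCorner_right hx.isTiling hd hT hb)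
    rw [← eq_a hT hb.swap (by rw [hgb, hga]) (by rw [hfb, hfa]; push_cast; ring), hFb]
  refine ⟨⟨fun m n => F (edgeSegment (a m n) u), fun m n => F (edgeSegment (a m n) v)⟩,
    fun m n => ?_⟩
  simp only [east, north]
  exact hF.mem_of_hasCorner hx.isTiling (htile m n) (h m n)

end IsWangColoring

theorem Rhombus.HasCorner.height_eq_of_mem_edges (hx : IsTiling x) (hf : IsHeight x u f)
    (hg : IsHeight x v g) (hT : T ∈ x) {a b w : Pt} (h : T.HasCorner a u w) (hw : w ≠ v)
    (hw' : w ≠ -v) (hb : edgeSegment b u ∈ T.edges) : f b = f a ∧ g b = g a := by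
  have hd := h.det_ne_zero (hx.1 T hT)
  rcases h.base_of_mem_edges hd hb with rfl | rfl
  · exact ⟨rfl, rfl⟩
  · rw [hf.apply_add_side hT h, hg.apply_add_side hT h, edgeSign_of_det_ne_zero hd,
      edgeSign_eq_zero hw hw', add_zero, add_zero]
    exact ⟨rfl, rfl⟩

theorem Rhombus.HasCorner.edgeSegment_notMem_edges {a w : Pt} (h : T.HasCorner a u w)
    (hd : det u v ≠ 0) (hw : w ≠ v) (hw' : w ≠ -v) (b : Pt) : edgeSegment b v ∉ T.edges := by
  intro hb
  rcases h.side_of_mem_edges hb with (rfl | rfl) | rfl | rfl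
  · simp at hd
  · simp at hd
  · exact hw rfl
  · exact hw' (neg_neg w).symm

theorem Rhombus.exists_hasCorner_of_mem_edges (hc : ∀ a, ¬ T.HasCorner a y z) {b : Pt}
    (hb : edgeSegment b y ∈ T.edges) : ∃ w, T.HasCorner b y w ∧ w ≠ z ∧ w ≠ -z := by
  obtain ⟨k, hk⟩ := hb
  obtain ⟨w, h⟩ := HasCorner.exists_of_edge_eq hk
  refine ⟨w, h, ?_, ?_⟩
  · rintro rfl
    exact hc b h
  · rintro rfl
    exact hc _ (neg_neg z ▸ h.flip)

/-- The edge colouring induced by a colouring `c` of the edges of the grid: the edge of vector `u`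
or `v` starting at `a` receives the colour of the corresponding edge of the cell
`(⌊g a⌋, ⌊f a⌋)`, and the other edges have colour `0`. -/
def pullbackColoring (u v : Pt) (f g : Pt → ℝ) (c : Config ℕ) : Set Pt → ℕ :=
  Function.extend (edgeSegment · u) (fun a => c.row ⌊g a⌋ ⌊f a⌋)
    (Function.extend (edgeSegment · v) (fun a => c.col ⌊g a⌋ ⌊f a⌋) 0)

section PullbackColoring

variable {c : Config ℕ}

theorem pullbackColoring_left (a : Pt) :
    pullbackColoring u v f g c (edgeSegment a u) = c.row ⌊g a⌋ ⌊f a⌋ :=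
  (edgeSegment_left_injective u).extend_apply ..

theorem pullbackColoring_right (hd : det u v ≠ 0) (a : Pt) :
    pullbackColoring u v f g c (edgeSegment a v) = c.col ⌊g a⌋ ⌊f a⌋ :=
  (Function.extend_apply' _ _ _ fun ⟨b, hb⟩ => edgeSegment_ne_of_det_ne_zero hd b a hb).trans
    ((edgeSegment_left_injective v).extend_apply ..)

theorem pullbackColoring_of_forall_ne {e : Set Pt} (hu : ∀ a, e ≠ edgeSegment a u)
    (hv : ∀ a, e ≠ edgeSegment a v) : pullbackColoring u v f g c e = 0 :=
  (Function.extend_apply' _ _ _ fun ⟨b, hb⟩ => hu b hb.symm).trans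
    (Function.extend_apply' _ _ _ fun ⟨b, hb⟩ => hv b hb.symm)

theorem isWangColoring_pullbackColoring (hx : IsTiling x) (hf : IsHeight x u f)
    (hg : IsHeight x v g) (hd : det u v ≠ 0)
    (hc : c.IsValid fun w s e n => (w, s, e, n) ∈ W) :
    IsWangColoring u v W x (pullbackColoring u v f g c) := by
  intro T hT
  have hd' : det v u ≠ 0 := by rwa [det_swap, neg_ne_zero]
  by_cases hcross : ∃ a, T.HasCorner a u v
  · obtain ⟨a, h⟩ := hcross
    refine ⟨_, hc ⌊g a⌋ ⌊f a⌋, (h.forall_edges_eq_edgeColor_iff (hx.1 T hT) _ _).2 ?_⟩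
    simp only [pullbackColoring_left, pullbackColoring_right hd, hf.apply_add_side hT h,
      hg.apply_add_side hT h, hf.apply_add_side hT h.swap, hg.apply_add_side hT h.swap,
      edgeSign_self, edgeSign_of_det_ne_zero hd, edgeSign_of_det_ne_zero hd', add_zero,
      Int.floor_add_one]
  push Not at hcross
  simp only [forall_edges_eq_edgeColor_iff_of_forall_not_hasCorner hd hcross,
    pullbackColoring_left, pullbackColoring_right hd]
  by_cases hu : ∃ a, edgeSegment a u ∈ T.edges
  · obtain ⟨a, ha⟩ := hu
    obtain ⟨w, h, hw, hw'⟩ := Rhombus.exists_hasCorner_of_mem_edges hcross ha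
    refine ⟨_, hc ⌊g a⌋ ⌊f a⌋, fun b hb => ?_,
      fun b hb => (h.edgeSegment_notMem_edges hd hw hw' b hb).elim,
      fun e _ => pullbackColoring_of_forall_ne⟩
    obtain ⟨hfb, hgb⟩ := h.height_eq_of_mem_edges hx hf hg hT hw hw' hb
    rw [hfb, hgb]
  push Not at hu
  by_cases hv : ∃ a, edgeSegment a v ∈ T.edges
  · obtain ⟨a, ha⟩ := hv
    obtain ⟨w, h, hw, hw'⟩ :=
      Rhombus.exists_hasCorner_of_mem_edges (fun b hb => hcross b hb.swap) ha
    refine ⟨_, hc ⌊g a⌋ ⌊f a⌋, fun b hb => (hu b hb).elim, fun b hb => ?_,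
      fun e _ => pullbackColoring_of_forall_ne⟩
    obtain ⟨hgb, hfb⟩ := h.height_eq_of_mem_edges hx hg hf hT hw hw' hb
    rw [hfb, hgb]
  push Not at hv
  exact ⟨_, hc 0 0, fun b hb => (hu b hb).elim, fun b hb => (hv b hb).elim,
    fun e _ => pullbackColoring_of_forall_ne⟩

end PullbackColoring

theorem IsFinShapeTiling.exists_isWangColoring_iff (hx : IsFinShapeTiling x) (hd : det u v ≠ 0)
    (hdense : HasDenseCrosses x u v) : (∃ F, IsWangColoring u v W x F) ↔ WangTiles W := by
  refine ⟨fun ⟨F, hF⟩ => hF.wangTiles hx hd hdense, fun ⟨c, hc⟩ => ?_⟩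
  obtain ⟨f, hf⟩ := hx.exists_isHeight (w := u) (by rintro rfl; simp at hd)
  obtain ⟨g, hg⟩ := hx.exists_isHeight (w := v) (by rintro rfl; simp at hd)
  exact ⟨_, isWangColoring_pullbackColoring hx.isTiling hf hg hd hc⟩

end WangColorings

/-! ### Hardness of the domino problem -/

section Hardness

variable {k : ℕ} {shapes : Fin k → Rhombus} {X : Set (Set Rhombus)}

theorem IsTilingOn.isFinShapeTiling {x : Set Rhombus} (hx : IsTilingOn (range shapes) x) :
    IsFinShapeTiling x := by
  refine ⟨hx.1, (finite_range fun i => ((shapes i).u, (shapes i).v)).subset ?_⟩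
  rintro _ ⟨T, hT, rfl⟩
  obtain ⟨_, ⟨i, rfl⟩, hu, hv⟩ := hx.2 T hT
  exact ⟨i, Prod.ext hu.symm hv.symm⟩

theorem ShapeUniformlyRecurrent.hasDenseCrosses (hur : ShapeUniformlyRecurrent X)
    {x y : Set Rhombus} (hx : x ∈ X) (hy : y ∈ X) {T : Rhombus} (hT : T ∈ y) :
    HasDenseCrosses x T.u T.v := by
  obtain ⟨R, -, hR⟩ := hur T ⟨y, hy, T, hT, rfl, rfl⟩ x hx
  refine ⟨R, fun p => ?_⟩
  obtain ⟨S, hS, ⟨hu, hv⟩, hball⟩ := hR p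
  refine ⟨S, hS, S.pos, hball ?_, hu ▸ hv ▸ .base⟩
  exact Rhombus.HasCorner.base.mem_support.2 ⟨0, by simp, 0, by simp, by simp⟩

theorem exists_dominoPred_rhombusTileset_iff_wangTiles (hsub : IsSubshift (range shapes) X)
    (hne : X.Nonempty) (hur : ShapeUniformlyRecurrent X) :
    ∃ u v : Pt, ∀ W, DominoPred shapes X (rhombusTileset u v shapes W) ↔ WangTiles W := by
  obtain ⟨x₀, hx₀⟩ := hne
  obtain ⟨T, hT, -⟩ := (hsub.1 x₀ hx₀).1.exists_mem_support 0
  have hd := Rhombus.HasCorner.base.det_ne_zero ((hsub.1 x₀ hx₀).1.1 T hT)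
  have coloring_iff {x : Set Rhombus} (hx : x ∈ X) (W : List (ℕ × ℕ × ℕ × ℕ)) :
      (∃ F, IsWangColoring T.u T.v W x F) ↔ WangTiles W :=
    (hsub.1 x hx).isFinShapeTiling.exists_isWangColoring_iff hd (hur.hasDenseCrosses hx hx₀ hT)
  refine ⟨T.u, T.v, fun W => ?_⟩
  rw [dominoPred_rhombusTileset_iff hsub]
  exact ⟨fun ⟨x, hx, hF⟩ => (coloring_iff hx W).1 hF,
    fun hW => ⟨x₀, hx₀, (coloring_iff hx₀ W).2 hW⟩⟩

theorem primrec_edgeColor (u v : Pt) (T : Rhombus) (e : Set Pt) :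
    Primrec fun t => edgeColor u v T t e := by
  have west : Primrec fun t : ℕ × ℕ × ℕ × ℕ => t.1 := .fst
  have south : Primrec fun t : ℕ × ℕ × ℕ × ℕ => t.2.1 := Primrec.fst.comp .snd
  have east : Primrec fun t : ℕ × ℕ × ℕ × ℕ => t.2.2.1 := Primrec.fst.comp (Primrec.snd.comp .snd)
  have north : Primrec fun t : ℕ × ℕ × ℕ × ℕ => t.2.2.2 := Primrec.snd.comp (Primrec.snd.comp .snd)
  simp only [edgeColor, sideColor]
  split_ifs
  exacts [east, west, north, south, .const 0]

theorem primrec_flatMap_const {ι α σ : Type*} [Primcodable α] [Primcodable σ] (l : List ι)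
    {f : ι → α → List σ} (hf : ∀ i, Primrec (f i)) :
    Primrec fun a => l.flatMap fun i => f i a := by
  induction l with
  | nil => exact .const []
  | cons i l ih => exact Primrec.list_append.comp (hf i) ih

theorem primrec_rhombusTileset (u v : Pt) (shapes : Fin k → Rhombus) :
    Primrec (rhombusTileset u v shapes) := by
  refine primrec_flatMap_const _ fun i => Primrec.list_map .id ?_
  have color (j : Fin 4) := primrec_edgeColor u v (shapes i) ((shapes i).edge j)
  have tile := (Primrec.const i).pair
    ((color 0).pair ((color 1).pair ((color 2).pair (color 3))))
  exact tile.comp .snd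

theorem pi01Hard_dominoPred (hsub : IsSubshift (range shapes) X) (hne : X.Nonempty)
    (hur : ShapeUniformlyRecurrent X) : Pi01Hard (DominoPred shapes X) := by
  rintro β _ B ⟨f, hf, hB⟩
  obtain ⟨u, v, hiff⟩ := exists_dominoPred_rhombusTileset_iff_wangTiles hsub hne hur
  obtain ⟨W, hW, hBW⟩ := exists_computable_wangTiles_iff hf hB
  exact ⟨fun b => rhombusTileset u v shapes (W b),
    (primrec_rhombusTileset u v shapes).to_comp.comp hW, fun b => (hBW b).trans (hiff _).symm⟩

theorem pi01_not_dom_eval (n : ℕ) : Pi01 fun c : Nat.Partrec.Code => ¬ (c.eval n).Dom := by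
  refine ⟨fun c s => (c.evaln s n).isNone, ?_, fun c => ?_⟩
  · have evaln : Primrec fun p : Nat.Partrec.Code × ℕ => p.1.evaln p.2 n :=
      Nat.Partrec.Code.primrec_evaln.comp ((Primrec.snd.pair .fst).pair (.const n))
    refine Primrec₂.to_comp ((Primrec.not.comp (Primrec.option_isSome.comp evaln)).of_eq ?_)
    simp
  · simp only [Part.dom_iff_mem, Nat.Partrec.Code.evaln_complete, Option.isNone_iff_eq_none,
      Option.eq_none_iff_forall_not_mem]
    push Not
    exact forall_comm

theorem Pi01Hard.not_computablePred {α : Type} [Primcodable α] {A : α → Prop} (h : Pi01Hard A) :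
    ¬ ComputablePred A := by
  intro hA
  have halting :=
    (ComputablePred.computable_of_manyOneReducible (h _ _ (pi01_not_dom_eval 0)) hA).not
  simp only [not_not] at halting
  exact ComputablePred.halting_problem 0 halting

end Hardness

/-- For a non-empty, shape uniformly recurrent subshift `X` of
edge-to-edge rhombus tilings, `Domino(X)` is `Π⁰₁`-hard, hence undecidable. -/
theorem statement_9 (k : ℕ) (shapes : Fin k → Rhombus)
    (hval : ∀ i, (shapes i).IsValid)
    (X : Set (Set Rhombus)) (hsub : IsSubshift (Set.range shapes) X)
    (hne : X.Nonempty) (hur : ShapeUniformlyRecurrent X) :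
    Pi01Hard (DominoPred shapes X) ∧ ¬ ComputablePred (DominoPred shapes X) :=
  have hard := pi01Hard_dominoPred hsub hne hur
  ⟨hard, hard.not_computablePred⟩
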